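/- arXiv:1304.0296 — 4 statements merged into one kernel-verified Lean document; each statement's English description precedes it below -/
import Mathlib

section
/- Let A = A₁ ⊕ ⋯ ⊕ A_m be a block-diagonal complex matrix, where A_j is of size n_j for 1 ≤ j ≤ m. Then d(A) ≥ Σ_{j=1}^m d(A_j), and d(A) = Σ_{j=1}^m d(A_j) if and only if there exists a real θ₀ such that d(A_j) = i_{≥0}(Re(e^{−iθ₀}A_j)) for all j. In particular, d(A₁ ⊕ ⋯ ⊕ A₁) (m copies) = m·d(A₁), and d(A₁ ⊕ 0_n) = d(A₁) + n. -/
open Matrix Polynomial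

noncomputable def zdi {m : Type*} [Fintype m] (A : Matrix m m ℂ) : ℕ :=
  sSup {k : ℕ | ∃ V : Matrix m (Fin k) ℂ, Vᴴ * V = 1 ∧ Vᴴ * A * V = 0}

noncomputable def matRe {m : Type*} (A : Matrix m m ℂ) : Matrix m m ℂ :=
  (2⁻¹ : ℂ) • (A + Aᴴ)

noncomputable def iNonneg {m : Type*} [Fintype m] [DecidableEq m] (M : Matrix m m ℂ) : ℕ :=
  if hM : M.IsHermitian then (Finset.univ.filter fun i => 0 ≤ hM.eigenvalues i).card else 0

def numRange {m : Type*} [Fintype m] (A : Matrix m m ℂ) : Set ℂ :=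
  {z | ∃ x : m → ℂ, star x ⬝ᵥ x = 1 ∧ star x ⬝ᵥ A.mulVec x = z}

noncomputable def arg2pi (z : ℂ) : ℝ :=
  if 0 ≤ Complex.arg z then Complex.arg z else Complex.arg z + 2 * Real.pi

def UnitSim {m : Type*} [Fintype m] [DecidableEq m] (A B : Matrix m m ℂ) : Prop :=
  ∃ U ∈ Matrix.unitaryGroup m ℂ, Uᴴ * A * U = B

def UnitSimG {m l : Type*} [Fintype m] [DecidableEq m] [Fintype l] [DecidableEq l]
    (A : Matrix m m ℂ) (B : Matrix l l ℂ) : Prop :=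
  ∃ e : m ≃ l, UnitSim (Matrix.reindex e e A) B

def superMat (n : ℕ) (w : ℕ → ℂ) : Matrix (Fin n) (Fin n) ℂ :=
  Matrix.of fun i j => if (j : ℕ) = (i : ℕ) + 1 then w (i : ℕ) else 0

def cycMat (n : ℕ) (w : ℕ → ℂ) : Matrix (Fin n) (Fin n) ℂ :=
  Matrix.of fun i j => if (j : ℕ) = ((i : ℕ) + 1) % n then w (i : ℕ) else 0


section ZdiAbstract

set_option linter.unusedSectionVars false

variable {E : Type*} [NormedAddCommGroup E] [InnerProductSpace ℂ E] [FiniteDimensional ℂ E]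

open Module ContinuousLinearMap

lemma zaux_inter (S T : Submodule ℂ E) (h : finrank ℂ E < finrank ℂ S + finrank ℂ T) :
    ∃ x, x ≠ 0 ∧ x ∈ S ∧ x ∈ T := by
  by_contra hc
  push Not at hc
  have hd : Disjoint S T := by
    rw [Submodule.disjoint_def]
    intro x hx hy
    by_contra h0
    exact hc x h0 hx hy
  have := Submodule.finrank_add_finrank_le_of_disjoint hd
  omega

lemma zaux_coord {ι : Type*} [Fintype ι] (b : OrthonormalBasis ι ℂ E) (p : ι → Prop)
    [DecidablePred p] :
    ∃ S : Submodule ℂ E, finrank ℂ S = (Finset.univ.filter p).card ∧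
      ∀ x ∈ S, ∀ i, ¬ p i → b.repr x i = 0 := by
  classical
  refine ⟨Submodule.span ℂ (Set.range fun i : {i // p i} => b i), ?_, ?_⟩
  · have hli : LinearIndependent ℂ (fun i : {i // p i} => b i) :=
      b.orthonormal.linearIndependent.comp _ Subtype.val_injective
    rw [finrank_span_eq_card hli, Fintype.card_subtype]
  · intro x hx i hi
    induction hx using Submodule.span_induction with
    | mem x hx =>
      obtain ⟨j, rfl⟩ := hx
      have : i ≠ j := fun h => hi (h ▸ j.2)
      simp [this]
    | zero => simp
    | add x y _ _ hx hy => simp [hx, hy]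
    | smul a x _ hx => simp [hx]

lemma zaux_diag {ι : Type*} [Fintype ι] (b : OrthonormalBasis ι ℂ E) (lam : ι → ℝ)
    (T : E →ₗ[ℂ] E) (hT : ∀ i, T (b i) = (lam i : ℂ) • b i) (x : E) :
    (∀ i, b.repr (T x) i = lam i * b.repr x i) ∧
    (inner ℂ x (T x)).re = ∑ i, lam i * ‖b.repr x i‖ ^ 2 := by
  classical
  have h1 : ∀ i, b.repr (T x) i = lam i * b.repr x i := by
    intro i
    conv_lhs => rw [← b.sum_repr x]
    rw [map_sum, map_sum]
    simp only [map_smul, hT, WithLp.ofLp_sum, Finset.sum_apply, WithLp.ofLp_smul, Pi.smul_apply,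
      b.repr_self, EuclideanSpace.single_apply, smul_eq_mul]
    simp [mul_comm]
  refine ⟨h1, ?_⟩
  rw [← b.repr.inner_map_map, PiLp.inner_apply, Complex.re_sum]
  refine Finset.sum_congr rfl fun i _ => ?_
  rw [h1]
  simp only [RCLike.inner_apply]
  rw [mul_assoc, Complex.re_ofReal_mul, Complex.mul_conj, Complex.ofReal_re,
    Complex.normSq_eq_norm_sq]

def ZNN (k : ℕ) (B : E →L[ℂ] E) : Prop :=
  ∃ S : Submodule ℂ E, k ≤ finrank ℂ S ∧ ∀ x ∈ S, 0 ≤ (inner ℂ x (B x)).re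

def ZPP (k : ℕ) (B : E →L[ℂ] E) : Prop :=
  ∃ S : Submodule ℂ E, k ≤ finrank ℂ S ∧ ∀ x ∈ S, x ≠ 0 → 0 < (inner ℂ x (B x)).re

def ZP (k : ℕ) (A : E →L[ℂ] E) : Prop := ∀ c : ℂ, ZNN k (c • A)

variable [CompleteSpace E]

lemma zaux_re (B : E →L[ℂ] E) (x : E) :
    (inner ℂ x ((B + adjoint B) x)).re = 2 * (inner ℂ x (B x)).re := by
  rw [_root_.add_apply, inner_add_right, adjoint_inner_right, Complex.add_re,
    ← inner_conj_symm (B x) x, Complex.conj_re]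
  ring

lemma zaux_spec (B : E →L[ℂ] E) :
    ∃ P M : Submodule ℂ E, finrank ℂ P + finrank ℂ M = finrank ℂ E ∧
      (∀ x ∈ P, x ≠ 0 → 0 < (inner ℂ x (B x)).re) ∧
      (∀ x ∈ M, (inner ℂ x (B x)).re ≤ 0) ∧
      (∀ x ∈ M, (inner ℂ x (B x)).re = 0 → (B + adjoint B) x = 0) := by
  classical
  set T : E →L[ℂ] E := B + adjoint B with hTd
  have hsa : IsSelfAdjoint T := by
    rw [IsSelfAdjoint, star_eq_adjoint, hTd, map_add, adjoint_adjoint, add_comm]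
  have hT : (T : E →ₗ[ℂ] E).IsSymmetric := hsa.isSymmetric
  set b := hT.eigenvectorBasis rfl
  set lam := hT.eigenvalues rfl
  have hb : ∀ i, (T : E →ₗ[ℂ] E) (b i) = (lam i : ℂ) • b i := fun i =>
    hT.apply_eigenvectorBasis rfl i
  have hD := zaux_diag b lam (T : E →ₗ[ℂ] E) hb
  obtain ⟨P, hP, hP'⟩ := zaux_coord b (fun i => 0 < lam i)
  obtain ⟨M, hM, hM'⟩ := zaux_coord b (fun i => ¬ 0 < lam i)
  have hre : ∀ x, 2 * (inner ℂ x (B x)).re = ∑ i, lam i * ‖b.repr x i‖ ^ 2 := by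
    intro x
    rw [← zaux_re, ← (hD x).2]; rfl
  have hle : ∀ x ∈ M, ∀ i, lam i * ‖b.repr x i‖ ^ 2 ≤ 0 := by
    intro x hx i
    by_cases hi : 0 < lam i
    · rw [hM' x hx i (by simpa using hi)]; simp
    · exact mul_nonpos_of_nonpos_of_nonneg (not_lt.1 hi) (by positivity)
  refine ⟨P, M, ?_, ?_, ?_, ?_⟩
  · rw [hP, hM, Finset.card_filter_add_card_filter_not]; simp
  · intro x hx h0
    have hnn : ∀ i, 0 ≤ lam i * ‖b.repr x i‖ ^ 2 := by
      intro i
      by_cases hi : 0 < lam i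
      · positivity
      · rw [hP' x hx i hi]; simp
    have : 0 < ∑ i, lam i * ‖b.repr x i‖ ^ 2 := by
      refine Finset.sum_pos' (fun i _ => hnn i) ?_
      by_contra hc
      push Not at hc
      apply h0
      apply b.repr.injective
      ext i
      simp only [map_zero, PiLp.zero_apply]
      by_contra hi
      by_cases hl : 0 < lam i
      · have := hc i (Finset.mem_univ _)
        have h2 : 0 < ‖b.repr x i‖ := norm_pos_iff.2 hi
        have : 0 < lam i * ‖b.repr x i‖ ^ 2 := by positivity
        linarith
      · exact hi (hP' x hx i hl)
    linarith [hre x]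
  · intro x hx
    have := Finset.sum_nonpos (s := Finset.univ) (fun i _ => hle x hx i)
    linarith [hre x]
  · intro x hx h0
    have h1 : ∑ i, lam i * ‖b.repr x i‖ ^ 2 = 0 := by rw [← hre, h0]; simp
    rw [Finset.sum_eq_zero_iff_of_nonpos (fun i _ => hle x hx i)] at h1
    apply b.repr.injective
    ext i
    have h2 := (hD x).1 i
    have h3 := h1 i (Finset.mem_univ _)
    change b.repr (T x) i = _ at h2
    rw [h2]
    rcases mul_eq_zero.1 h3 with h | h
    · simp [h]
    · simp [show b.repr x i = 0 by simpa using h]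

lemma zaux_open (k : ℕ) : IsOpen {B : E →L[ℂ] E | ZPP k B} := by
  rw [Metric.isOpen_iff]
  rintro B ⟨S, hk, hS⟩
  have hcomp : IsCompact ((S : Set E) ∩ Metric.sphere 0 1) :=
    (isCompact_sphere (0 : E) 1).inter_left S.closed_of_finiteDimensional
  have hcont : Continuous fun x : E => (inner ℂ x (B x)).re := by fun_prop
  obtain ⟨m, hm, hmin⟩ : ∃ m > 0, ∀ x ∈ S, ‖x‖ = 1 → m ≤ (inner ℂ x (B x)).re := by
    rcases ((S : Set E) ∩ Metric.sphere 0 1).eq_empty_or_nonempty with he | hne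
    · refine ⟨1, one_pos, fun x hx h1 => ?_⟩
      have : x ∈ (S : Set E) ∩ Metric.sphere 0 1 := ⟨hx, by simpa using h1⟩
      rw [he] at this; exact this.elim
    · obtain ⟨x0, hx0, hx0'⟩ := hcomp.exists_isMinOn hne hcont.continuousOn
      refine ⟨_, hS x0 hx0.1 ?_, fun x hx h1 => hx0' ⟨hx, by simpa using h1⟩⟩
      intro h; have := hx0.2; simp [h] at this
  refine ⟨m, hm, fun B' hB' => ⟨S, hk, fun x hx h0 => ?_⟩⟩
  have hn : 0 < ‖x‖ := norm_pos_iff.2 h0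
  have key : ∀ y ∈ S, ‖y‖ = 1 → 0 < (inner ℂ y (B' y)).re := by
    intro y hy h1
    have h2 := hmin y hy h1
    have h3 : ‖inner ℂ y ((B' - B) y)‖ ≤ ‖B' - B‖ := by
      refine (norm_inner_le_norm _ _).trans ?_
      have := (B' - B).le_opNorm y
      rw [h1] at *; linarith
    rw [Metric.mem_ball, dist_eq_norm] at hB'
    have h4 := (abs_le.1 (Complex.abs_re_le_norm (inner ℂ y ((B' - B) y)))).1
    rw [_root_.sub_apply, inner_sub_right, Complex.sub_re] at h4
    rw [_root_.sub_apply, inner_sub_right] at h3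
    linarith
  have h5 := key (((‖x‖⁻¹ : ℝ) : ℂ) • x) (S.smul_mem _ hx)
    (by rw [norm_smul]; simp [hn.ne'])
  rw [map_smul, inner_smul_left, inner_smul_right, Complex.conj_ofReal, Complex.re_ofReal_mul,
    Complex.re_ofReal_mul] at h5
  have h6 : 0 < ‖x‖⁻¹ := by positivity
  exact pos_of_mul_pos_right (pos_of_mul_pos_right h5 h6.le) h6.le

lemma zaux_closed (k : ℕ) : IsClosed {B : E →L[ℂ] E | ZNN k B} := by
  have : {B : E →L[ℂ] E | ZNN k B} =
      ((fun B : E →L[ℂ] E => -B) ⁻¹' {B | ZPP (finrank ℂ E + 1 - k) B})ᶜ := by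
    ext B
    simp only [Set.mem_ofPred_eq, Set.mem_compl_iff, Set.mem_preimage]
    constructor
    · rintro ⟨S, hk, hS⟩ ⟨T, hk', hT⟩
      have h1 := S.finrank_le
      obtain ⟨x, h0, hxS, hxT⟩ := zaux_inter S T (by omega)
      have h2 := hS x hxS
      have h3 := hT x hxT h0
      simp at h3; linarith
    · intro h
      obtain ⟨P, M, hd, hP, hM, -⟩ := zaux_spec (-B)
      refine ⟨M, ?_, fun x hx => ?_⟩
      · by_contra hc
        exact h ⟨P, by omega, hP⟩
      · have := hM x hx
        simp at this; linarith
  rw [this, isClosed_compl_iff]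
  exact (zaux_open _).preimage continuous_neg

end ZdiAbstract

section ZdiStrict

set_option linter.unusedSectionVars false

variable {E : Type*} [NormedAddCommGroup E] [InnerProductSpace ℂ E] [FiniteDimensional ℂ E]
  [CompleteSpace E]

open Module ContinuousLinearMap

def ZGood (A : E →L[ℂ] E) (x : E) : Prop :=
  x ≠ 0 ∧ inner ℂ x (A x) = 0 ∧ ∃ α β : ℂ, (α ≠ 0 ∨ β ≠ 0) ∧ α • A x + β • (adjoint A) x = 0

lemma zaux_qsmul (A : E →L[ℂ] E) (r : ℝ) (x : E) :
    inner ℂ ((r : ℂ) • x) (A ((r : ℂ) • x)) = ((r ^ 2 : ℝ) : ℂ) * inner ℂ x (A x) := by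
  rw [map_smul, inner_smul_left, inner_smul_right, Complex.conj_ofReal]
  push_cast; ring

lemma zaux_sign (A : E →L[ℂ] E) (hng : ∀ x, ¬ ZGood A x) :
    ∃ ε : ℝ, |ε| = 1 ∧ ∀ x, x ≠ 0 → (A + adjoint A) x = 0 → 0 < ε * (inner ℂ x (A x)).im := by
  have hre : ∀ x, (A + adjoint A) x = 0 → (inner ℂ x (A x)).re = 0 := by
    intro x hx
    have := zaux_re A x
    rw [hx] at this; simp at this; linarith
  have him : ∀ x, x ≠ 0 → (A + adjoint A) x = 0 → (inner ℂ x (A x)).im ≠ 0 := by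
    intro x h0 hx h
    refine hng x ⟨h0, Complex.ext (hre x hx) h, 1, 1, Or.inl one_ne_zero, ?_⟩
    simpa using hx
  have key : ∀ x y, x ≠ 0 → y ≠ 0 → (A + adjoint A) x = 0 → (A + adjoint A) y = 0 →
      0 < (inner ℂ x (A x)).im → (inner ℂ y (A y)).im < 0 → False := by
    intro x y hx0 hy0 hx hy h1 h2
    set f : ℝ → E := fun t => ((1 - t : ℝ) : ℂ) • x + (t : ℂ) • y with hf
    have hfc : Continuous fun t => (inner ℂ (f t) (A (f t))).im := by
      have : Continuous f := by fun_prop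
      fun_prop
    have h0mem : (0 : ℝ) ∈ Set.Icc ((inner ℂ (f 1) (A (f 1))).im) ((inner ℂ (f 0) (A (f 0))).im) := by
      constructor
      · simp [hf]; exact h2.le
      · simp [hf]; exact h1.le
    obtain ⟨t, ht, ht'⟩ := intermediate_value_Icc' (zero_le_one' ℝ) hfc.continuousOn h0mem
    have hft : (A + adjoint A) (f t) = 0 := by
      simp only [hf, map_add, map_smul, hx, hy]; simp
    by_cases hz : f t = 0
    · have ht0 : t ≠ 0 := by
        rintro rfl
        simp [hf] at hz; exact hx0 hz
      have hyx : y = ((-(1 - t) / t : ℝ) : ℂ) • x := by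
        have h3 : (t : ℂ) • y = -(((1 - t : ℝ) : ℂ) • x) := by
          rw [eq_neg_iff_add_eq_zero, add_comm]; exact hz
        have ht0' : (t : ℂ) ≠ 0 := by exact_mod_cast ht0
        have h4 : y = (t : ℂ)⁻¹ • ((t : ℂ) • y) := by rw [smul_smul, inv_mul_cancel₀ ht0', one_smul]
        rw [h4, h3, ← neg_smul, smul_smul]
        congr 1
        push_cast
        field_simp
      rw [hyx, zaux_qsmul, Complex.im_ofReal_mul] at h2
      have : 0 ≤ (-(1 - t) / t) ^ 2 * (inner ℂ x (A x)).im := by positivity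
      linarith
    · exact him _ hz hft ht'
  by_cases h : ∃ x, x ≠ 0 ∧ (A + adjoint A) x = 0 ∧ 0 < (inner ℂ x (A x)).im
  · obtain ⟨x, h0, hx, hp⟩ := h
    refine ⟨1, by simp, fun y hy0 hy => ?_⟩
    rw [one_mul]
    by_contra hc
    exact key x y h0 hy0 hx hy hp (lt_of_le_of_ne (not_lt.1 hc) (him y hy0 hy))
  · push Not at h
    refine ⟨-1, by simp, fun y hy0 hy => ?_⟩
    have := lt_of_le_of_ne (h y hy0 hy) (him y hy0 hy)
    linarith

lemma zaux_strict (k : ℕ) (A : E →L[ℂ] E) (hP : ZP k A) (hng : ∀ x, ¬ ZGood A x) : ZPP k A := by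
  obtain ⟨P, M, hd, hPp, hM, hM0⟩ := zaux_spec A
  by_contra hcon
  have hPk : finrank ℂ P < k := by
    by_contra hc
    exact hcon ⟨P, not_lt.1 hc, hPp⟩
  obtain ⟨ε, hε, hsign⟩ := zaux_sign A hng
  have hbd : ∀ x, ‖x‖ = 1 → ‖inner ℂ x (A x)‖ ≤ ‖A‖ := by
    intro x hx
    refine (norm_inner_le_norm _ _).trans ?_
    have := A.le_opNorm x
    rw [hx] at *; linarith
  have hcont : Continuous fun x : E => (inner ℂ x (A x)).re := by fun_prop
  have hcont2 : Continuous fun x : E => ε * (inner ℂ x (A x)).im := by fun_prop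
  set K0 : Set E := ((M : Set E) ∩ {x | ε * (inner ℂ x (A x)).im ≤ 0}) ∩ Metric.sphere 0 1
  have hK0 : IsCompact K0 :=
    (isCompact_sphere (0 : E) 1).inter_left
      (M.closed_of_finiteDimensional.inter (isClosed_le hcont2 continuous_const))
  obtain ⟨a, ha, hmax⟩ : ∃ a > 0, ∀ x ∈ K0, (inner ℂ x (A x)).re ≤ -a := by
    rcases K0.eq_empty_or_nonempty with he | hne
    · refine ⟨1, one_pos, fun x hx => ?_⟩
      rw [he] at hx; exact hx.elim
    · obtain ⟨x0, hx0, hx0'⟩ := hK0.exists_isMaxOn hne hcont.continuousOn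
      have hne0 : x0 ≠ 0 := by
        intro h; have := hx0.2; simp [h] at this
      have hlt : (inner ℂ x0 (A x0)).re < 0 := by
        refine lt_of_le_of_ne (hM x0 hx0.1.1) fun h => ?_
        have h1 := hsign x0 hne0 (hM0 x0 hx0.1.1 h)
        have h2 : ε * (inner ℂ x0 (A x0)).im ≤ 0 := hx0.1.2
        linarith
      refine ⟨-(inner ℂ x0 (A x0)).re, by linarith, fun x hx => ?_⟩
      rw [neg_neg]; exact hx0' hx
  set t : ℝ := a / (‖A‖ + 1) with ht
  have hA0 : 0 < ‖A‖ + 1 := by positivity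
  have htp : 0 < t := by positivity
  have htA : t * ‖A‖ < a := by
    have : t * (‖A‖ + 1) = a := by rw [ht]; field_simp
    nlinarith
  obtain ⟨S, hSk, hS⟩ := hP (1 + ((ε * t : ℝ) : ℂ) * Complex.I)
  obtain ⟨x, h0, hxS, hxM⟩ := zaux_inter S M (by omega)
  have hn : 0 < ‖x‖ := norm_pos_iff.2 h0
  set y : E := ((‖x‖⁻¹ : ℝ) : ℂ) • x with hy
  have hy1 : ‖y‖ = 1 := by rw [hy, norm_smul]; simp [hn.ne']
  have hyS : y ∈ S := S.smul_mem _ hxS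
  have hyM : y ∈ M := M.smul_mem _ hxM
  have h1 := hS y hyS
  rw [_root_.smul_apply, inner_smul_right] at h1
  have h2 : ((1 + ((ε * t : ℝ) : ℂ) * Complex.I) * inner ℂ y (A y)).re =
      (inner ℂ y (A y)).re - t * (ε * (inner ℂ y (A y)).im) := by
    simp [Complex.add_re, Complex.mul_re]; ring
  rw [h2] at h1
  have h3 := hM y hyM
  by_cases hc : ε * (inner ℂ y (A y)).im ≤ 0
  · have h4 := hmax y ⟨⟨hyM, hc⟩, by simpa using hy1⟩
    have h5 : |ε * (inner ℂ y (A y)).im| ≤ ‖A‖ := by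
      rw [abs_mul, hε, one_mul]
      exact (Complex.abs_im_le_norm _).trans (hbd y hy1)
    have h6 := (abs_le.1 h5).1
    nlinarith
  · push Not at hc
    nlinarith [mul_pos htp hc]

lemma zaux_good_smul (A : E →L[ℂ] E) (c : ℂ) (hc : c ≠ 0) (x : E) (h : ZGood (c • A) x) :
    ZGood A x := by
  obtain ⟨h0, hq, α, β, hab, hx⟩ := h
  refine ⟨h0, ?_, α * c, β * (starRingEnd ℂ) c, ?_, ?_⟩
  · rw [_root_.smul_apply, inner_smul_right] at hq
    exact (mul_eq_zero.1 hq).resolve_left hc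
  · rcases hab with h | h
    · left; exact mul_ne_zero h hc
    · right; exact mul_ne_zero h (by simpa using hc)
  · rw [map_smulₛₗ] at hx
    simpa [smul_smul] using hx

lemma zaux_P_smul (k : ℕ) (A : E →L[ℂ] E) (c : ℂ) (h : ZP k A) : ZP k (c • A) := by
  intro d
  rw [smul_smul]; exact h _

lemma zaux_strict' (k : ℕ) (A : E →L[ℂ] E) (hP : ZP k A) (hng : ∀ x, ¬ ZGood A x) (c : ℂ)
    (hc : c ≠ 0) : ZPP k (c • A) :=
  zaux_strict k _ (zaux_P_smul k A c hP) fun x hx => hng x (zaux_good_smul A c hc x hx)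

/-- In dimension `2k` a pencil that is strict in every direction has a good vector. -/
lemma zaux_eig (k : ℕ) (hk : 0 < k) (A : E →L[ℂ] E) (hE : finrank ℂ E = 2 * k)
    (hS : ∀ c : ℂ, c ≠ 0 → ZPP k (c • A)) : ∃ x, ZGood A x := by
  have hinj : ∀ c : ℂ, c ≠ 0 → ∀ z, (c • A + adjoint (c • A)) z = 0 → z = 0 := by
    intro c hc z hz
    by_contra hz0
    obtain ⟨S, hSk, hSp⟩ := hS c hc
    obtain ⟨S', hSk', hSp'⟩ := hS (-c) (neg_ne_zero.2 hc)
    set B := c • A with hB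
    have hadd : ∀ s (t : ℂ), (inner ℂ (s + t • z) (B (s + t • z))).re = (inner ℂ s (B s)).re := by
      intro s t
      have e1 := zaux_re B (s + t • z)
      have e2 := zaux_re B s
      have e3 : (B + adjoint B) (s + t • z) = (B + adjoint B) s := by
        rw [map_add (B + adjoint B) s, map_smul (B + adjoint B) t, hz, smul_zero, add_zero]
      rw [e3, inner_add_left, inner_smul_left] at e1
      have e4 : inner ℂ z ((B + adjoint B) s) = 0 := by
        have : inner ℂ z ((B + adjoint B) s) = inner ℂ ((B + adjoint B) z) s := by
          simp only [_root_.add_apply, inner_add_left, inner_add_right, adjoint_inner_left,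
            adjoint_inner_right]
          ring
        rw [this, hz, inner_zero_left]
      rw [e4, mul_zero, add_zero] at e1
      linarith
    have hzS : z ∉ S := by
      intro h
      have h1 := hSp z h hz0
      have h2 := hadd 0 1
      simp at h2; linarith
    have hdim : finrank ℂ (S ⊔ Submodule.span ℂ {z} : Submodule ℂ E) = finrank ℂ S + 1 :=
      Submodule.finrank_sup_span_singleton hzS
    obtain ⟨v, hv0, hvS, hvS'⟩ := zaux_inter (S ⊔ Submodule.span ℂ {z}) S' (by omega)
    obtain ⟨s, hs, w, hw, rfl⟩ := Submodule.mem_sup.1 hvS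
    obtain ⟨t, rfl⟩ := Submodule.mem_span_singleton.1 hw
    have h3 := hSp' _ hvS' hv0
    rw [neg_smul, ← hB] at h3
    simp only [_root_.neg_apply, inner_neg_right, Complex.neg_re] at h3
    rw [hadd] at h3
    by_cases hs0 : s = 0
    · rw [hs0] at h3; simp at h3
    · have := hSp s hs hs0
      linarith
  have hnt : Nontrivial E := nontrivial_of_finrank_pos (R := ℂ) (by omega)
  set T : E →ₗ[ℂ] E := ((A + adjoint A : E →L[ℂ] E) : E →ₗ[ℂ] E) with hT
  have hTinj : Function.Injective T := by
    rw [← LinearMap.ker_eq_bot, LinearMap.ker_eq_bot']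
    intro z hz
    apply hinj 1 one_ne_zero z
    rw [one_smul]; exact hz
  let e := LinearEquiv.ofInjectiveEndo T hTinj
  obtain ⟨μ, hμ⟩ := Module.End.exists_eigenvalue ((e.symm : E →ₗ[ℂ] E) ∘ₗ (A : E →ₗ[ℂ] E))
  obtain ⟨x, hx⟩ := hμ.exists_hasEigenvector
  have hx0 : x ≠ 0 := hx.2
  have hx1 : A x = μ • T x := by
    have h1 : e.symm (A x) = μ • x := hx.apply_eq_smul
    have h2 : A x = e (μ • x) := by rw [← h1, e.apply_symm_apply]
    rw [h2, map_smul]; rfl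
  have hdep : (1 - μ) • A x + (-μ) • (adjoint A) x = 0 := by
    have : T x = A x + adjoint A x := rfl
    rw [this] at hx1
    rw [sub_smul, one_smul, neg_smul]
    nth_rewrite 1 [hx1]
    rw [smul_add]; abel
  refine ⟨x, hx0, ?_, 1 - μ, -μ, ?_, hdep⟩
  · by_contra hw
    set w := inner ℂ x (A x) with hwd
    have hw' : inner ℂ x (adjoint A x) = (starRingEnd ℂ) w := by
      rw [adjoint_inner_right, hwd, inner_conj_symm]
    have h1 : (1 - μ) * w - μ * (starRingEnd ℂ) w = 0 := by
      have := congrArg (inner ℂ x) hdep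
      rw [inner_add_right, inner_smul_right, inner_smul_right, hw', inner_zero_right, ← hwd] at this
      rw [← this]; ring
    have hcw : (starRingEnd ℂ) w ≠ 0 := by simpa using hw
    have hμ0 : μ ≠ 0 := by
      rintro rfl
      simp at h1; exact hw h1
    apply hx0
    apply hinj (Complex.I * (starRingEnd ℂ) w) (mul_ne_zero Complex.I_ne_zero hcw)
    rw [map_smulₛₗ]
    simp only [_root_.add_apply, _root_.smul_apply, map_mul, Complex.conj_I, Complex.conj_conj]
    have h2 : (starRingEnd ℂ) w • A x - w • (adjoint A) x = 0 := by
      have h3 : μ • ((starRingEnd ℂ) w • A x - w • (adjoint A) x) = 0 := by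
        rw [smul_sub, smul_smul, smul_smul]
        have h4 : μ * (starRingEnd ℂ) w = w * (1 - μ) := by linear_combination -h1
        rw [h4, mul_comm μ w, ← smul_smul, ← smul_smul, ← smul_sub]
        rw [neg_smul, ← sub_eq_add_neg] at hdep
        rw [hdep, smul_zero]
      exact (smul_eq_zero.1 h3).resolve_left hμ0
    have h5 : (Complex.I * (starRingEnd ℂ) w) • A x + (-Complex.I * w) • (adjoint A) x =
        Complex.I • ((starRingEnd ℂ) w • A x - w • (adjoint A) x) := by
      rw [smul_sub, smul_smul, smul_smul, neg_mul, neg_smul, sub_eq_add_neg]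
    rw [h5, h2, smul_zero]
  · by_cases h : μ = 0
    · left; simp [h]
    · right; simpa using h

end ZdiStrict

section ZdiMain

set_option linter.unusedSectionVars false

variable {E : Type*} [NormedAddCommGroup E] [InnerProductSpace ℂ E] [FiniteDimensional ℂ E]
  [CompleteSpace E]

open Module ContinuousLinearMap

lemma zaux_comp (A : E →L[ℂ] E) (W : Submodule ℂ E) :
    ∃ B : W →L[ℂ] W, ∀ x : W, inner ℂ x (B x) = inner ℂ (x : E) (A x) := by
  have : CompleteSpace W := FiniteDimensional.complete ℂ W
  refine ⟨W.orthogonalProjectionOnto ∘L A ∘L W.subtypeL, fun x => ?_⟩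
  simp

lemma zaux_comap (W S : Submodule ℂ E) (h : S ≤ W) :
    finrank ℂ (S.comap W.subtype) = finrank ℂ S :=
  (Submodule.comapSubtypeEquivOfLe h).finrank_eq

lemma zaux_expand (B : E →L[ℂ] E) (s x : E) (t : ℂ) (hx : inner ℂ x (B x) = 0) :
    inner ℂ (s + t • x) (B (s + t • x)) =
      inner ℂ s (B s) + t * inner ℂ s (B x) + (starRingEnd ℂ) t * inner ℂ x (B s) := by
  rw [map_add, map_smul, inner_add_left, inner_add_right, inner_add_right, inner_smul_left,
    inner_smul_left, inner_smul_right, inner_smul_right, hx]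
  ring

lemma zaux_psd (B : E →L[ℂ] E) (S : Submodule ℂ E) (x : E) (hxS : x ∈ S)
    (hS : ∀ s ∈ S, 0 ≤ (inner ℂ s (B s)).re) (hx : inner ℂ x (B x) = 0) (s : E) (hs : s ∈ S) :
    inner ℂ s ((B + adjoint B) x) = 0 := by
  set w := inner ℂ s ((B + adjoint B) x) with hw
  have h1 : ∀ t : ℂ, 0 ≤ (inner ℂ s (B s)).re + (t * w).re := by
    intro t
    have h2 := hS (s + t • x) (S.add_mem hs (S.smul_mem t hxS))
    rw [zaux_expand B s x t hx] at h2
    have h3 : (t * inner ℂ s (adjoint B x)).re = ((starRingEnd ℂ) t * inner ℂ x (B s)).re := by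
      rw [adjoint_inner_right, ← inner_conj_symm (B s) x, ← Complex.conj_re, map_mul,
        Complex.conj_conj]
    have h4 : (t * w).re = (t * inner ℂ s (B x)).re + (t * inner ℂ s (adjoint B x)).re := by
      rw [hw, _root_.add_apply, inner_add_right, mul_add, Complex.add_re]
    rw [h4, h3]
    simpa [add_assoc] using h2
  by_contra h0
  have hn : 0 < Complex.normSq w := Complex.normSq_pos.2 h0
  have h5 := h1 (((-((inner ℂ s (B s)).re + 1) / Complex.normSq w : ℝ) : ℂ) * (starRingEnd ℂ) w)
  rw [mul_assoc, mul_comm _ w, Complex.mul_conj, Complex.re_ofReal_mul, Complex.ofReal_re,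
    div_mul_cancel₀ _ hn.ne'] at h5
  linarith

lemma zaux_perp1 (v : E) : finrank ℂ E ≤ finrank ℂ ((Submodule.span ℂ {v})ᗮ : Submodule ℂ E) + 1 := by
  have h1 := (Submodule.span ℂ {v}).finrank_add_finrank_orthogonal
  have h2 : finrank ℂ (Submodule.span ℂ {v}) ≤ 1 := (finrank_span_le_card _).trans (by simp)
  omega

lemma zaux_perp2 (u v : E) (α β : ℂ) (hab : α ≠ 0 ∨ β ≠ 0) (h : α • u + β • v = 0) :
    ∃ Y : Submodule ℂ E, finrank ℂ E ≤ finrank ℂ Y + 1 ∧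
      ∀ s, s ∈ Y ↔ inner ℂ s u = 0 ∧ inner ℂ s v = 0 := by
  rcases hab with ha | hb
  · refine ⟨(Submodule.span ℂ {v})ᗮ, zaux_perp1 v, fun s => ?_⟩
    have hu : u = (-(β / α)) • v := by
      have : α • u = (-β) • v := by rw [neg_smul]; exact eq_neg_of_add_eq_zero_left h
      rw [← one_smul ℂ u, ← inv_mul_cancel₀ ha, ← smul_smul, this, smul_smul]
      congr 1; field_simp
    rw [Submodule.mem_orthogonal_singleton_iff_inner_left, hu, inner_smul_right]
    constructor
    · intro h; simp [h]
    · exact fun h => h.2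
  · refine ⟨(Submodule.span ℂ {u})ᗮ, zaux_perp1 u, fun s => ?_⟩
    have hv : v = (-(α / β)) • u := by
      have : β • v = (-α) • u := by rw [neg_smul]; exact eq_neg_of_add_eq_zero_right h
      rw [← one_smul ℂ v, ← inv_mul_cancel₀ hb, ← smul_smul, this, smul_smul]
      congr 1; field_simp
    rw [Submodule.mem_orthogonal_singleton_iff_inner_left, hv, inner_smul_right]
    constructor
    · intro h; simp [h]
    · exact fun h => h.1

lemma zaux_step (k : ℕ) (A : E →L[ℂ] E)
    (hIH : ∀ (Y : Submodule ℂ E) (B : Y →L[ℂ] Y), ZP k B →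
      ∃ S : Submodule ℂ Y, finrank ℂ S = k ∧ ∀ x ∈ S, inner ℂ x (B x) = 0)
    (hP : ZP (k + 1) A) (x : E) (hx : ZGood A x) :
    ∃ S : Submodule ℂ E, finrank ℂ S = k + 1 ∧ ∀ x ∈ S, inner ℂ x (A x) = 0 := by
  obtain ⟨hx0, hq, α, β, hab, hdep⟩ := hx
  obtain ⟨Y1, hY1d, hY1⟩ := zaux_perp2 (A x) (adjoint A x) α β hab hdep
  have hxY1 : x ∈ Y1 := by
    rw [hY1]
    refine ⟨hq, ?_⟩
    rw [adjoint_inner_right, ← inner_conj_symm, hq, map_zero]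
  have hqadd : ∀ s ∈ Y1, ∀ t : ℂ, inner ℂ (s + t • x) (A (s + t • x)) = inner ℂ s (A s) := by
    intro s hs t
    obtain ⟨h1, h2⟩ := (hY1 s).1 hs
    rw [adjoint_inner_right, ← inner_conj_symm] at h2
    rw [zaux_expand A s x t hq, h1, (map_eq_zero (starRingEnd ℂ)).1 h2]
    ring
  set Y : Submodule ℂ E := Y1 ⊓ (Submodule.span ℂ {x})ᗮ with hY
  have : CompleteSpace Y := FiniteDimensional.complete ℂ Y
  obtain ⟨B, hB⟩ := zaux_comp A Y
  -- directions outside the exceptional set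
  have hmain : ∀ c : ℂ, (c • A x + (starRingEnd ℂ) c • adjoint A x ≠ 0 ∨
      (A x = 0 ∧ adjoint A x = 0)) → ZNN k (c • B) := by
    intro c hc
    obtain ⟨S, hSk, hS⟩ := hP c
    set S2 : Submodule ℂ E := (S ⊓ Y1) ⊔ Submodule.span ℂ {x} with hS2
    have hS2Y1 : S2 ≤ Y1 := sup_le inf_le_right (by simpa using hxY1)
    have hS2d : k + 1 ≤ finrank ℂ S2 := by
      by_cases hxS : x ∈ S
      · have hSY : S ≤ Y1 := by
          intro s hs
          rw [hY1]
          rcases hc with hc | ⟨hc1, hc2⟩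
          · have h1 := zaux_psd (c • A) S x hxS hS (by simp [hq]) s hs
            rw [map_smulₛₗ] at h1
            simp only [_root_.add_apply, _root_.smul_apply] at h1
            have hdet : c * β - (starRingEnd ℂ) c * α ≠ 0 := by
              intro hdet
              have hc0 : c ≠ 0 := by
                rintro rfl
                simp at hc
              have hcc : (starRingEnd ℂ) c ≠ 0 := by simpa using hc0
              have hα : α ≠ 0 := by
                rintro rfl
                simp [hc0] at hdet
                simp [hdet] at hab
              apply hc
              have h3 : α • (c • A x + (starRingEnd ℂ) c • adjoint A x) = 0 := by
                have h4 : (starRingEnd ℂ) c * α = c * β := by linear_combination -hdet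
                rw [smul_add, smul_smul, smul_smul, mul_comm α ((starRingEnd ℂ) c), h4,
                  mul_comm α c, ← smul_smul, ← smul_smul, ← smul_add, hdep, smul_zero]
              exact (smul_eq_zero.1 h3).resolve_left hα
            have h5 := congrArg (inner ℂ s) hdep
            rw [inner_add_right, inner_smul_right, inner_smul_right] at h1 h5
            rw [inner_zero_right] at h5
            constructor
            · refine (mul_eq_zero.1 ?_).resolve_left hdet
              linear_combination β * h1 - (starRingEnd ℂ) c * h5
            · refine (mul_eq_zero.1 ?_).resolve_left hdet
              linear_combination -α * h1 + c * h5
          · simp [hc1, hc2]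
        have : S ≤ S2 := le_trans (le_inf le_rfl hSY) le_sup_left
        exact hSk.trans (Submodule.finrank_mono this)
      · have hxS1 : x ∉ S ⊓ Y1 := fun h => hxS h.1
        rw [hS2, Submodule.finrank_sup_span_singleton hxS1]
        have h1 := Submodule.finrank_sup_add_finrank_inf_eq S Y1
        have h2 := (S ⊔ Y1).finrank_le
        omega
    have hS2n : ∀ s ∈ S2, 0 ≤ (c * inner ℂ s (A s)).re := by
      intro s hs
      obtain ⟨s1, hs1, w, hw, rfl⟩ := Submodule.mem_sup.1 hs
      obtain ⟨t, rfl⟩ := Submodule.mem_span_singleton.1 hw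
      rw [hqadd s1 hs1.2]
      have := hS s1 hs1.1
      rwa [_root_.smul_apply, inner_smul_right] at this
    set S3 := S2 ⊓ (Submodule.span ℂ {x})ᗮ with hS3
    have hS3Y : S3 ≤ Y := inf_le_inf_right _ hS2Y1
    have hS3d : k ≤ finrank ℂ S3 := by
      have h1 := Submodule.finrank_sup_add_finrank_inf_eq S2 (Submodule.span ℂ {x})ᗮ
      have h2 := (S2 ⊔ (Submodule.span ℂ {x})ᗮ).finrank_le
      have h3 := zaux_perp1 x
      rw [← hS3] at h1
      omega
    refine ⟨S3.comap Y.subtype, ?_, fun y hy => ?_⟩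
    · rw [zaux_comap Y S3 hS3Y]; exact hS3d
    · rw [_root_.smul_apply, inner_smul_right, hB]
      exact hS2n _ hy.1
  have hPB : ZP k B := by
    intro c
    by_cases hz : A x = 0 ∧ adjoint A x = 0
    · exact hmain c (Or.inr hz)
    by_cases hc : c • A x + (starRingEnd ℂ) c • adjoint A x ≠ 0
    · exact hmain c (Or.inl hc)
    push Not at hc
    obtain ⟨c0, hc0⟩ : ∃ c0 : ℂ, c0 • A x + (starRingEnd ℂ) c0 • adjoint A x ≠ 0 := by
      by_contra hcon
      push Not at hcon
      apply hz
      have h1 := hcon 1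
      have h2 := hcon Complex.I
      simp only [map_one, one_smul, Complex.conj_I, neg_smul, ← sub_eq_add_neg, ← smul_sub] at h1 h2
      have h3 := (smul_eq_zero.1 h2).resolve_left Complex.I_ne_zero
      have h4 : A x = adjoint A x := sub_eq_zero.1 h3
      rw [← h4, ← two_smul ℂ] at h1
      have h5 := (smul_eq_zero.1 h1).resolve_left two_ne_zero
      exact ⟨h5, h4 ▸ h5⟩
    have hcl : IsClosed {d : ℂ | ZNN k (d • B)} :=
      (zaux_closed k).preimage (f := fun d : ℂ => d • B) (by fun_prop)
    have hlim : Filter.Tendsto (fun n : ℕ => c + ((1 / ((n : ℝ) + 1) : ℝ) : ℂ) * c0) Filter.atTop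
        (nhds c) := by
      have h1 : Filter.Tendsto (fun n : ℕ => ((1 / ((n : ℝ) + 1) : ℝ) : ℂ)) Filter.atTop
          (nhds ((0 : ℝ) : ℂ)) :=
        (Complex.continuous_ofReal.tendsto 0).comp tendsto_one_div_add_atTop_nhds_zero_nat
      have h2 := (h1.mul_const c0).const_add c
      simpa using h2
    refine hcl.mem_of_tendsto hlim (Filter.Eventually.of_forall fun n => hmain _ (Or.inl ?_))
    have hr : ((1 / ((n : ℝ) + 1) : ℝ) : ℂ) ≠ 0 := by
      have : (1 / ((n : ℝ) + 1) : ℝ) ≠ 0 := by positivity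
      exact_mod_cast this
    set r : ℝ := 1 / ((n : ℝ) + 1)
    have h6 : (c + (r : ℂ) * c0) • A x + (starRingEnd ℂ) (c + (r : ℂ) * c0) • adjoint A x =
        (c • A x + (starRingEnd ℂ) c • adjoint A x) +
          (r : ℂ) • (c0 • A x + (starRingEnd ℂ) c0 • adjoint A x) := by
      rw [map_add, map_mul, Complex.conj_ofReal]
      module
    rw [h6, hc, zero_add]
    exact smul_ne_zero hr hc0
  obtain ⟨S', hS'd, hS'q⟩ := hIH Y B hPB
  have hle : S'.map Y.subtype ≤ Y := Submodule.map_subtype_le Y S'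
  have hxn : x ∉ S'.map Y.subtype := by
    intro h
    have h1 : x ∈ (Submodule.span ℂ {x})ᗮ := (hle h).2
    rw [Submodule.mem_orthogonal_singleton_iff_inner_left] at h1
    exact hx0 (inner_self_eq_zero.1 h1)
  refine ⟨S'.map Y.subtype ⊔ Submodule.span ℂ {x}, ?_, ?_⟩
  · rw [Submodule.finrank_sup_span_singleton hxn, Submodule.finrank_map_subtype_eq, hS'd]
  · intro s hs
    obtain ⟨s1, hs1, w, hw, rfl⟩ := Submodule.mem_sup.1 hs
    obtain ⟨t, rfl⟩ := Submodule.mem_span_singleton.1 hw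
    rw [hqadd s1 (hle hs1).1]
    obtain ⟨y, hy, rfl⟩ := hs1
    rw [← hS'q y hy, hB]; rfl

lemma zaux_deform (k : ℕ) (A : E →L[ℂ] E)
    (hIH : ∀ (Y : Submodule ℂ E) (B : Y →L[ℂ] Y), ZP k B →
      ∃ S : Submodule ℂ Y, finrank ℂ S = k ∧ ∀ x ∈ S, inner ℂ x (B x) = 0)
    (hP : ZP (k + 1) A) (hng : ∀ x, ¬ ZGood A x) :
    ∃ s : ℝ, 0 < s ∧ ∃ S : Submodule ℂ E, finrank ℂ S = k + 1 ∧
      ∀ x ∈ S, inner ℂ x (A x) = ((s * ‖x‖ ^ 2 : ℝ) : ℂ) := by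
  set F : ℝ → (E →L[ℂ] E) := fun s => A - (s : ℂ) • ContinuousLinearMap.id ℂ E with hF
  have hFq : ∀ s x, inner ℂ x (F s x) = inner ℂ x (A x) - ((s * ‖x‖ ^ 2 : ℝ) : ℂ) := by
    intro s x
    simp only [hF, _root_.sub_apply, _root_.smul_apply, ContinuousLinearMap.id_apply,
      inner_sub_right, inner_smul_right, inner_self_eq_norm_sq_to_K]
    push_cast; rfl
  have hF0 : F 0 = A := by simp [hF]
  have hFc : Continuous F := by fun_prop
  set Sg : Set ℝ := {s | 0 ≤ s ∧ ZP (k + 1) (F s)} with hSg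
  have h0 : (0 : ℝ) ∈ Sg := ⟨le_rfl, by rw [hF0]; exact hP⟩
  have hcl : IsClosed Sg := by
    have : Sg = Set.Ici 0 ∩ ⋂ c : ℂ, {s : ℝ | ZNN (k + 1) (c • F s)} := by
      ext s
      simp [hSg, ZP]
    rw [this]
    refine isClosed_Ici.inter (isClosed_iInter fun c => ?_)
    exact (zaux_closed (k + 1)).preimage (f := fun s : ℝ => c • F s) (by fun_prop)
  have hbdd : BddAbove Sg := by
    refine ⟨‖A‖, ?_⟩
    rintro s ⟨_, hs⟩
    obtain ⟨S, hSk, hS⟩ := hs 1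
    have hSne : S ≠ ⊥ := by
      rintro rfl
      simp at hSk
    obtain ⟨x, hxS, hx0⟩ := Submodule.exists_mem_ne_zero_of_ne_bot hSne
    have h1 := hS x hxS
    rw [one_smul, hFq, Complex.sub_re, Complex.ofReal_re] at h1
    have h2 : (inner ℂ x (A x)).re ≤ ‖A‖ * ‖x‖ ^ 2 := by
      refine (Complex.re_le_norm _).trans ((norm_inner_le_norm _ _).trans ?_)
      have := A.le_opNorm x
      nlinarith [norm_nonneg x]
    have h3 : 0 < ‖x‖ ^ 2 := by have := norm_pos_iff.2 hx0; positivity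
    by_contra hc
    push Not at hc
    nlinarith
  have hmem := hcl.csSup_mem ⟨0, h0⟩ hbdd
  set s := sSup Sg with hs
  have hgood : ∃ x, ZGood (F s) x := by
    by_contra hcon
    push Not at hcon
    have hU : IsOpen {p : ℝ × ℂ | ZPP (k + 1) (p.2 • F p.1)} :=
      (zaux_open (k + 1)).preimage (f := fun p : ℝ × ℂ => p.2 • F p.1) (by fun_prop)
    have hsub : ({s} : Set ℝ) ×ˢ Metric.sphere (0 : ℂ) 1 ⊆
        {p : ℝ × ℂ | ZPP (k + 1) (p.2 • F p.1)} := by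
      rintro ⟨s', c⟩ ⟨hs', hc⟩
      simp only [Set.mem_singleton_iff] at hs'
      subst hs'
      refine zaux_strict' (k + 1) _ hmem.2 hcon c ?_
      rintro rfl
      simp at hc
    obtain ⟨u, v, hu, hv, hsu, hcv, huv⟩ :=
      generalized_tube_lemma isCompact_singleton (isCompact_sphere (0 : ℂ) 1) hU hsub
    obtain ⟨ε, hε, hball⟩ := Metric.isOpen_iff.1 hu s (hsu rfl)
    have hs2 : s + ε / 2 ∈ Sg := by
      refine ⟨by linarith [hmem.1], fun c => ?_⟩
      have hpp : ∀ c : ℂ, ‖c‖ = 1 → ZNN (k + 1) (c • F (s + ε / 2)) := by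
        intro c hc
        have : ((s + ε / 2, c) : ℝ × ℂ) ∈ u ×ˢ v := by
          refine ⟨hball ?_, hcv (by simpa using hc)⟩
          rw [Metric.mem_ball, Real.dist_eq, add_sub_cancel_left, abs_of_pos (by linarith)]
          linarith
        obtain ⟨S, h1, h2⟩ := huv this
        refine ⟨S, h1, fun x hx => ?_⟩
        by_cases hx0 : x = 0
        · simp [hx0]
        · exact (h2 x hx hx0).le
      by_cases hc0 : c = 0
      · obtain ⟨S, h1, h2⟩ := hpp 1 (by simp)
        exact ⟨S, h1, fun x _ => by simp [hc0]⟩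
      · have hn : 0 < ‖c‖ := norm_pos_iff.2 hc0
        obtain ⟨S, h1, h2⟩ := hpp (((‖c‖⁻¹ : ℝ) : ℂ) * c) (by simp [hn.ne'])
        refine ⟨S, h1, fun x hx => ?_⟩
        have h3 := h2 x hx
        rw [_root_.smul_apply, inner_smul_right, mul_assoc, Complex.re_ofReal_mul] at h3
        rw [_root_.smul_apply, inner_smul_right]
        exact nonneg_of_mul_nonneg_right h3 (by positivity)
    have := le_csSup hbdd hs2
    linarith
  obtain ⟨x, hx⟩ := hgood
  have hspos : 0 < s := by
    refine lt_of_le_of_ne hmem.1 fun h => ?_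
    rw [← h, hF0] at hx
    exact hng x hx
  obtain ⟨S, hSd, hSq⟩ := zaux_step k (F s) hIH hmem.2 x hx
  refine ⟨s, hspos, S, hSd, fun y hy => ?_⟩
  have := hSq y hy
  rw [hFq] at this
  exact sub_eq_zero.1 this

end ZdiMain

open Module in
theorem zaux_main.{u} (k : ℕ) : ∀ (E : Type u) [NormedAddCommGroup E] [InnerProductSpace ℂ E]
    [FiniteDimensional ℂ E] (A : E →L[ℂ] E), ZP k A →
    ∃ S : Submodule ℂ E, finrank ℂ S = k ∧ ∀ x ∈ S, inner ℂ x (A x) = 0 := by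
  induction k with
  | zero =>
    intro E _ _ _ A _
    exact ⟨⊥, by simp, by simp⟩
  | succ k ih =>
    intro E _ _ _ A hP
    have : CompleteSpace E := FiniteDimensional.complete ℂ E
    by_cases hg : ∃ x, ZGood A x
    · obtain ⟨x, hx⟩ := hg
      exact zaux_step k A (fun Y B hB => ih Y B hB) hP x hx
    push Not at hg
    obtain ⟨a, ha, Sa, hSad, hSa⟩ := zaux_deform k A (fun Y B hB => ih Y B hB) hP hg
    obtain ⟨b, hb, Sb, hSbd, hSb⟩ := zaux_deform k ((-1 : ℂ) • A) (fun Y B hB => ih Y B hB)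
      (zaux_P_smul _ A _ hP)
      (fun x hx => hg x (zaux_good_smul A (-1) (by simp) x hx))
    have hSb' : ∀ x ∈ Sb, inner ℂ x (A x) = ((-(b * ‖x‖ ^ 2) : ℝ) : ℂ) := by
      intro x hx
      have := hSb x hx
      rw [_root_.smul_apply, inner_smul_right] at this
      push_cast at this ⊢
      linear_combination -this
    have hdisj : Disjoint Sa Sb := by
      rw [Submodule.disjoint_def]
      intro x hxa hxb
      by_contra hx0
      have h1 := hSa x hxa
      rw [hSb' x hxb] at h1
      have h2 : -(b * ‖x‖ ^ 2) = a * ‖x‖ ^ 2 := by exact_mod_cast h1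
      have h3 : 0 < ‖x‖ := norm_pos_iff.2 hx0
      have h4 : 0 < a * ‖x‖ ^ 2 := by positivity
      have h5 : 0 < b * ‖x‖ ^ 2 := by positivity
      linarith
    set W := Sa ⊔ Sb with hW
    have hWd : finrank ℂ W = 2 * (k + 1) := by
      have h1 := Submodule.finrank_sup_add_finrank_inf_eq Sa Sb
      rw [hdisj.eq_bot, finrank_bot, ← hW] at h1
      omega
    have : CompleteSpace W := FiniteDimensional.complete ℂ W
    obtain ⟨B, hB⟩ := zaux_comp A W
    have hPB : ZP (k + 1) B := by
      intro c
      by_cases hc : 0 ≤ c.re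
      · refine ⟨Sa.comap W.subtype, ?_, fun x hx => ?_⟩
        · rw [zaux_comap W Sa le_sup_left, hSad]
        · rw [_root_.smul_apply, inner_smul_right, hB, hSa (x : E) hx, Complex.re_mul_ofReal]
          positivity
      · refine ⟨Sb.comap W.subtype, ?_, fun x hx => ?_⟩
        · rw [zaux_comap W Sb le_sup_right, hSbd]
        · rw [_root_.smul_apply, inner_smul_right, hB, hSb' (x : E) hx, Complex.re_mul_ofReal]
          push Not at hc
          exact mul_nonneg_of_nonpos_of_nonpos hc.le (neg_nonpos.2 (by positivity))
    have hgB : ∃ x, ZGood B x := by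
      by_contra hcon
      push Not at hcon
      obtain ⟨x, hx⟩ := zaux_eig (k + 1) (Nat.succ_pos k) B hWd
        (fun c hc => zaux_strict' (k + 1) B hPB hcon c hc)
      exact hcon x hx
    obtain ⟨x, hx⟩ := hgB
    obtain ⟨S, hSd, hSq⟩ := zaux_step k B (fun Y B hB => ih Y B hB) hPB x hx
    refine ⟨S.map W.subtype, ?_, ?_⟩
    · rw [Submodule.finrank_map_subtype_eq, hSd]
    · rintro _ ⟨y, hy, rfl⟩
      rw [← hSq y hy, hB]; rfl

section ZdiMatrix

open Module

variable {m : Type*} [Fintype m]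

lemma zaux_bdd (A : Matrix m m ℂ) :
    BddAbove {k : ℕ | ∃ V : Matrix m (Fin k) ℂ, Vᴴ * V = 1 ∧ Vᴴ * A * V = 0} := by
  refine ⟨Fintype.card m, ?_⟩
  rintro k ⟨V, hV, -⟩
  have h1 : (Vᴴ * V).rank = k := by rw [hV, Matrix.rank_one]; simp
  have h2 := Matrix.rank_mul_le_right Vᴴ V
  have h3 := V.rank_le_card_height
  omega

lemma zaux_le_zdi {ι : Type*} [Fintype ι] [DecidableEq ι] (A : Matrix m m ℂ) (V : Matrix m ι ℂ)
    (h1 : Vᴴ * V = 1) (h2 : Vᴴ * A * V = 0) : Fintype.card ι ≤ zdi A := by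
  refine le_csSup (zaux_bdd A) ?_
  let e := (Fintype.equivFin ι).symm
  refine ⟨V.submatrix id e, ?_, ?_⟩
  · ext i j
    have h := congrFun (congrFun h1 (e i)) (e j)
    rw [Matrix.one_apply] at h ⊢
    simp only [e.injective.eq_iff] at h
    rw [← h]
    rfl
  · ext i j
    exact congrFun (congrFun h2 (e i)) (e j)

lemma zaux_zdi_mem (A : Matrix m m ℂ) :
    ∃ V : Matrix m (Fin (zdi A)) ℂ, Vᴴ * V = 1 ∧ Vᴴ * A * V = 0 :=
  Nat.sSup_mem (s := {k : ℕ | ∃ V : Matrix m (Fin k) ℂ, Vᴴ * V = 1 ∧ Vᴴ * A * V = 0})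
    ⟨0, 0, Subsingleton.elim _ _, Subsingleton.elim _ _⟩ (zaux_bdd A)

lemma zaux_matRe_herm (A : Matrix m m ℂ) : (matRe A).IsHermitian := by
  rw [Matrix.IsHermitian, matRe, Matrix.conjTranspose_smul, Matrix.conjTranspose_add,
    Matrix.conjTranspose_conjTranspose, add_comm]
  simp

variable [DecidableEq m]

lemma zaux_matRe_q (A : Matrix m m ℂ) (x : EuclideanSpace ℂ m) :
    (inner ℂ x (Matrix.toEuclideanCLM (n := m) (𝕜 := ℂ) (matRe A) x)).re =
      (inner ℂ x (Matrix.toEuclideanCLM (n := m) (𝕜 := ℂ) A x)).re := by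
  have h1 : Matrix.toEuclideanCLM (n := m) (𝕜 := ℂ) (matRe A) =
      (2⁻¹ : ℂ) • (Matrix.toEuclideanCLM (n := m) (𝕜 := ℂ) A +
        ContinuousLinearMap.adjoint (Matrix.toEuclideanCLM (n := m) (𝕜 := ℂ) A)) := by
    rw [matRe, map_smul, map_add, ← Matrix.star_eq_conjTranspose, map_star,
      ContinuousLinearMap.star_eq_adjoint]
  have h2 := zaux_re (Matrix.toEuclideanCLM (n := m) (𝕜 := ℂ) A) x
  have h3 : (2⁻¹ : ℂ) = ((2⁻¹ : ℝ) : ℂ) := by push_cast; rfl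
  rw [h1, _root_.smul_apply, inner_smul_right, h3, Complex.re_ofReal_mul, h2]
  ring

/-- spectral subspaces for `iNonneg` -/
lemma zaux_iNonneg_spaces (M : Matrix m m ℂ) (hM : M.IsHermitian) :
    ∃ P N : Submodule ℂ (EuclideanSpace ℂ m), finrank ℂ P = iNonneg M ∧
      finrank ℂ P + finrank ℂ N = Fintype.card m ∧
      (∀ x ∈ P, 0 ≤ (inner ℂ x (Matrix.toEuclideanCLM (n := m) (𝕜 := ℂ) M x)).re) ∧
      (∀ x ∈ N, x ≠ 0 → (inner ℂ x (Matrix.toEuclideanCLM (n := m) (𝕜 := ℂ) M x)).re < 0) := by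
  set T := Matrix.toEuclideanCLM (n := m) (𝕜 := ℂ) M with hTd
  set b := hM.eigenvectorBasis
  set lam := hM.eigenvalues with hlam
  have hb : ∀ i, (T : EuclideanSpace ℂ m →ₗ[ℂ] EuclideanSpace ℂ m) (b i) = (lam i : ℂ) • b i := by
    intro i
    have h1 := hM.mulVec_eigenvectorBasis i
    ext j
    have h2 := congrFun h1 j
    change (M *ᵥ ⇑(b i)) j = _
    refine h2.trans ?_
    simp [lam, b]
  have hD := zaux_diag b lam (T : EuclideanSpace ℂ m →ₗ[ℂ] EuclideanSpace ℂ m) hb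
  obtain ⟨P, hP, hP'⟩ := zaux_coord b (fun i => 0 ≤ lam i)
  obtain ⟨N, hN, hN'⟩ := zaux_coord b (fun i => ¬ 0 ≤ lam i)
  refine ⟨P, N, ?_, ?_, ?_, ?_⟩
  · rw [hP, iNonneg, dif_pos hM]
  · rw [hP, hN, Finset.card_filter_add_card_filter_not]; simp
  · intro x hx
    have h1 := (hD x).2
    change (inner ℂ x (T x)).re = _ at h1
    rw [h1]
    refine Finset.sum_nonneg fun i _ => ?_
    by_cases hi : 0 ≤ lam i
    · positivity
    · rw [hP' x hx i hi]; simp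
  · intro x hx h0
    have h1 := (hD x).2
    change (inner ℂ x (T x)).re = _ at h1
    rw [h1]
    have hle : ∀ i, lam i * ‖b.repr x i‖ ^ 2 ≤ 0 := by
      intro i
      by_cases hi : 0 ≤ lam i
      · rw [hN' x hx i (by simpa using hi)]; simp
      · exact mul_nonpos_of_nonpos_of_nonneg (not_le.1 hi).le (by positivity)
    refine lt_of_le_of_ne (Finset.sum_nonpos fun i _ => hle i) fun h => h0 ?_
    rw [Finset.sum_eq_zero_iff_of_nonpos (fun i _ => hle i)] at h
    apply b.repr.injective
    ext i
    simp only [map_zero, PiLp.zero_apply]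
    by_cases hi : 0 ≤ lam i
    · exact hN' x hx i (by simpa using hi)
    · rcases mul_eq_zero.1 (h i (Finset.mem_univ _)) with h2 | h2
      · exact absurd h2.symm.le hi
      · simpa using h2

lemma zaux_inner_mat (A : Matrix m m ℂ) (x y : EuclideanSpace ℂ m) :
    inner ℂ x (Matrix.toEuclideanCLM (n := m) (𝕜 := ℂ) A y) =
      star (WithLp.ofLp x) ⬝ᵥ (A *ᵥ WithLp.ofLp y) := by
  rw [EuclideanSpace.inner_eq_star_dotProduct, Matrix.ofLp_toEuclideanCLM, dotProduct_comm]

lemma zaux_zdi_le (A : Matrix m m ℂ) (c : ℂ) : zdi A ≤ iNonneg (matRe (c • A)) := by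
  obtain ⟨V, hV1, hV2⟩ := zaux_zdi_mem A
  obtain ⟨P, N, hP, hd, -, hN⟩ := zaux_iNonneg_spaces _ (zaux_matRe_herm (c • A))
  have hinj : Function.Injective (Matrix.toEuclideanLin V) := by
    rw [← LinearMap.ker_eq_bot, LinearMap.ker_eq_bot']
    intro y hy
    have h1 : V *ᵥ WithLp.ofLp y = 0 := congrArg WithLp.ofLp hy
    have h2 : (Vᴴ * V) *ᵥ WithLp.ofLp y = 0 := by rw [← Matrix.mulVec_mulVec, h1, Matrix.mulVec_zero]
    rw [hV1, Matrix.one_mulVec] at h2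
    ext i
    exact congrFun h2 i
  have hr : finrank ℂ (LinearMap.range (Matrix.toEuclideanLin V)) = zdi A := by
    rw [LinearMap.finrank_range_of_inj hinj]; simp
  by_contra hc
  obtain ⟨x, hx0, hxr, hxN⟩ := zaux_inter (LinearMap.range (Matrix.toEuclideanLin V)) N
    (by rw [hr, finrank_euclideanSpace]; omega)
  obtain ⟨y, rfl⟩ := hxr
  have h1 := hN _ hxN hx0
  rw [zaux_matRe_q, zaux_inner_mat] at h1
  have h2 : star (WithLp.ofLp (Matrix.toEuclideanLin V y)) ⬝ᵥ
      ((c • A) *ᵥ WithLp.ofLp (Matrix.toEuclideanLin V y)) = 0 := by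
    change star (V *ᵥ WithLp.ofLp y) ⬝ᵥ ((c • A) *ᵥ (V *ᵥ WithLp.ofLp y)) = 0
    rw [Matrix.star_mulVec, ← Matrix.dotProduct_mulVec, Matrix.mulVec_mulVec, Matrix.mulVec_mulVec,
      Matrix.mul_smul, Matrix.smul_mul, hV2]
    simp
  rw [h2] at h1
  simp at h1

lemma zaux_polar {E : Type*} [NormedAddCommGroup E] [InnerProductSpace ℂ E]
    [FiniteDimensional ℂ E] (A : E →L[ℂ] E) (S : Submodule ℂ E)
    (h : ∀ x ∈ S, inner ℂ x (A x) = 0) (x y : E) (hx : x ∈ S) (hy : y ∈ S) :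
    inner ℂ x (A y) = 0 := by
  have e1 := h _ (S.add_mem hx hy)
  have e2 := h _ (S.add_mem hx (S.smul_mem Complex.I hy))
  have e3 := h x hx
  have e4 := h y hy
  simp only [map_add, map_smul, inner_add_left, inner_add_right, inner_smul_left, inner_smul_right,
    e3, e4, Complex.conj_I] at e1 e2
  have hI := Complex.I_mul_I
  linear_combination (1 / 2) * e1 - (Complex.I / 2) * e2 +
    (inner ℂ x (A y) - inner ℂ y (A x)) * (1 / 2) * hI

lemma zaux_exists (A : Matrix m m ℂ) :
    ∃ θ : ℝ, zdi A = iNonneg (matRe (Complex.exp (-(θ : ℂ) * Complex.I) • A)) := by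
  by_contra hcon
  push Not at hcon
  have hlt : ∀ θ : ℝ, zdi A + 1 ≤ iNonneg (matRe (Complex.exp (-(θ : ℂ) * Complex.I) • A)) :=
    fun θ => lt_of_le_of_ne (zaux_zdi_le A _) (hcon θ)
  set T := Matrix.toEuclideanCLM (n := m) (𝕜 := ℂ) A with hT
  have hP : ZP (zdi A + 1) T := by
    intro c
    obtain ⟨P, N, hPd, -, hPp, -⟩ := zaux_iNonneg_spaces _
      (zaux_matRe_herm (Complex.exp (-((-Complex.arg c : ℝ) : ℂ) * Complex.I) • A))
    refine ⟨P, ?_, fun x hx => ?_⟩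
    · rw [hPd]; exact hlt _
    · have h1 := hPp x hx
      rw [zaux_matRe_q, map_smul, _root_.smul_apply, inner_smul_right] at h1
      rw [_root_.smul_apply, inner_smul_right, ← Complex.norm_mul_exp_arg_mul_I c, mul_assoc,
        Complex.re_ofReal_mul]
      refine mul_nonneg (norm_nonneg c) ?_
      simpa using h1
  obtain ⟨S, hSd, hSq⟩ := zaux_main (zdi A + 1) _ T hP
  let b := (stdOrthonormalBasis ℂ S).reindex (finCongr hSd)
  let V : Matrix m (Fin (zdi A + 1)) ℂ := Matrix.of fun i j => (b j : EuclideanSpace ℂ m) i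
  have hle := zaux_le_zdi A V ?_ ?_
  · simp at hle
  · ext i j
    have h1 := (orthonormal_iff_ite.1 b.orthonormal) i j
    rw [Submodule.coe_inner, EuclideanSpace.inner_eq_star_dotProduct, dotProduct_comm] at h1
    rw [Matrix.one_apply, ← h1]
    rfl
  · ext i j
    have h1 := zaux_polar T S hSq (b i) (b j) (b i).2 (b j).2
    rw [hT, zaux_inner_mat] at h1
    rw [Matrix.mul_assoc, Matrix.zero_apply, ← h1]
    rfl

lemma zaux_iNonneg_countP (M : Matrix m m ℂ) (hM : M.IsHermitian) :
    iNonneg M = M.charpoly.roots.countP (fun z => 0 ≤ z.re) := by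
  rw [iNonneg, dif_pos hM, hM.roots_charpoly_eq_eigenvalues, Multiset.countP_map]
  simp [Finset.card, Finset.filter]

lemma zaux_iNonneg_diag {ι : Type*} [Fintype ι] (M : Matrix m m ℂ) (hM : M.IsHermitian) (d : ι → ℝ)
    (h : M.charpoly = ∏ i, (X - C (d i : ℂ))) :
    iNonneg M = (Finset.univ.filter fun i => 0 ≤ d i).card := by
  have : M.charpoly.roots = Multiset.map (fun i => (d i : ℂ)) Finset.univ.val := by
    rw [h, Polynomial.roots_prod]
    · simp
    · simp [Finset.prod_ne_zero_iff, Polynomial.X_sub_C_ne_zero]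
  rw [zaux_iNonneg_countP M hM, this, Multiset.countP_map]
  simp [Finset.card, Finset.filter]


end ZdiMatrix

section ZdiBlock

lemma zaux_matRe_block {m : ℕ} (nsz : Fin m → ℕ)
    (Aj : ∀ j : Fin m, Matrix (Fin (nsz j)) (Fin (nsz j)) ℂ) (c : ℂ) :
    matRe (c • Matrix.blockDiagonal' Aj) = Matrix.blockDiagonal' (fun j => matRe (c • Aj j)) := by
  simp only [matRe]
  rw [← Matrix.blockDiagonal'_smul, Matrix.blockDiagonal'_conjTranspose,
    ← Matrix.blockDiagonal'_add, ← Matrix.blockDiagonal'_smul]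
  rfl

lemma zaux_block_charpoly {m : ℕ} (nsz : Fin m → ℕ)
    (M : ∀ j : Fin m, Matrix (Fin (nsz j)) (Fin (nsz j)) ℂ) (hM : ∀ j, (M j).IsHermitian) :
    (Matrix.blockDiagonal' M).charpoly =
      ∏ i : (Σ j, Fin (nsz j)), (X - C (((hM i.1).eigenvalues i.2 : ℝ) : ℂ)) := by
  have h1 : M = fun j => ((hM j).eigenvectorUnitary : Matrix _ _ ℂ) *
      (Matrix.diagonal (fun i => (((hM j).eigenvalues i : ℝ) : ℂ)) *
      star ((hM j).eigenvectorUnitary : Matrix _ _ ℂ)) := by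
    funext j
    conv_lhs => rw [(hM j).spectral_theorem, Unitary.conjStarAlgAut_apply]
    rw [Matrix.mul_assoc]
    rfl
  have h2 : Matrix.blockDiagonal' M =
      Matrix.blockDiagonal' (fun j => ((hM j).eigenvectorUnitary : Matrix _ _ ℂ)) *
      Matrix.blockDiagonal' (fun j =>
        Matrix.diagonal (fun i => (((hM j).eigenvalues i : ℝ) : ℂ)) *
      star ((hM j).eigenvectorUnitary : Matrix _ _ ℂ)) := by
    rw [← Matrix.blockDiagonal'_mul, ← h1]
  rw [h2, Matrix.charpoly_mul_comm, ← Matrix.blockDiagonal'_mul]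
  simp only [Matrix.mul_assoc, Unitary.coe_star_mul_self, Matrix.mul_one]
  rw [Matrix.blockDiagonal'_diagonal, Matrix.charpoly_diagonal]

lemma zaux_iNonneg_block {m : ℕ} (nsz : Fin m → ℕ)
    (M : ∀ j : Fin m, Matrix (Fin (nsz j)) (Fin (nsz j)) ℂ) (hM : ∀ j, (M j).IsHermitian) :
    iNonneg (Matrix.blockDiagonal' M) = ∑ j, iNonneg (M j) := by
  have hB : (Matrix.blockDiagonal' M).IsHermitian := by
    rw [Matrix.IsHermitian, Matrix.blockDiagonal'_conjTranspose]
    congr 1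
    funext j
    exact hM j
  have hS : ∀ j, iNonneg (M j) =
      (Finset.univ.filter fun i => 0 ≤ (hM j).eigenvalues i).card := by
    intro j
    rw [iNonneg, dif_pos (hM j)]
  have hC := zaux_block_charpoly nsz M hM
  generalize hd : (fun j => (hM j).eigenvalues) = d at *
  have hd' : ∀ j, (hM j).eigenvalues = d j := fun j => congrFun hd j
  simp only [hd'] at hS hC
  rw [zaux_iNonneg_diag _ hB (fun i : (Σ j, Fin (nsz j)) => d i.1 i.2) hC]
  simp only [hS]
  simp only [Finset.card_filter]
  rw [Fintype.sum_sigma]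

lemma zaux_block_ge {m : ℕ} (nsz : Fin m → ℕ)
    (Aj : ∀ j : Fin m, Matrix (Fin (nsz j)) (Fin (nsz j)) ℂ) :
    (∑ j, zdi (Aj j)) ≤ zdi (Matrix.blockDiagonal' Aj) := by
  choose V hV1 hV2 using fun j => zaux_zdi_mem (Aj j)
  have h := zaux_le_zdi (Matrix.blockDiagonal' Aj) (Matrix.blockDiagonal' V) ?_ ?_
  · simpa using h
  · rw [Matrix.blockDiagonal'_conjTranspose, ← Matrix.blockDiagonal'_mul]
    simp only [hV1]
    exact Matrix.blockDiagonal'_one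
  · rw [Matrix.blockDiagonal'_conjTranspose, ← Matrix.blockDiagonal'_mul,
      ← Matrix.blockDiagonal'_mul]
    simp only [hV2]
    exact Matrix.blockDiagonal'_zero

lemma zaux_block_iff {m : ℕ} (nsz : Fin m → ℕ)
    (Aj : ∀ j : Fin m, Matrix (Fin (nsz j)) (Fin (nsz j)) ℂ) :
    zdi (Matrix.blockDiagonal' Aj) = ∑ j, zdi (Aj j) ↔
      ∃ θ₀ : ℝ, ∀ j, zdi (Aj j) =
        iNonneg (matRe (Complex.exp (-(θ₀ : ℂ) * Complex.I) • Aj j)) := by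
  have key : ∀ c : ℂ, iNonneg (matRe (c • Matrix.blockDiagonal' Aj)) =
      ∑ j, iNonneg (matRe (c • Aj j)) := by
    intro c
    rw [zaux_matRe_block, zaux_iNonneg_block _ _ (fun j => zaux_matRe_herm _)]
  constructor
  · intro h
    obtain ⟨θ, hθ⟩ := zaux_exists (Matrix.blockDiagonal' Aj)
    refine ⟨θ, ?_⟩
    rw [h, key] at hθ
    have := (Finset.sum_eq_sum_iff_of_le (fun j _ => zaux_zdi_le (Aj j) _)).1 hθ
    exact fun j => this j (Finset.mem_univ _)
  · rintro ⟨θ, hθ⟩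
    refine le_antisymm ?_ (zaux_block_ge nsz Aj)
    refine (zaux_zdi_le _ (Complex.exp (-(θ : ℂ) * Complex.I))).trans ?_
    rw [key]
    exact (Finset.sum_congr rfl fun j _ => (hθ j).symm).le

lemma zaux_reindex_le {m n : Type*} [Fintype m] [Fintype n]
    (A : Matrix m m ℂ) (e : n ≃ m) : zdi A ≤ zdi (A.submatrix e e) := by
  obtain ⟨V, h1, h2⟩ := zaux_zdi_mem A
  have h := zaux_le_zdi (A.submatrix e e) (V.submatrix e id) ?_ ?_
  · simpa using h
  · rw [Matrix.conjTranspose_submatrix, Matrix.submatrix_mul_equiv, h1]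
    simp
  · rw [Matrix.conjTranspose_submatrix, Matrix.submatrix_mul_equiv, Matrix.submatrix_mul_equiv, h2]
    simp

lemma zaux_reindex {m n : Type*} [Fintype m] [Fintype n]
    (A : Matrix m m ℂ) (e : n ≃ m) : zdi (A.submatrix e e) = zdi A := by
  refine le_antisymm ?_ (zaux_reindex_le A e)
  have h := zaux_reindex_le (A.submatrix e e) e.symm
  simpa using h

lemma zaux_copies (k l : ℕ) (A₁ : Matrix (Fin k) (Fin k) ℂ) :
    zdi (Matrix.blockDiagonal fun _ : Fin l => A₁) = l * zdi A₁ := by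
  have h1 : zdi (Matrix.blockDiagonal fun _ : Fin l => A₁) =
      zdi (Matrix.blockDiagonal' fun _ : Fin l => A₁) := by
    rw [← Matrix.blockDiagonal'_submatrix_eq_blockDiagonal]
    exact zaux_reindex _ ((Equiv.prodComm _ _).trans (Equiv.sigmaEquivProd _ _).symm)
  obtain ⟨θ, hθ⟩ := zaux_exists A₁
  rw [h1, (zaux_block_iff (fun _ : Fin l => k) (fun _ => A₁)).2 ⟨θ, fun _ => hθ⟩]
  simp

lemma zaux_matRe_from (k l : ℕ) (A₁ : Matrix (Fin k) (Fin k) ℂ) (c : ℂ) :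
    matRe (c • Matrix.fromBlocks A₁ 0 0 (0 : Matrix (Fin l) (Fin l) ℂ)) =
      Matrix.fromBlocks (matRe (c • A₁)) 0 0 0 := by
  simp only [matRe]
  simp [Matrix.fromBlocks_smul, Matrix.fromBlocks_conjTranspose, Matrix.fromBlocks_add]

lemma zaux_iNonneg_from (k l : ℕ) (M : Matrix (Fin k) (Fin k) ℂ) (hM : M.IsHermitian) :
    iNonneg (Matrix.fromBlocks M 0 0 (0 : Matrix (Fin l) (Fin l) ℂ)) = iNonneg M + l := by
  have hB : (Matrix.fromBlocks M 0 0 (0 : Matrix (Fin l) (Fin l) ℂ)).IsHermitian := by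
    rw [Matrix.IsHermitian, Matrix.fromBlocks_conjTranspose, hM.eq]
    simp
  have h0 : (0 : Matrix (Fin l) (Fin l) ℂ).charpoly = X ^ l := by
    simp
  rw [zaux_iNonneg_countP _ hB, zaux_iNonneg_countP _ hM, Matrix.charpoly_fromBlocks_zero₁₂, h0,
    Polynomial.roots_mul (mul_ne_zero (Matrix.charpoly_monic M).ne_zero (pow_ne_zero _ X_ne_zero)),
    Multiset.countP_add, Polynomial.roots_pow, Polynomial.roots_X, Multiset.nsmul_singleton]
  congr 1
  rw [Multiset.countP_eq_card.2]
  · simp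
  · intro a ha
    rw [Multiset.eq_of_mem_replicate ha]
    simp

lemma zaux_from (k l : ℕ) (A₁ : Matrix (Fin k) (Fin k) ℂ) :
    zdi (Matrix.fromBlocks A₁ 0 0 (0 : Matrix (Fin l) (Fin l) ℂ)) = zdi A₁ + l := by
  refine le_antisymm ?_ ?_
  · obtain ⟨θ, hθ⟩ := zaux_exists A₁
    refine (zaux_zdi_le _ (Complex.exp (-(θ : ℂ) * Complex.I))).trans ?_
    rw [zaux_matRe_from, zaux_iNonneg_from _ _ _ (zaux_matRe_herm _), ← hθ]
  · obtain ⟨V, h1, h2⟩ := zaux_zdi_mem A₁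
    have h := zaux_le_zdi (Matrix.fromBlocks A₁ 0 0 (0 : Matrix (Fin l) (Fin l) ℂ))
      (Matrix.fromBlocks V 0 0 (1 : Matrix (Fin l) (Fin l) ℂ)) ?_ ?_
    · simpa using h
    · simp [Matrix.fromBlocks_conjTranspose, Matrix.fromBlocks_multiply, h1]
    · simp [Matrix.fromBlocks_conjTranspose, Matrix.fromBlocks_multiply, h2]

end ZdiBlock

/-- Corollary 2.8. -/
theorem zdi_blockDiagonal' {m : ℕ} (nsz : Fin m → ℕ)
    (Aj : ∀ j : Fin m, Matrix (Fin (nsz j)) (Fin (nsz j)) ℂ) :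
    (∑ j, zdi (Aj j)) ≤ zdi (Matrix.blockDiagonal' Aj) ∧
    (zdi (Matrix.blockDiagonal' Aj) = ∑ j, zdi (Aj j) ↔
      ∃ θ₀ : ℝ, ∀ j, zdi (Aj j) =
        iNonneg (matRe (Complex.exp (-(θ₀ : ℂ) * Complex.I) • Aj j))) ∧
    (∀ (k l : ℕ) (A₁ : Matrix (Fin k) (Fin k) ℂ),
      zdi (Matrix.blockDiagonal fun _ : Fin l => A₁) = l * zdi A₁) ∧
    (∀ (k l : ℕ) (A₁ : Matrix (Fin k) (Fin k) ℂ),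
      zdi (Matrix.fromBlocks A₁ 0 0 (0 : Matrix (Fin l) (Fin l) ℂ)) = zdi A₁ + l) := by
  exact ⟨zaux_block_ge nsz Aj, zaux_block_iff nsz Aj, zaux_copies, zaux_from⟩
end

section
/- If A is an n-by-n complex matrix with d(A) > ⌊2n/3⌋, then 0 is a reducing eigenvalue of A with multiplicity at least 3d(A) − 2n, i.e., dim(ker A ∩ ker A*) ≥ 3d(A) − 2n, and A is unitarily similar to a block-diagonal matrix B ⊕ 0_{3d(A)−2n}, where B is of size 3(n − d(A)) and d(B) = 2(n − d(A)). Moreover, the bound ⌊2n/3⌋ is sharp: for every n ≥ 1 there exists an n-by-n matrix A with d(A) = ⌊2n/3⌋ such that ker A ∩ ker A* = {0}. -/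
open Matrix Polynomial

theorem aux_card_le {m ι : Type*} [Fintype m] [DecidableEq m] [Fintype ι] [DecidableEq ι]
    (V : Matrix m ι ℂ) (h : Vᴴ * V = 1) : Fintype.card ι ≤ Fintype.card m := by
  have h1 : (Vᴴ * V).rank ≤ V.rank := Matrix.rank_mul_le_right _ _
  rw [h, Matrix.rank_one] at h1
  exact h1.trans (Matrix.rank_le_card_height V)

theorem aux_bdd {m : Type*} [Fintype m] [DecidableEq m] (A : Matrix m m ℂ) :
    BddAbove {k : ℕ | ∃ V : Matrix m (Fin k) ℂ, Vᴴ * V = 1 ∧ Vᴴ * A * V = 0} := by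
  refine ⟨Fintype.card m, ?_⟩
  rintro k ⟨V, h, -⟩
  simpa using aux_card_le V h

theorem aux_exists {m : Type*} [Fintype m] [DecidableEq m] (A : Matrix m m ℂ) :
    ∃ V : Matrix m (Fin (zdi A)) ℂ, Vᴴ * V = 1 ∧ Vᴴ * A * V = 0 := by
  have : zdi A ∈ {k : ℕ | ∃ V : Matrix m (Fin k) ℂ, Vᴴ * V = 1 ∧ Vᴴ * A * V = 0} :=
    Nat.sSup_mem ⟨0, 0, Subsingleton.elim _ _, Subsingleton.elim _ _⟩ (aux_bdd A)
  exact this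

theorem aux_le_zdi {m ι : Type*} [Fintype m] [DecidableEq m] [Fintype ι] [DecidableEq ι]
    (A : Matrix m m ℂ)
    (V : Matrix m ι ℂ) (h : Vᴴ * V = 1) (h' : Vᴴ * A * V = 0) : Fintype.card ι ≤ zdi A := by
  refine le_csSup (aux_bdd A) ?_
  let e := Fintype.equivFin ι
  refine ⟨V.submatrix id e.symm, ?_, ?_⟩
  · have : (V.submatrix id e.symm)ᴴ * V.submatrix id e.symm = (Vᴴ * V).submatrix e.symm e.symm := by
      ext i j; simp [Matrix.mul_apply]
    rw [this, h]; simp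
  · have : (V.submatrix id e.symm)ᴴ * A * V.submatrix id e.symm
        = (Vᴴ * A * V).submatrix e.symm e.symm := by
      ext i j; simp [Matrix.mul_apply]
    rw [this, h']; simp

theorem aux_orth {m : Type*} [Fintype m] [DecidableEq m] (T : Submodule ℂ (m → ℂ)) :
    ∃ q : Fin (Module.finrank ℂ T) → EuclideanSpace ℂ m, Orthonormal ℂ q ∧
      ∀ j, (q j).ofLp ∈ T := by
  let L := (WithLp.linearEquiv 2 ℂ (m → ℂ))
  let T' : Submodule ℂ (EuclideanSpace ℂ m) := T.comap L.toLinearMap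
  have hd : Module.finrank ℂ T' = Module.finrank ℂ T := by
    have : T' = T.map L.symm.toLinearMap := by
      ext x
      simp [T']
    rw [this]
    exact LinearEquiv.finrank_map_eq _ _
  let b := (stdOrthonormalBasis ℂ T').reindex (finCongr hd)
  refine ⟨fun j => (b j : EuclideanSpace ℂ m), ?_, ?_⟩
  · exact b.orthonormal.comp_linearIsometry T'.subtypeₗᵢ
  · intro j
    exact (b j).2

theorem aux_gram {m ι : Type*} [Fintype m] [DecidableEq m] [Fintype ι] [DecidableEq ι]
    (q : ι → EuclideanSpace ℂ m) (hq : Orthonormal ℂ q) :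
    (Matrix.of fun i j => q j i)ᴴ * (Matrix.of fun i j => q j i : Matrix m ι ℂ) = 1 := by
  ext i j
  have := (orthonormal_iff_ite.mp hq) i j
  rw [Matrix.one_apply, ← this]
  simp [Matrix.mul_apply, PiLp.inner_apply, mul_comm]

theorem aux_finrank_le {m : Type*} [Fintype m] [DecidableEq m] (A : Matrix m m ℂ)
    (T : Submodule ℂ (m → ℂ)) (h : ∀ x ∈ T, ∀ y ∈ T, star x ⬝ᵥ A *ᵥ y = 0) :
    Module.finrank ℂ T ≤ zdi A := by
  obtain ⟨q, hq, hT⟩ := aux_orth T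
  have := aux_le_zdi A _ (aux_gram q hq) ?_
  · simpa using this
  · ext i j
    have := h _ (hT i) _ (hT j)
    rw [Matrix.mul_assoc]
    simpa [Matrix.mul_apply, dotProduct, Matrix.mulVec] using this

theorem aux_ker {n : ℕ} (A : Matrix (Fin n) (Fin n) ℂ) :
    3 * zdi A - 2 * n ≤
        Module.finrank ℂ ↥(LinearMap.ker A.mulVecLin ⊓ LinearMap.ker Aᴴ.mulVecLin) := by
  obtain ⟨V, hV, hA⟩ := aux_exists A
  have hn : zdi A ≤ n := by simpa using aux_card_le V hV
  have hA' : Vᴴ * (Aᴴ * V) = 0 := by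
    have := congrArg Matrix.conjTranspose hA
    simpa [Matrix.mul_assoc] using this
  have hA1 : Vᴴ * (A * V) = 0 := by rw [← Matrix.mul_assoc, hA]
  have key : ∀ M : Matrix (Fin n) (Fin (zdi A)) ℂ, Vᴴ * M = 0 →
      2 * zdi A ≤ n + Module.finrank ℂ (LinearMap.ker M.mulVecLin) := by
    intro M hM
    have h1 := LinearMap.finrank_range_add_finrank_ker M.mulVecLin
    have h2 := LinearMap.finrank_range_add_finrank_ker Vᴴ.mulVecLin
    have h3 : LinearMap.range M.mulVecLin ≤ LinearMap.ker Vᴴ.mulVecLin := by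
      rintro _ ⟨x, rfl⟩
      simp [Matrix.mulVec_mulVec, hM]
    have h4 := Submodule.finrank_mono h3
    have h5 : LinearMap.range Vᴴ.mulVecLin = ⊤ := by
      rw [LinearMap.range_eq_top]
      intro x
      exact ⟨V *ᵥ x, by simp [Matrix.mulVec_mulVec, hV]⟩
    rw [h5] at h2
    simp at h1 h2
    omega
  have k1 := key _ hA1
  have k2 := key _ hA'
  have k3 := Submodule.finrank_sup_add_finrank_inf_eq
    (LinearMap.ker (A * V).mulVecLin) (LinearMap.ker (Aᴴ * V).mulVecLin)
  have k4 := Submodule.finrank_le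
    (LinearMap.ker (A * V).mulVecLin ⊔ LinearMap.ker (Aᴴ * V).mulVecLin)
  have hinj : Function.Injective V.mulVecLin := by
    intro x y hxy
    have := congrArg (fun z => Vᴴ *ᵥ z) hxy
    simpa [Matrix.mulVec_mulVec, hV] using this
  have k5 : (LinearMap.ker (A * V).mulVecLin ⊓ LinearMap.ker (Aᴴ * V).mulVecLin).map V.mulVecLin
      ≤ LinearMap.ker A.mulVecLin ⊓ LinearMap.ker Aᴴ.mulVecLin := by
    rintro _ ⟨x, ⟨h1, h2⟩, rfl⟩
    simp at h1 h2 ⊢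
    exact ⟨h1, h2⟩
  have k6 := Submodule.finrank_mono k5
  rw [← (Submodule.equivMapOfInjective _ hinj _).finrank_eq] at k6
  simp at k4
  omega

theorem aux_main {n : ℕ} (A : Matrix (Fin n) (Fin n) ℂ) (hlt : 2 * n / 3 < zdi A) :
      ∃ B : Matrix (Fin (3 * (n - zdi A))) (Fin (3 * (n - zdi A))) ℂ,
        zdi B = 2 * (n - zdi A) ∧
        UnitSimG A (Matrix.fromBlocks B 0 0
          (0 : Matrix (Fin (3 * zdi A - 2 * n)) (Fin (3 * zdi A - 2 * n)) ℂ)) := by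
  obtain ⟨V, hV, hA⟩ := aux_exists A
  have hn : zdi A ≤ n := by simpa using aux_card_le V hV
  have hk := aux_ker A
  generalize hd : zdi A = d at *
  obtain ⟨q, hq, hT⟩ := aux_orth (LinearMap.ker A.mulVecLin ⊓ LinearMap.ker Aᴴ.mulVecLin)
  have hcard : Module.finrank ℂ (EuclideanSpace ℂ (Fin n)) =
      Fintype.card (Fin (3 * (n - d)) ⊕ Fin (3 * d - 2 * n)) := by
    simp; omega
  obtain ⟨b, hb⟩ := Orthonormal.exists_orthonormalBasis_extension_of_card_eq (𝕜 := ℂ) hcard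
    (v := Sum.elim (fun _ => 0) (fun j => q (Fin.castLE hk j))) (s := Set.range Sum.inr) (by
      have : Function.Injective (fun x : Set.range (Sum.inr : _ → Fin (3 * (n - d)) ⊕ Fin (3 * d - 2 * n)) =>
          Fin.castLE hk (Classical.choose x.2)) := by
        intro x y hxy
        have h1 := Fin.castLE_injective hk hxy
        ext1
        rw [← Classical.choose_spec x.2, ← Classical.choose_spec y.2, h1]
      refine Eq.mp (congrArg (Orthonormal ℂ) ?_) (hq.comp _ this)
      symm
      funext x
      conv_lhs => rw [Set.domRestrict_apply, ← Classical.choose_spec x.2]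
      rfl)
  have hbr : ∀ j, b (Sum.inr j) = q (Fin.castLE hk j) := fun j => hb _ ⟨j, rfl⟩
  let U : Matrix (Fin n) (Fin (3 * (n - d)) ⊕ Fin (3 * d - 2 * n)) ℂ := Matrix.of fun i j => b j i
  have hU : Uᴴ * U = 1 := aux_gram _ b.orthonormal
  have hUc : ∀ j, U *ᵥ (Pi.single (Sum.inr j) 1) ∈
      LinearMap.ker A.mulVecLin ⊓ LinearMap.ker Aᴴ.mulVecLin := by
    intro j
    have := hT (Fin.castLE hk j)
    rw [← hbr] at this
    convert this using 1
    ext i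
    simp [U]
  have hz1 : ∀ i j, (A * U) i (Sum.inr j) = 0 := by
    intro i j
    have := congrFun (hUc j).1 i
    rw [Matrix.mulVecLin_apply, Matrix.mulVec_mulVec] at this
    simpa using this
  have hz2 : ∀ i j, (Aᴴ * U) i (Sum.inr j) = 0 := by
    intro i j
    have := congrFun (hUc j).2 i
    rw [Matrix.mulVecLin_apply, Matrix.mulVec_mulVec] at this
    simpa using this
  let B := (Uᴴ * A * U).toBlocks₁₁
  have hB : Uᴴ * A * U = Matrix.fromBlocks B 0 0 0 := by
    have r : ∀ i j, (Uᴴ * A * U) i (Sum.inr j) = 0 := by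
      intro i j
      rw [Matrix.mul_assoc, Matrix.mul_apply]
      simp [hz1]
    have l : ∀ i j, (Uᴴ * A * U) (Sum.inr j) i = 0 := by
      intro i j
      have : Uᴴ * A = (Aᴴ * U)ᴴ := by simp
      rw [this, Matrix.mul_apply]
      simp [hz2]
    rw [← Matrix.fromBlocks_toBlocks (Uᴴ * A * U)]
    congr 1
    · ext i j; exact r _ _
    · ext i j; exact l _ _
    · ext i j; exact r _ _
  refine ⟨B, le_antisymm ?_ ?_, ?_⟩
  · obtain ⟨X, hX, hX'⟩ := aux_exists B
    have := aux_le_zdi A (U * Matrix.fromBlocks X 0 0 (1 : Matrix (Fin (3 * d - 2 * n)) (Fin (3 * d - 2 * n)) ℂ)) ?_ ?_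
    · simp at this
      omega
    · rw [Matrix.conjTranspose_mul, Matrix.mul_assoc, ← Matrix.mul_assoc Uᴴ, hU]
      simp [Matrix.fromBlocks_conjTranspose, Matrix.fromBlocks_multiply, hX]
    · rw [Matrix.conjTranspose_mul, Matrix.mul_assoc, Matrix.mul_assoc, ← Matrix.mul_assoc A,
        ← Matrix.mul_assoc Uᴴ, ← Matrix.mul_assoc Uᴴ, hB]
      simp [Matrix.fromBlocks_conjTranspose, Matrix.fromBlocks_multiply, ← Matrix.mul_assoc, hX']
  · let W := U.toCols₁
    have hBW : B = Wᴴ * A * W := by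
      ext i j; simp [B, W, Matrix.mul_apply, Matrix.toBlocks₁₁, Matrix.toCols₁]
    have hW : Wᴴ * W = 1 := by
      ext i j
      have := congrFun (congrFun hU (Sum.inl i)) (Sum.inl j)
      simpa [W, Matrix.mul_apply, Matrix.toCols₁, Matrix.one_apply] using this
    have hinj : ∀ {k : ℕ} (V : Matrix (Fin n) (Fin k) ℂ), Vᴴ * V = 1 →
        LinearMap.ker V.mulVecLin = ⊥ := by
      intro k V hV
      rw [LinearMap.ker_eq_bot]
      intro x y hxy
      have := congrArg (fun z => Vᴴ *ᵥ z) hxy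
      simpa [Matrix.mulVec_mulVec, hV] using this
    have hrk : ∀ {k : ℕ} (V : Matrix (Fin n) (Fin k) ℂ), Vᴴ * V = 1 →
        Module.finrank ℂ (LinearMap.range V.mulVecLin) = k := by
      intro k V hV
      have := LinearMap.finrank_range_add_finrank_ker V.mulVecLin
      rw [hinj V hV] at this
      simpa using this
    let T := (LinearMap.range V.mulVecLin).comap W.mulVecLin
    have h1 : Module.finrank ℂ T ≤ zdi B := by
      apply aux_finrank_le
      rintro x ⟨u, hu⟩ y ⟨v, hv⟩
      simp only [Matrix.mulVecLin_apply] at hu hv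
      have e1 : Vᴴ *ᵥ (A *ᵥ (V *ᵥ v)) = 0 := by
        rw [Matrix.mulVec_mulVec, Matrix.mulVec_mulVec, hA]; simp
      have e2 : ∀ z, star x ⬝ᵥ Wᴴ *ᵥ z = star u ⬝ᵥ Vᴴ *ᵥ z := by
        intro z
        rw [Matrix.dotProduct_mulVec, Matrix.dotProduct_mulVec, ← Matrix.star_mulVec,
          ← Matrix.star_mulVec, hu]
      rw [hBW, ← Matrix.mulVec_mulVec, ← Matrix.mulVec_mulVec, e2, ← hv, e1]
      simp
    have h2 : Module.finrank ℂ T = Module.finrank ℂ (T.map W.mulVecLin) :=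
      (Submodule.equivMapOfInjective _ (LinearMap.ker_eq_bot.mp (hinj W hW)) _).finrank_eq
    rw [Submodule.map_comap_eq] at h2
    have h3 := Submodule.finrank_sup_add_finrank_inf_eq
      (LinearMap.range W.mulVecLin) (LinearMap.range V.mulVecLin)
    have h4 := Submodule.finrank_le (LinearMap.range W.mulVecLin ⊔ LinearMap.range V.mulVecLin)
    rw [hrk W hW, hrk V hV] at h3
    simp at h4
    omega
  · let e : Fin n ≃ Fin (3 * (n - d)) ⊕ Fin (3 * d - 2 * n) :=
      Fintype.equivOfCardEq (by simpa using hcard)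
    refine ⟨e, U.submatrix e.symm id, ?_, ?_⟩
    · rw [Matrix.mem_unitaryGroup_iff', ← hU, Matrix.star_eq_conjTranspose,
        Matrix.conjTranspose_submatrix, Matrix.submatrix_mul_equiv]
      simp
    · rw [← hB, Matrix.reindex_apply, Matrix.conjTranspose_submatrix, Matrix.submatrix_mul_equiv,
        Matrix.submatrix_mul_equiv]
      simp

theorem aux_upper {m : ℕ} (B : Matrix (Fin m) (Fin m) ℂ)
    (h : LinearMap.ker B.mulVecLin ⊓ LinearMap.ker Bᴴ.mulVecLin = ⊥) : zdi B ≤ 2 * m / 3 := by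
  have := aux_ker B
  rw [h] at this
  simp at this
  omega

theorem aux_sharp (m : ℕ) (hm : 1 ≤ m) : ∃ B : Matrix (Fin m) (Fin m) ℂ, zdi B = 2 * m / 3 ∧
      LinearMap.ker B.mulVecLin ⊓ LinearMap.ker Bᴴ.mulVecLin = ⊥ := by
  suffices H : ∃ B : Matrix (Fin m) (Fin m) ℂ, 2 * m / 3 ≤ zdi B ∧
      LinearMap.ker B.mulVecLin ⊓ LinearMap.ker Bᴴ.mulVecLin = ⊥ by
    obtain ⟨B, h1, h2⟩ := H
    exact ⟨B, le_antisymm (aux_upper B h2) h1, h2⟩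
  rcases eq_or_lt_of_le hm with rfl | hm
  · exact ⟨1, by simp, by simp⟩
  obtain ⟨c, hc⟩ : ∃ c, c = m - 2 * m / 3 := ⟨_, rfl⟩
  let B : Matrix (Fin m) (Fin m) ℂ := Matrix.of fun i j => if (i : ℕ) = j + c then 1 else 0
  let f : Fin (2 * m / 3) → Fin m := fun j =>
    if h : (j : ℕ) < c then ⟨j, by omega⟩ else ⟨j + c, by omega⟩
  have hf : ∀ j, (f j : ℕ) = if (j : ℕ) < c then (j : ℕ) else j + c := by
    intro j; simp only [f]; split_ifs <;> rfl
  have hfi : Function.Injective f := by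
    intro i j hij
    have := congrArg Fin.val hij
    rw [hf, hf] at this
    ext
    split_ifs at this <;> omega
  refine ⟨B, ?_, ?_⟩
  · have := aux_le_zdi B ((1 : Matrix (Fin m) (Fin m) ℂ).submatrix id f) ?_ ?_
    · simpa using this
    · ext i j
      simp [Matrix.mul_apply, Matrix.one_apply, hfi.eq_iff]
    · ext i j
      have : (f i : ℕ) ≠ f j + c := by
        have := (f i).2
        rw [hf] at this
        rw [hf, hf]
        split_ifs at * <;> omega
      have e : ((1 : Matrix (Fin m) (Fin m) ℂ).submatrix id f)ᴴ * B *
          (1 : Matrix (Fin m) (Fin m) ℂ).submatrix id f = B.submatrix f f := by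
        rw [Matrix.conjTranspose_submatrix, Matrix.conjTranspose_one]
        ext i j
        simp only [Matrix.mul_apply, Matrix.submatrix_apply, Matrix.one_apply, id, ite_mul, one_mul,
          zero_mul, mul_ite, mul_one, mul_zero, Finset.sum_ite_eq, Finset.sum_ite_eq',
          Finset.mem_univ, if_true]
      rw [e]
      simp [B, this]
  · rw [eq_bot_iff]
    rintro x ⟨h1, h2⟩
    simp only [Submodule.mem_bot]
    ext i
    simp only [SetLike.mem_coe, LinearMap.mem_ker, Matrix.mulVecLin_apply] at h1 h2
    by_cases hi : (i : ℕ) + c < m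
    · have := congrFun h1 ⟨i + c, hi⟩
      simpa [Matrix.mulVec, dotProduct, B, Fin.val_inj] using this
    · have := congrFun h2 ⟨i - c, by omega⟩
      have h3 : (i : ℕ) - c + c = i := by omega
      simpa [Matrix.mulVec, dotProduct, B, Fin.val_inj, h3] using this

/-- Theorem 3.2. -/
theorem zdi_gt_two_thirds_reducing {n : ℕ} (A : Matrix (Fin n) (Fin n) ℂ) :
    (2 * n / 3 < zdi A →
      3 * zdi A - 2 * n ≤
        Module.finrank ℂ ↥(LinearMap.ker A.mulVecLin ⊓ LinearMap.ker Aᴴ.mulVecLin) ∧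
      ∃ B : Matrix (Fin (3 * (n - zdi A))) (Fin (3 * (n - zdi A))) ℂ,
        zdi B = 2 * (n - zdi A) ∧
        UnitSimG A (Matrix.fromBlocks B 0 0
          (0 : Matrix (Fin (3 * zdi A - 2 * n)) (Fin (3 * zdi A - 2 * n)) ℂ))) ∧
    (∀ m : ℕ, 1 ≤ m → ∃ B : Matrix (Fin m) (Fin m) ℂ, zdi B = 2 * m / 3 ∧
      LinearMap.ker B.mulVecLin ⊓ LinearMap.ker Bᴴ.mulVecLin = ⊥) := by
  exact ⟨fun h => ⟨aux_ker A, aux_main A h⟩, aux_sharp⟩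
end

section
/- Let A be an n-by-n normal complex matrix with k = dim ker A. Then k ≤ d(A) ≤ ⌊(n + k)/2⌋. Moreover, let λ₁, …, λ_{n−k} be the nonzero eigenvalues of A (counted with multiplicity) arranged so that arg λ₁ ≤ ⋯ ≤ arg λ_{n−k}, where arg takes values in [0, 2π). Then: (a) d(A) = k if and only if 0 is not in the convex hull of {λ₁, …, λ_{n−k}}; and (b) d(A) = ⌊(n + k)/2⌋ if and only if, when n − k is even, arg λ_{j+(n−k)/2} − arg λ_j = π holds for all 1 ≤ j ≤ (n−k)/2, and, when n − k is odd, arg λ_{j+(n−k−1)/2} − arg λ_j ≤ π for all 1 ≤ j ≤ (n−k+1)/2 and arg λ_{j−(n−k+1)/2} − arg λ_j ≤ −π for all (n−k+3)/2 ≤ j ≤ n−k. -/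
open Matrix Polynomial

/-- Existence of an `r`-dimensional isotropic orthonormal family, indexed by `κ`. -/
def IsoP {ι : Type*} [Fintype ι] (A : Matrix ι ι ℂ) (κ : Type*) [DecidableEq κ] : Prop :=
  ∃ V : Matrix ι κ ℂ, Vᴴ * V = 1 ∧ Vᴴ * A * V = 0

theorem IsoP.reindex {ι κ κ' : Type*} [Fintype ι] [DecidableEq κ] [DecidableEq κ']
    {A : Matrix ι ι ℂ} (e : κ' ≃ κ) (h : IsoP A κ) : IsoP A κ' := by
  obtain ⟨V, h1, h2⟩ := h
  refine ⟨V.submatrix id e, ?_, ?_⟩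
  · have : (V.submatrix id e)ᴴ * V.submatrix id e = (Vᴴ * V).submatrix e e := by
      ext i j; simp [Matrix.mul_apply]
    rw [this, h1]; simp
  · have : (V.submatrix id e)ᴴ * A * V.submatrix id e = (Vᴴ * A * V).submatrix e e := by
      ext i j; simp [Matrix.mul_apply]
    rw [this, h2]; simp

theorem IsoP.conj {ι ι' κ : Type*} [Fintype ι] [Fintype ι'] [DecidableEq ι] [DecidableEq ι']
    [DecidableEq κ]
    {A : Matrix ι ι ℂ} {D : Matrix ι' ι' ℂ} (U : Matrix ι ι' ℂ) (hU : Uᴴ * U = 1)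
    (hA : Uᴴ * A * U = D) (h : IsoP D κ) : IsoP A κ := by
  obtain ⟨V, h1, h2⟩ := h
  refine ⟨U * V, ?_, ?_⟩
  · calc (U * V)ᴴ * (U * V) = Vᴴ * (Uᴴ * U) * V := by
          rw [conjTranspose_mul]; simp only [Matrix.mul_assoc]
      _ = 1 := by rw [hU, Matrix.mul_one, h1]
  · calc (U * V)ᴴ * A * (U * V) = Vᴴ * (Uᴴ * A * U) * V := by
          rw [conjTranspose_mul]; simp only [Matrix.mul_assoc]
      _ = 0 := by rw [hA, h2]

theorem IsoP.sum {ι ι' κ κ' : Type*} [Fintype ι] [Fintype ι'] [DecidableEq ι] [DecidableEq ι']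
    [DecidableEq κ] [DecidableEq κ'] {f : ι → ℂ} {g : ι' → ℂ}
    (h : IsoP (diagonal f) κ) (h' : IsoP (diagonal g) κ') :
    IsoP (diagonal (Sum.elim f g)) (κ ⊕ κ') := by
  obtain ⟨V, h1, h2⟩ := h
  obtain ⟨W, h3, h4⟩ := h'
  refine ⟨fromBlocks V 0 0 W, ?_, ?_⟩
  · rw [fromBlocks_conjTranspose, fromBlocks_multiply, ← fromBlocks_one]
    simp [h1, h3]
  · rw [← fromBlocks_diagonal, fromBlocks_conjTranspose, fromBlocks_multiply, fromBlocks_multiply,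
      ← fromBlocks_zero]
    simp [h2, h4]

theorem isoP_zero (k : ℕ) : IsoP (diagonal (fun _ : Fin k => (0 : ℂ))) (Fin k) :=
  ⟨1, by simp, by simp⟩

theorem quad_diag {ι : Type*} [Fintype ι] [DecidableEq ι] (d x : ι → ℂ) :
    star x ⬝ᵥ (diagonal d) *ᵥ x = ∑ i, d i * (Complex.normSq (x i) : ℂ) := by
  simp only [dotProduct, mulVec_diagonal, Pi.star_apply]
  refine Finset.sum_congr rfl fun i _ => ?_
  rw [Complex.normSq_eq_conj_mul_self]; simp only [RCLike.star_def]; ring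

/-- Upper bound: an isotropic subspace meets an open half-plane eigenspace trivially. -/
theorem IsoP.card_le {ι κ : Type*} [Fintype ι] [DecidableEq ι] [Fintype κ] [DecidableEq κ]
    {d : ι → ℂ} (h : IsoP (diagonal d) κ) (c : ℂ) :
    Fintype.card κ ≤ (Finset.univ.filter fun i => 0 ≤ (c * d i).re).card := by
  obtain ⟨V, h1, h2⟩ := h
  by_contra! hlt
  let S := {i // 0 ≤ (c * d i).re}
  have hS : Fintype.card S < Fintype.card κ := by
    simpa [S, Fintype.card_subtype] using hlt
  obtain ⟨v, hv, hv0⟩ : ∃ v ∈ LinearMap.ker (V.submatrix (Subtype.val : S → ι) id).mulVecLin,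
      v ≠ 0 := by
    apply Submodule.exists_mem_ne_zero_of_ne_bot
    apply LinearMap.ker_ne_bot_of_finrank_lt
    rw [Module.finrank_fintype_fun_eq_card, Module.finrank_fintype_fun_eq_card]
    exact hS
  have hx0 : ∀ i, 0 ≤ (c * d i).re → (V *ᵥ v) i = 0 := by
    intro i hi
    have := congrFun (LinearMap.mem_ker.mp hv) ⟨i, hi⟩
    simpa [mulVec, dotProduct] using this
  set x := V *ᵥ v with hx
  have e1 : star x ⬝ᵥ (diagonal d) *ᵥ x = 0 := by
    have : star x ⬝ᵥ (diagonal d) *ᵥ x = star v ⬝ᵥ (Vᴴ * diagonal d * V) *ᵥ v := by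
      rw [hx, star_mulVec, dotProduct_mulVec, vecMul_vecMul, dotProduct_mulVec, vecMul_vecMul,
        ← dotProduct_mulVec]
    rw [this, h2]; simp
  rw [quad_diag] at e1
  have e2 : ∑ i, (c * d i).re * Complex.normSq (x i) = 0 := by
    have := congrArg (fun z => (c * z).re) e1
    simp only [Finset.mul_sum, mul_zero, Complex.zero_re, Complex.re_sum, ← mul_assoc,
      Complex.re_mul_ofReal] at this
    exact this
  have e3 : ∀ i, (c * d i).re * Complex.normSq (x i) ≤ 0 := by
    intro i
    by_cases hi : 0 ≤ (c * d i).re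
    · rw [hx0 i hi]; simp
    · exact mul_nonpos_of_nonpos_of_nonneg (by linarith) (Complex.normSq_nonneg _)
  have e4 := (Finset.sum_eq_zero_iff_of_nonpos (fun i _ => e3 i)).mp e2
  have hx00 : x = 0 := by
    ext i
    by_cases hi : 0 ≤ (c * d i).re
    · exact hx0 i hi
    · have := e4 i (Finset.mem_univ _)
      rcases mul_eq_zero.mp this with h | h
      · exact absurd h.ge hi
      · simpa using h
  apply hv0
  calc v = (Vᴴ * V) *ᵥ v := by rw [h1, one_mulVec]
    _ = 0 := by rw [← mulVec_mulVec, ← hx, hx00, mulVec_zero]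

theorem zdi_eq {ι : Type*} [Fintype ι] (A : Matrix ι ι ℂ) :
    zdi A = sSup {r : ℕ | IsoP A (Fin r)} := rfl

theorem bddAbove_iso {ι : Type*} [Fintype ι] (A : Matrix ι ι ℂ) :
    BddAbove {r : ℕ | IsoP A (Fin r)} := by
  classical
  refine ⟨Fintype.card ι, ?_⟩
  rintro r ⟨V, h1, -⟩
  by_contra! hlt
  obtain ⟨v, hv, hv0⟩ : ∃ v ∈ LinearMap.ker V.mulVecLin, v ≠ 0 := by
    apply Submodule.exists_mem_ne_zero_of_ne_bot
    apply LinearMap.ker_ne_bot_of_finrank_lt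
    simpa using hlt
  apply hv0
  have hv' : V *ᵥ v = 0 := hv
  calc v = (Vᴴ * V) *ᵥ v := by rw [h1, one_mulVec]
    _ = 0 := by rw [← mulVec_mulVec, hv', mulVec_zero]

theorem le_zdi {ι : Type*} [Fintype ι] {A : Matrix ι ι ℂ} {r : ℕ} (h : IsoP A (Fin r)) :
    r ≤ zdi A := le_csSup (bddAbove_iso A) h

theorem zdi_mem {ι : Type*} [Fintype ι] (A : Matrix ι ι ℂ) : IsoP A (Fin (zdi A)) :=
  Nat.sSup_mem (s := {r : ℕ | IsoP A (Fin r)})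
    ⟨0, 0, by ext i; exact i.elim0, by ext i; exact i.elim0⟩ (bddAbove_iso A)

theorem iso_of_indep {ι : Type*} [Fintype ι] [DecidableEq ι] {r : ℕ} (A : Matrix ι ι ℂ)
    (w : Fin r → ι → ℂ) (hw : LinearIndependent ℂ w)
    (hA : ∀ a b, star (w a) ⬝ᵥ A *ᵥ (w b) = 0) : IsoP A (Fin r) := by
  let w' : Fin r → EuclideanSpace ℂ ι := fun a => WithLp.toLp 2 (w a)
  have hw' : LinearIndependent ℂ w' :=
    hw.map' (WithLp.linearEquiv 2 ℂ (ι → ℂ)).symm.toLinearMap (LinearEquiv.ker _)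
  let W := Submodule.span ℂ (Set.range w')
  have hfr : Module.finrank ℂ W = r := by
    rw [finrank_span_eq_card hw']; simp
  let b := (stdOrthonormalBasis ℂ W).reindex (finCongr hfr)
  have hiso : ∀ x ∈ W, ∀ y ∈ W, star (x.ofLp) ⬝ᵥ A *ᵥ (y.ofLp) = 0 := by
    intro x hx y hy
    induction hx, hy using Submodule.span_induction₂ with
    | mem_mem x y hx hy =>
      obtain ⟨a, rfl⟩ := hx
      obtain ⟨b, rfl⟩ := hy
      exact hA a b
    | zero_left => simp
    | zero_right => simp
    | add_left x y z _ _ _ h1 h2 => simp [add_dotProduct, h1, h2]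
    | add_right x y z _ _ _ h1 h2 => simp [mulVec_add, h1, h2]
    | smul_left c x y _ _ h => simp [smul_dotProduct, h]
    | smul_right c x y _ _ h => simp [mulVec_smul, h]
  refine ⟨Matrix.of fun i a => (b a : EuclideanSpace ℂ ι) i, ?_, ?_⟩
  · ext a c
    have := (orthonormal_iff_ite.mp b.orthonormal) a c
    rw [Submodule.coe_inner, EuclideanSpace.inner_eq_star_dotProduct] at this
    rw [Matrix.one_apply, ← this]
    simp [Matrix.mul_apply, dotProduct, mul_comm]
  · ext a c
    have := hiso _ (b a).2 _ (b c).2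
    rw [dotProduct_mulVec] at this
    rw [Matrix.zero_apply, ← this]
    simp [Matrix.mul_apply, dotProduct, vecMul]

theorem equiv_of_map_eq {α β γ : Type*} [Fintype α] [Fintype β] (f : α → γ) (g : β → γ)
    (h : (Finset.univ : Finset α).val.map f = (Finset.univ : Finset β).val.map g) :
    ∃ e : β ≃ α, ∀ i, f (e i) = g i := by
  classical
  have hc : ∀ c, Fintype.card {b // g b = c} = Fintype.card {a // f a = c} := by
    intro c
    have := congrArg (Multiset.count c) h
    rw [Multiset.count_map, Multiset.count_map, ← Finset.filter_val, ← Finset.filter_val] at this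
    rw [Fintype.card_subtype, Fintype.card_subtype]
    simp only [eq_comm (b := c)]
    exact this.symm
  exact ⟨Equiv.ofFiberEquiv fun c => Fintype.equivOfCardEq (hc c),
    fun i => Equiv.ofFiberEquiv_map _ i⟩

theorem normal_diag {n : ℕ} (A : Matrix (Fin n) (Fin n) ℂ) (h : A * Aᴴ = Aᴴ * A) :
    ∃ (U : Matrix (Fin n) (Fin n) ℂ) (μ : Fin n → ℂ), Uᴴ * U = 1 ∧ U * Uᴴ = 1 ∧
      A * U = U * diagonal μ := by
  classical
  let H : Matrix (Fin n) (Fin n) ℂ := A + Aᴴ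
  let K : Matrix (Fin n) (Fin n) ℂ := Complex.I • (A - Aᴴ)
  have hH : H.IsHermitian := by simp [H, Matrix.IsHermitian, add_comm]
  have hK : K.IsHermitian := by
    simp only [K, Matrix.IsHermitian, conjTranspose_smul, conjTranspose_sub,
      conjTranspose_conjTranspose]
    rw [← neg_sub A, smul_neg, ← neg_smul]; simp
  have hHK : Commute H K := by
    apply Commute.smul_right
    change (A + Aᴴ) * (A - Aᴴ) = (A - Aᴴ) * (A + Aᴴ)
    simp only [Matrix.add_mul, Matrix.mul_add, Matrix.sub_mul, Matrix.mul_sub, h]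
    abel
  let TH := Matrix.toEuclideanLin H
  let TK := Matrix.toEuclideanLin K
  have sH : TH.IsSymmetric := Matrix.isSymmetric_toEuclideanLin_iff.mpr hH
  have sK : TK.IsSymmetric := Matrix.isSymmetric_toEuclideanLin_iff.mpr hK
  have hc : Commute TH TK := by
    apply LinearMap.ext
    intro x
    apply (WithLp.ofLp_injective 2)
    have := congrArg (fun M => M *ᵥ x.ofLp) hHK.eq
    simpa [TH, TK, Matrix.toLpLin_apply] using this
  have hint := LinearMap.IsSymmetric.directSum_isInternal_of_commute sH sK hc
  have hort := LinearMap.IsSymmetric.orthogonalFamily_eigenspace_inf_eigenspace sH sK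
  set V := (fun i : ℂ × ℂ => Module.End.eigenspace TH i.2 ⊓ Module.End.eigenspace TK i.1) with hV
  have : Fintype {i // V i ≠ ⊥} := hint.submodule_iSupIndep.fintypeNeBotOfFiniteDimensional
  have hint' := (DirectSum.isInternal_ne_bot_iff (A := V)).mpr hint
  have hort' := hort.comp (γ := {i // V i ≠ ⊥}) Subtype.val_injective
  have hn : Module.finrank ℂ (EuclideanSpace ℂ (Fin n)) = n := by simp
  let b := hint'.subordinateOrthonormalBasis hn hort'
  have hb : ∀ a, ∃ m : ℂ, A *ᵥ (b a).ofLp = m • (b a).ofLp := by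
    intro a
    have := hint'.subordinateOrthonormalBasis_subordinate hn a hort'
    obtain ⟨h1, h2⟩ := this
    rw [SetLike.mem_coe, Module.End.mem_eigenspace_iff] at h1 h2
    generalize (hint'.subordinateOrthonormalBasisIndex hn a hort').1 = p at h1 h2
    have h1' : H *ᵥ (b a).ofLp = p.2 • (b a).ofLp := congrArg WithLp.ofLp h1
    have h2' : K *ᵥ (b a).ofLp = p.1 • (b a).ofLp := congrArg WithLp.ofLp h2
    refine ⟨2⁻¹ * (p.2 - Complex.I * p.1), ?_⟩
    have hA : A = (2⁻¹ : ℂ) • (H - Complex.I • K) := by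
      ext i j
      simp only [H, K, Matrix.smul_apply, Matrix.sub_apply, Matrix.add_apply, smul_eq_mul,
        ← mul_assoc, Complex.I_mul_I]
      ring
    conv_lhs => rw [hA]
    rw [smul_mulVec, sub_mulVec, smul_mulVec, h1', h2']
    ext i
    simp only [Pi.smul_apply, Pi.sub_apply, smul_eq_mul]
    ring
  choose μ hμ using hb
  have hU : (Matrix.of fun i a => (b a) i)ᴴ * (Matrix.of fun i a => (b a) i)
      = (1 : Matrix (Fin n) (Fin n) ℂ) := by
    ext a c
    have := (orthonormal_iff_ite.mp b.orthonormal) a c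
    rw [EuclideanSpace.inner_eq_star_dotProduct] at this
    rw [Matrix.one_apply, ← this]
    simp [Matrix.mul_apply, dotProduct, mul_comm]
  refine ⟨Matrix.of fun i a => (b a) i, μ, hU, mul_eq_one_comm.mp hU, ?_⟩
  ext i a
  have := congrFun (hμ a) i
  simp only [mulVec, dotProduct, Pi.smul_apply, smul_eq_mul] at this
  rw [mul_diagonal, Matrix.mul_apply]
  simp only [of_apply]
  rw [this, mul_comm]

/-- Diagonalization in the prescribed order. -/
theorem normal_diag' {n k : ℕ} (A : Matrix (Fin n) (Fin n) ℂ) (h : A * Aᴴ = Aᴴ * A)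
    (l : Fin (n - k) → ℂ) (hchar : A.charpoly = X ^ k * ∏ i, (X - C (l i))) :
    n = k + (n - k) ∧
    ∃ U : Matrix (Fin n) (Fin k ⊕ Fin (n - k)) ℂ, Uᴴ * U = 1 ∧ U * Uᴴ = 1 ∧
      Uᴴ * A * U = diagonal (Sum.elim (fun _ => 0) l) := by
  obtain ⟨U, μ, h1, h2, h3⟩ := normal_diag A h
  have hD : A = U * diagonal μ * Uᴴ := by
    rw [← h3, Matrix.mul_assoc, h2, Matrix.mul_one]
  have hc : A.charpoly = (diagonal μ).charpoly := by
    rw [hD, Matrix.charpoly_mul_comm, ← Matrix.mul_assoc, h1, Matrix.one_mul]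
  rw [Matrix.charpoly_diagonal] at hc
  have hr : (Finset.univ : Finset (Fin n)).val.map μ
      = (Finset.univ : Finset (Fin k ⊕ Fin (n - k))).val.map (Sum.elim (fun _ => (0:ℂ)) l) := by
    have e1 : (∏ i, (X - C (μ i))) = ∏ i, (X - C (Sum.elim (fun _ : Fin k => (0:ℂ)) l i)) := by
      rw [← hc, hchar, Fintype.prod_sum_type]; simp
    have := congrArg Polynomial.roots e1
    rw [Polynomial.roots_prod _ _ (Finset.prod_ne_zero_iff.mpr fun i _ => X_sub_C_ne_zero _),
      Polynomial.roots_prod _ _ (Finset.prod_ne_zero_iff.mpr fun i _ => X_sub_C_ne_zero _)] at this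
    simpa [Multiset.bind_singleton] using this
  have hcard : n = k + (n - k) := by
    have := congrArg Multiset.card hr
    simpa using this
  refine ⟨hcard, ?_⟩
  obtain ⟨e, he⟩ : ∃ e : Fin k ⊕ Fin (n - k) ≃ Fin n, ∀ i, μ (e i) = Sum.elim (fun _ => (0:ℂ)) l i := by
    exact equiv_of_map_eq _ _ hr
  refine ⟨U.submatrix id e, ?_, ?_, ?_⟩
  · have : (U.submatrix id e)ᴴ * U.submatrix id e = (Uᴴ * U).submatrix e e := by
      ext i j; simp [Matrix.mul_apply]
    rw [this, h1]; simp
  · rw [conjTranspose_submatrix, submatrix_mul_equiv, h2]; simp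
  · have : (U.submatrix id e)ᴴ * A * U.submatrix id e = (Uᴴ * A * U).submatrix e e := by
      ext i j; simp [Matrix.mul_apply]
    rw [this, Matrix.mul_assoc, h3, ← Matrix.mul_assoc, h1, Matrix.one_mul,
      submatrix_diagonal_equiv]
    congr 1; ext i; exact he i

theorem IsoP.diag_equiv {ι ι' κ : Type*} [Fintype ι] [Fintype ι'] [DecidableEq ι] [DecidableEq ι']
    [DecidableEq κ] {l : ι → ℂ} (e : ι' ≃ ι) (h : IsoP (diagonal (fun i => l (e i))) κ) :
    IsoP (diagonal l) κ := by
  refine h.conj ((1 : Matrix ι ι ℂ).submatrix id e) ?_ ?_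
  · ext i j
    simp [Matrix.mul_apply, Matrix.one_apply]
  · have : (((1 : Matrix ι ι ℂ).submatrix id e)ᴴ * diagonal l * (1 : Matrix ι ι ℂ).submatrix id e)
      = ((1 : Matrix ι ι ℂ)ᴴ * diagonal l * 1).submatrix e e := by
      ext i j; simp only [Matrix.mul_apply, submatrix_apply, conjTranspose_submatrix, id]; rfl
    rw [this]; simp [submatrix_diagonal_equiv, Function.comp_def]

theorem isoP_closed {ι κ : Type*} [Fintype ι] [DecidableEq ι] [Finite κ] [DecidableEq κ] :
    IsClosed {l : ι → ℂ | IsoP (diagonal l) κ} := by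
  obtain ⟨K, hKdef⟩ : ∃ K : Set (Matrix ι κ ℂ), K = {V | Vᴴ * V = 1} := ⟨_, rfl⟩
  have hKc : IsClosed K := by
    rw [hKdef]
    apply isClosed_eq _ continuous_const
    apply Continuous.matrix_mul
    · exact Continuous.matrix_conjTranspose continuous_id
    · exact continuous_id
  have hK : IsCompact K := by
    have hB : IsCompact (Set.pi Set.univ fun _ : ι => Set.pi Set.univ fun _ : κ =>
        Metric.closedBall (0 : ℂ) 1) :=
      isCompact_univ_pi fun _ => isCompact_univ_pi fun _ => isCompact_closedBall _ _
    refine hB.of_isClosed_subset hKc ?_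
    intro (V : Matrix ι κ ℂ) hV i _ a _
    have h1 : (Vᴴ * V) a a = 1 := by
      have hV' : Vᴴ * V = 1 := by rw [hKdef] at hV; exact hV
      rw [hV']; simp
    have h2 : ∑ i, Complex.normSq (V i a) = 1 := by
      have h3 : ((∑ i, Complex.normSq (V i a) : ℝ) : ℂ) = 1 := by
        rw [← h1, Matrix.mul_apply]
        push_cast
        refine Finset.sum_congr rfl fun i _ => ?_
        rw [Complex.normSq_eq_conj_mul_self]; simp
      exact_mod_cast h3
    have h4 : Complex.normSq (V i a) ≤ 1 := by
      rw [← h2]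
      exact Finset.single_le_sum (f := fun i => Complex.normSq (V i a))
        (fun i _ => Complex.normSq_nonneg _) (Finset.mem_univ i)
    rw [Complex.normSq_eq_norm_sq] at h4
    rw [mem_closedBall_zero_iff]
    nlinarith [norm_nonneg (V i a)]
  have : CompactSpace K := isCompact_iff_compactSpace.mp hK
  have hp : Continuous fun p : K × (ι → ℂ) => p.1.1 :=
    continuous_subtype_val.comp continuous_fst
  have hc : IsClosed {p : K × (ι → ℂ) |
      (p.1.1)ᴴ * diagonal p.2 * p.1.1 = 0} := by
    apply isClosed_eq _ continuous_const
    apply Continuous.matrix_mul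
    · apply Continuous.matrix_mul
      · exact Continuous.matrix_conjTranspose hp
      · exact Continuous.matrix_diagonal continuous_snd
    · exact hp
  have := isClosedMap_snd_of_compactSpace _ hc
  convert this using 1
  ext l
  constructor
  · rintro ⟨V, h1, h2⟩
    exact ⟨(⟨V, by rw [hKdef]; exact h1⟩, l), h2, rfl⟩
  · rintro ⟨⟨V, l'⟩, h2, rfl⟩
    have hV := V.2
    simp only [hKdef] at hV
    exact ⟨V.1, hV, h2⟩

theorem nodal_sign {h : ℕ} (t : Fin (2 * h + 1) → ℝ) (ht : StrictMono t) (i : Fin (2 * h + 1)) :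
    ∃ q : ℝ, 0 < q ∧ ∏ j ∈ Finset.univ.erase i, (t i - t j) = (-1) ^ (i : ℕ) * q := by
  refine ⟨∏ j ∈ Finset.univ.erase i, |t i - t j|, ?_, ?_⟩
  · apply Finset.prod_pos
    intro j hj
    rw [abs_pos, sub_ne_zero]
    exact fun hh => Finset.ne_of_mem_erase hj (ht.injective hh).symm
  · have h1 : ∀ j ∈ Finset.univ.erase i, t i - t j = (if i < j then -1 else 1) * |t i - t j| := by
      intro j hj
      split_ifs with hij
      · rw [abs_of_neg (by linarith [ht hij])]; ring
      · rw [abs_of_nonneg (by linarith [ht.monotone (not_lt.mp hij)])]; ring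
    rw [Finset.prod_congr rfl h1, Finset.prod_mul_distrib]
    congr 1
    rw [Finset.prod_ite, Finset.prod_const, Finset.prod_const_one, mul_one]
    have h2 : (Finset.univ.erase i).filter (fun j => i < j) = Finset.Ioi i := by
      ext j
      simp only [Finset.mem_filter, Finset.mem_erase, Finset.mem_univ, and_true, Finset.mem_Ioi,
        and_iff_right_iff_imp]
      exact fun hh => hh.ne'
    rw [h2, Fin.card_Ioi]
    have hi := i.2
    rcases Nat.even_or_odd (i : ℕ) with he | ho
    · rw [he.neg_one_pow, Even.neg_one_pow]
      rw [Nat.even_iff] at *; omega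
    · rw [ho.neg_one_pow, Odd.neg_one_pow]
      rw [Nat.odd_iff] at *; omega

theorem odd_lagrange {h : ℕ} (t : Fin (2 * h + 1) → ℝ) (ht : StrictMono t)
    (ρ : Fin (2 * h + 1) → ℝ) (hρ : ∀ i, 0 < ρ i) (c : ℂ) :
    IsoP (diagonal fun i : Fin (2 * h + 1) => c * ((-1) ^ (i : ℕ) * (ρ i : ℂ) * (1 + t i * Complex.I))) (Fin h) := by
  choose q hq0 hq using fun i => nodal_sign t ht i
  let s : Fin (2 * h + 1) → ℝ := fun i => Real.sqrt (ρ i * q i)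
  have hs0 : ∀ i, 0 < s i := fun i => Real.sqrt_pos.mpr (mul_pos (hρ i) (hq0 i))
  have hs : ∀ i, s i * s i = ρ i * q i :=
    fun i => Real.mul_self_sqrt (mul_pos (hρ i) (hq0 i)).le
  apply iso_of_indep _ (fun (a : Fin h) i => (((t i) ^ (a : ℕ) / s i : ℝ) : ℂ))
  · rw [Fintype.linearIndependent_iff]
    intro g hg
    have hle : h ≤ 2 * h + 1 := by omega
    have := Matrix.eq_zero_of_forall_index_sum_pow_mul_eq_zero
      (f := fun j : Fin h => (t (Fin.castLE hle j) : ℂ)) (v := g) ?_ ?_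
    · intro i; rw [this]; rfl
    · intro x y hxy
      have := ht.injective (Complex.ofReal_injective hxy)
      exact Fin.castLE_injective hle this
    · intro j
      have h1 := congrFun hg (Fin.castLE hle j)
      simp only [Finset.sum_apply, Pi.smul_apply, smul_eq_mul, Pi.zero_apply] at h1
      have hsj : (s (Fin.castLE hle j) : ℂ) ≠ 0 := by exact_mod_cast (hs0 _).ne'
      have h2 : (∑ i : Fin h, (t (Fin.castLE hle j) : ℂ) ^ (i : ℕ) * g i)
          = s (Fin.castLE hle j) * ∑ x, g x * ((t (Fin.castLE hle j) ^ (x:ℕ) /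
            s (Fin.castLE hle j) : ℝ) : ℂ) := by
        rw [Finset.mul_sum]
        refine Finset.sum_congr rfl fun i _ => ?_
        push_cast
        field_simp
      rw [h2, h1, mul_zero]
  · intro a b
    let P : ℂ[X] := X ^ ((a : ℕ) + b) * (1 + C Complex.I * X)
    have hdeg : P.natDegree ≤ (a : ℕ) + b + 1 := by
      simp only [P]; compute_degree
    have hinj : Set.InjOn (fun i => (t i : ℂ)) (Finset.univ : Finset (Fin (2 * h + 1))) := by
      intro x _ y _ hxy
      exact ht.injective (Complex.ofReal_injective hxy)
    have hlt : P.natDegree < 2 * h := by omega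
    have hP : P.degree < (Finset.univ : Finset (Fin (2 * h + 1))).card := by
      apply lt_of_le_of_lt Polynomial.degree_le_natDegree
      rw [Finset.card_univ, Fintype.card_fin]
      exact_mod_cast (by omega)
    have key := Lagrange.coeff_eq_sum hinj hP
    rw [Polynomial.coeff_eq_zero_of_natDegree_lt (by simpa using hlt)] at key
    have : star (fun i => (((t i) ^ (a : ℕ) / s i : ℝ) : ℂ)) ⬝ᵥ
        (diagonal fun i : Fin (2 * h + 1) => c * ((-1) ^ (i : ℕ) * (ρ i : ℂ) * (1 + t i * Complex.I))) *ᵥ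
        (fun i => (((t i) ^ (b : ℕ) / s i : ℝ) : ℂ)) = c * 0 := by
      rw [key, Finset.mul_sum]
      simp only [dotProduct, mulVec_diagonal, Pi.star_apply]
      refine Finset.sum_congr rfl fun i _ => ?_
      have e1 : ∏ j ∈ Finset.univ.erase i, ((t i : ℂ) - t j) = (-1) ^ (i : ℕ) * q i := by
        have := congrArg (fun r : ℝ => (r : ℂ)) (hq i)
        push_cast at this
        exact this
      have e2 : (s i : ℂ) * s i = ρ i * q i := by exact_mod_cast hs i
      have e3 : (s i : ℂ) ≠ 0 := by exact_mod_cast (hs0 i).ne'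
      have e4 : (q i : ℂ) ≠ 0 := by exact_mod_cast (hq0 i).ne'
      rw [e1]
      have e5 : Polynomial.eval (t i : ℂ) P = (t i : ℂ) ^ ((a : ℕ) + b) * (1 + t i * Complex.I) := by
        simp only [P, eval_mul, eval_pow, eval_X, eval_add, eval_one, eval_C]; ring
      rw [e5, RCLike.star_def, Complex.conj_ofReal]
      push_cast
      have e6 : ((-1 : ℂ) ^ (i : ℕ)) * (-1) ^ (i : ℕ) = 1 := by
        rw [← mul_pow]; simp
      have e7 : ((-1 : ℂ) ^ (i : ℕ)) ≠ 0 := pow_ne_zero _ (by norm_num)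
      rw [pow_add]
      field_simp
      rw [pow_two (s i : ℂ), e2]
      rw [← pow_mul, mul_comm (i : ℕ) 2, pow_mul]
      simp
      try ring
    rw [this, mul_zero]

theorem odd_strict {h : ℕ} (a : Fin (2 * h + 1) → ℝ) (ha : StrictMono a)
    (hlast : a (Fin.last _) < a 0 + Real.pi)
    (ρ : Fin (2 * h + 1) → ℝ) (hρ : ∀ i, 0 < ρ i) :
    IsoP (diagonal fun i : Fin (2 * h + 1) => (-1) ^ (i : ℕ) * (ρ i : ℂ) * Complex.exp (a i * Complex.I))
      (Fin h) := by
  set φ := (a 0 + a (Fin.last _)) / 2 with hφ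
  have hr : ∀ i, a i - φ ∈ Set.Ioo (-(Real.pi / 2)) (Real.pi / 2) := by
    intro i
    have h1 := ha.monotone (Fin.zero_le i)
    have h2 := ha.monotone (Fin.le_last i)
    constructor <;> rw [hφ] <;> linarith
  have hcos : ∀ i, 0 < Real.cos (a i - φ) := fun i => Real.cos_pos_of_mem_Ioo (hr i)
  have := odd_lagrange (fun i => Real.tan (a i - φ))
    (fun i j hij => Real.strictMonoOn_tan (hr i) (hr j) (by linarith [ha hij]))
    (fun i => ρ i * Real.cos (a i - φ)) (fun i => mul_pos (hρ i) (hcos i))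
    (Complex.exp (φ * Complex.I))
  convert this using 3 with i
  have e1 : Complex.exp (a i * Complex.I) = Complex.exp (φ * Complex.I) *
      (Complex.cos ((a i - φ : ℝ)) + Complex.sin ((a i - φ : ℝ)) * Complex.I) := by
    rw [← Complex.exp_mul_I, ← Complex.exp_add]
    push_cast; congr 1; ring
  have hc : Complex.cos ((a i - φ : ℝ)) ≠ 0 := by
    rw [← Complex.ofReal_cos]; exact_mod_cast (hcos i).ne'
  rw [e1, Complex.ofReal_tan, Complex.tan_eq_sin_div_cos, Complex.ofReal_mul, Complex.ofReal_cos]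
  field_simp

theorem odd_main {h : ℕ} (a : Fin (2 * h + 1) → ℝ) (ha : Monotone a)
    (hlast : a (Fin.last _) ≤ a 0 + Real.pi)
    (ρ : Fin (2 * h + 1) → ℝ) (hρ : ∀ i, 0 < ρ i) :
    IsoP (diagonal fun i : Fin (2 * h + 1) => (-1) ^ (i : ℕ) * (ρ i : ℂ) * Complex.exp (a i * Complex.I))
      (Fin h) := by
  let b : ℝ → Fin (2 * h + 1) → ℝ := fun δ i =>
    (1 - δ) * (a i - a 0) + δ * (i : ℕ) * (Real.pi / (2 * h + 1)) + a 0
  let f : ℝ → Fin (2 * h + 1) → ℂ := fun δ i =>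
    (-1) ^ (i : ℕ) * (ρ i : ℂ) * Complex.exp (b δ i * Complex.I)
  have hf : Continuous f := by fun_prop
  have hcl := (isoP_closed (ι := Fin (2 * h + 1)) (κ := Fin h)).preimage hf
  have hpos : 0 < Real.pi / (2 * h + 1) := by positivity
  have hsub : Set.Ioo (0 : ℝ) 1 ⊆ f ⁻¹' {l | IsoP (diagonal l) (Fin h)} := by
    rintro δ ⟨h0, h1⟩
    refine odd_strict (b δ) ?_ ?_ ρ hρ
    · intro i j hij
      have e1 : (1 - δ) * (a i - a 0) ≤ (1 - δ) * (a j - a 0) :=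
        mul_le_mul_of_nonneg_left (by linarith [ha hij.le]) (by linarith)
      have e2 : ((i : ℕ) : ℝ) < (j : ℕ) := by exact_mod_cast hij
      have e3 : δ * (i : ℕ) * (Real.pi / (2 * h + 1)) < δ * (j : ℕ) * (Real.pi / (2 * h + 1)) :=
        mul_lt_mul_of_pos_right (mul_lt_mul_of_pos_left e2 h0) hpos
      simp only [b]
      linarith
    · have e1 : (1 - δ) * (a (Fin.last _) - a 0) ≤ (1 - δ) * Real.pi :=
        mul_le_mul_of_nonneg_left (by linarith) (by linarith)
      have e2 : (2 * h : ℝ) * (Real.pi / (2 * h + 1)) < Real.pi := by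
        have : (2 * h + 1 : ℝ) * (Real.pi / (2 * h + 1)) = Real.pi := by field_simp
        linarith
      have e3 : δ * ((2 * h : ℝ) * (Real.pi / (2 * h + 1))) < δ * Real.pi :=
        mul_lt_mul_of_pos_left e2 h0
      simp only [b, Fin.val_last, Fin.val_zero]
      push_cast
      linarith
  have hz : (0 : ℝ) ∈ f ⁻¹' {l | IsoP (diagonal l) (Fin h)} := by
    have := closure_minimal hsub hcl
    rw [closure_Ioo (by norm_num)] at this
    exact this ⟨le_refl _, by norm_num⟩
  have : f 0 = fun i : Fin (2 * h + 1) => (-1) ^ (i : ℕ) * (ρ i : ℂ) * Complex.exp (a i * Complex.I) := by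
    ext i; simp [f, b]
  rw [← this]
  exact hz

theorem even_main {p : ℕ} (f g : Fin p → ℂ) (hf : ∀ i, f i ≠ 0) 
    (hfg : ∀ i, (‖g i‖ : ℂ) * f i + ‖f i‖ * g i = 0) :
    IsoP (diagonal (Sum.elim f g)) (Fin p) := by
  let α : Fin p → ℂ := fun i => (Real.sqrt (‖g i‖ / (‖f i‖ + ‖g i‖)) : ℝ)
  let β : Fin p → ℂ := fun i => (Real.sqrt (‖f i‖ / (‖f i‖ + ‖g i‖)) : ℝ)
  have hα : ∀ i, α i * α i = ‖g i‖ / (‖f i‖ + ‖g i‖) := by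
    intro i
    simp only [α]; rw [← Complex.ofReal_mul, Real.mul_self_sqrt (by positivity)]; push_cast; rfl
  have hβ : ∀ i, β i * β i = ‖f i‖ / (‖f i‖ + ‖g i‖) := by
    intro i
    simp only [β]; rw [← Complex.ofReal_mul, Real.mul_self_sqrt (by positivity)]; push_cast; rfl
  have hα' : (diagonal α)ᴴ = diagonal α := by
    rw [diagonal_conjTranspose]; congr 1; ext i; simp [α]
  have hβ' : (diagonal β)ᴴ = diagonal β := by
    rw [diagonal_conjTranspose]; congr 1; ext i; simp [β]
  have hne : ∀ i, (‖f i‖ + ‖g i‖ : ℂ) ≠ 0 := by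
    intro i
    have := norm_pos_iff.mpr (hf i)
    have : (‖f i‖ + ‖g i‖ : ℝ) ≠ 0 := by positivity
    exact_mod_cast this
  have hD : diagonal (Sum.elim f g) = fromBlocks (diagonal f) 0 0 (diagonal g) :=
    (fromBlocks_diagonal f g).symm
  refine ⟨fromRows (diagonal α) (diagonal β), ?_, ?_⟩
  · rw [conjTranspose_fromRows_eq_fromCols_conjTranspose, fromCols_mul_fromRows, hα', hβ',
      diagonal_mul_diagonal, diagonal_mul_diagonal, diagonal_add, ← diagonal_one]
    congr 1; ext i
    rw [hα, hβ, ← add_div, add_comm, div_self (hne i)]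
  · rw [Matrix.mul_assoc, hD, fromBlocks_mul_fromRows,
      conjTranspose_fromRows_eq_fromCols_conjTranspose, fromCols_mul_fromRows, hα', hβ']
    simp only [Matrix.zero_mul, add_zero, zero_add, diagonal_mul_diagonal, diagonal_add]
    rw [← diagonal_zero]
    congr 1; ext i
    have : α i * (f i * α i) + β i * (g i * β i) = (α i * α i) * f i + (β i * β i) * g i := by ring
    rw [this, hα, hβ]
    have h1 := hne i
    field_simp
    rw [hfg, mul_zero]

theorem arg2pi_nonneg (z : ℂ) : 0 ≤ arg2pi z := by
  unfold arg2pi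
  split_ifs with h
  · exact h
  · linarith [Complex.neg_pi_lt_arg z, Real.pi_pos]

theorem arg2pi_lt (z : ℂ) : arg2pi z < 2 * Real.pi := by
  unfold arg2pi
  split_ifs with h
  · linarith [Complex.arg_le_pi z, Real.pi_pos]
  · linarith

theorem arg2pi_spec (z : ℂ) : (‖z‖ : ℂ) * Complex.exp (arg2pi z * Complex.I) = z := by
  conv_rhs => rw [← Complex.norm_mul_exp_arg_mul_I z]
  unfold arg2pi
  split_ifs with h
  · rfl
  · push_cast
    rw [add_mul, Complex.exp_add, Complex.exp_two_pi_mul_I, mul_one]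

theorem re_rot (z : ℂ) (φ : ℝ) :
    (Complex.exp (-φ * Complex.I) * z).re = ‖z‖ * Real.cos (arg2pi z - φ) := by
  conv_lhs => rw [← arg2pi_spec z]
  have : Complex.exp (-φ * Complex.I) * (‖z‖ * Complex.exp (arg2pi z * Complex.I))
      = (‖z‖ : ℂ) * Complex.exp ((arg2pi z - φ : ℝ) * Complex.I) := by
    rw [mul_left_comm, ← Complex.exp_add]
    congr 2; push_cast; ring
  rw [this, Complex.re_ofReal_mul, Complex.exp_ofReal_mul_I_re]

section Main

variable {k m r : ℕ} {l : Fin m → ℂ}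

theorem count_le (h : IsoP (diagonal (Sum.elim (fun _ : Fin k => (0 : ℂ)) l)) (Fin r)) (c : ℂ) :
    r ≤ k + (Finset.univ.filter fun i => 0 ≤ (c * l i).re).card := by
  have := h.card_le c
  rw [Fintype.card_fin, Finset.card_filter, Fintype.sum_sum_type] at this
  rw [Finset.card_filter]
  simp only [Sum.elim_inl, Sum.elim_inr, mul_zero, Complex.zero_re, le_refl, if_true,
    Finset.sum_const, Finset.card_univ, Fintype.card_fin, smul_eq_mul, mul_one] at this
  convert this using 3
  split_ifs with hif
  · exact (if_pos hif).symm
  · exact (if_neg hif).symm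

theorem count_far (h : IsoP (diagonal (Sum.elim (fun _ : Fin k => (0 : ℂ)) l)) (Fin r))
    (hl0 : ∀ i, l i ≠ 0) (hsort : Monotone fun i => arg2pi (l i)) (a b : Fin m)
    (hab : Real.pi < arg2pi (l b) - arg2pi (l a)) : r ≤ k + ((b : ℕ) - a - 1) := by
  set φ := (arg2pi (l a) + arg2pi (l b)) / 2 with hφ
  refine (count_le h (Complex.exp (-φ * Complex.I))).trans ?_
  rw [← Fin.card_Ioo]
  gcongr
  intro i hi
  rw [Finset.mem_filter, re_rot] at hi
  have hi := hi.2
  have hn : 0 < ‖l i‖ := norm_pos_iff.mpr (hl0 i)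
  have hc : 0 ≤ Real.cos (arg2pi (l i) - φ) := by
    by_contra! hneg
    have := mul_neg_of_pos_of_neg hn hneg
    linarith
  have hb2 := arg2pi_lt (l b)
  have ha0 := arg2pi_nonneg (l a)
  have hi2 := arg2pi_lt (l i)
  have hi0 := arg2pi_nonneg (l i)
  rw [Finset.mem_Ioo]
  constructor
  · by_contra! hle
    have h1 : arg2pi (l i) ≤ arg2pi (l a) := hsort hle
    have : Real.cos (φ - arg2pi (l i)) < 0 :=
      Real.cos_neg_of_pi_div_two_lt_of_lt (by rw [hφ]; linarith) (by rw [hφ]; linarith)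
    rw [← Real.cos_neg, neg_sub] at this
    linarith
  · by_contra! hle
    have h1 : arg2pi (l b) ≤ arg2pi (l i) := hsort hle
    have : Real.cos (arg2pi (l i) - φ) < 0 :=
      Real.cos_neg_of_pi_div_two_lt_of_lt (by rw [hφ]; linarith) (by rw [hφ]; linarith)
    linarith

theorem count_near (h : IsoP (diagonal (Sum.elim (fun _ : Fin k => (0 : ℂ)) l)) (Fin r))
    (hl0 : ∀ i, l i ≠ 0) (hsort : Monotone fun i => arg2pi (l i)) (a b : Fin m)
    (hab : arg2pi (l b) - arg2pi (l a) < Real.pi) : r ≤ k + (m - ((b : ℕ) + 1 - a)) := by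
  set φ := (arg2pi (l a) + arg2pi (l b)) / 2 with hφ
  refine (count_le h (-Complex.exp (-φ * Complex.I))).trans ?_
  have hcard : (Finset.Icc a b)ᶜ.card = m - ((b : ℕ) + 1 - a) := by
    rw [Finset.card_compl, Fin.card_Icc, Fintype.card_fin]
  rw [← hcard]
  gcongr
  intro i hi
  rw [Finset.mem_filter, neg_mul, Complex.neg_re, re_rot] at hi
  have hi := hi.2
  have hn : 0 < ‖l i‖ := norm_pos_iff.mpr (hl0 i)
  rw [Finset.mem_compl, Finset.mem_Icc]
  rintro ⟨h1, h2⟩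
  have h1 : arg2pi (l a) ≤ arg2pi (l i) := hsort h1
  have h2 : arg2pi (l i) ≤ arg2pi (l b) := hsort h2
  have : 0 < Real.cos (arg2pi (l i) - φ) :=
    Real.cos_pos_of_mem_Ioo ⟨by rw [hφ]; linarith, by rw [hφ]; linarith⟩
  have := mul_pos hn this
  linarith

theorem count_half (h : IsoP (diagonal (Sum.elim (fun _ : Fin k => (0 : ℂ)) l)) (Fin r))
    (hl0 : ∀ i, l i ≠ 0) : r ≤ k + m / 2 := by
  obtain ⟨s, hs⟩ := Infinite.exists_notMem_finset
    (Finset.univ.image fun i => (l i).re / (l i).im)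
  have hs' : ∀ i, ((1 + s * Complex.I) * l i).re ≠ 0 := by
    intro i h0
    simp only [add_mul, one_mul, Complex.add_re, Complex.mul_re, Complex.mul_im, Complex.ofReal_re,
      Complex.ofReal_im, Complex.I_re, Complex.I_im] at h0
    by_cases him : (l i).im = 0
    · rw [him] at h0
      apply hl0 i
      apply Complex.ext
      · simpa using h0
      · simpa using him
    · apply hs
      rw [Finset.mem_image]
      refine ⟨i, Finset.mem_univ _, ?_⟩
      field_simp
      linarith
  have h1 := count_le h (1 + s * Complex.I)
  have h2 := count_le h (-(1 + s * Complex.I))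
  have h3 : (Finset.univ.filter fun i => 0 ≤ (-(1 + s * Complex.I) * l i).re).card +
      (Finset.univ.filter fun i => 0 ≤ ((1 + s * Complex.I) * l i).re).card = m := by
    have h4 : (Finset.univ.filter fun i => 0 ≤ (-(1 + s * Complex.I) * l i).re) =
        Finset.univ.filter fun i => ¬ 0 ≤ ((1 + s * Complex.I) * l i).re := by
      apply Finset.filter_congr
      intro i _
      rw [neg_mul, Complex.neg_re, not_le, Left.nonneg_neg_iff]
      exact ⟨fun hh => lt_of_le_of_ne hh (hs' i), le_of_lt⟩
    rw [h4, add_comm, Finset.card_filter_add_card_filter_not, Finset.card_univ, Fintype.card_fin]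
  omega

theorem hull_iso (h : (0 : ℂ) ∈ convexHull ℝ (Set.range l)) : IsoP (diagonal l) (Fin 1) := by
  rw [convexHull_range_eq_exists_affineCombination] at h
  obtain ⟨s, w, hw0, hw1, hw⟩ := h
  rw [Finset.affineCombination_eq_linear_combination _ _ _ hw1] at hw
  let x : Fin m → ℂ := fun i => if i ∈ s then (Real.sqrt (w i) : ℂ) else 0
  have hx : ∀ i, Complex.normSq (x i) = if i ∈ s then w i else 0 := by
    intro i
    simp only [x]
    split_ifs with hi
    · rw [Complex.normSq_ofReal, Real.mul_self_sqrt (hw0 i hi)]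
    · simp
  apply iso_of_indep _ (fun _ => x)
  · rw [linearIndependent_unique_iff]
    intro hx0
    have : ∑ i ∈ s, w i = 0 := by
      apply Finset.sum_eq_zero
      intro i hi
      have h1 := hx i
      have hx0' : x = 0 := hx0
      rw [hx0', if_pos hi] at h1
      simpa using h1.symm
    rw [this] at hw1
    exact zero_ne_one hw1
  · intro _ _
    rw [quad_diag, ← hw]
    simp only [hx]
    rw [← Finset.sum_subset (Finset.subset_univ s)]
    · refine Finset.sum_congr rfl fun i hi => ?_
      rw [if_pos hi, Complex.real_smul, mul_comm]
    · intro i _ hi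
      rw [if_neg hi]; simp

theorem hull_sep (h0 : (0 : ℂ) ∉ convexHull ℝ (Set.range l))
    (h : IsoP (diagonal (Sum.elim (fun _ : Fin k => (0 : ℂ)) l)) (Fin r)) : r ≤ k := by
  have hcl : IsClosed (convexHull ℝ (Set.range l)) :=
    ((Set.finite_range l).isCompact_convexHull ℝ).isClosed
  obtain ⟨f, u, hf, hu⟩ := geometric_hahn_banach_closed_point (convex_convexHull ℝ _) hcl h0
  rw [map_zero] at hu
  have hre : ∀ z : ℂ, ((f 1 - f Complex.I * Complex.I : ℂ) * z).re = f z := by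
    intro z
    have : z = z.re • (1 : ℂ) + z.im • Complex.I := by
      simp
    conv_rhs => rw [this, map_add, map_smul, map_smul]
    simp only [Complex.mul_re, Complex.sub_re, Complex.sub_im, Complex.mul_im, Complex.ofReal_re,
      Complex.ofReal_im, Complex.I_re, Complex.I_im, smul_eq_mul]
    ring
  have := count_le h (f 1 - f Complex.I * Complex.I : ℂ)
  rw [Finset.filter_false_of_mem] at this
  · simpa using this
  · intro i _
    rw [hre, not_le]
    exact (hf _ (subset_convexHull ℝ _ ⟨i, rfl⟩)).trans hu

end Main

theorem odd_suff {m h : ℕ} (hm : m = 2 * h + 1) (l : Fin m → ℂ) (hl0 : ∀ i, l i ≠ 0)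
    (h1 : ∀ (a b : Fin m), (b : ℕ) = a + h → arg2pi (l b) - arg2pi (l a) ≤ Real.pi)
    (h2 : ∀ (a b : Fin m), (b : ℕ) = a + (h + 1) → Real.pi ≤ arg2pi (l b) - arg2pi (l a)) :
    IsoP (diagonal l) (Fin h) := by
  subst hm
  let σ : Fin (2 * h + 1) → Fin (2 * h + 1) := fun i =>
    if hi : (i : ℕ) % 2 = 0 then ⟨i / 2, by omega⟩ else ⟨h + 1 + i / 2, by omega⟩
  have hσ0 : ∀ i : Fin (2 * h + 1), (i : ℕ) % 2 = 0 → (σ i : ℕ) = i / 2 := by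
    intro i hi; simp only [σ]; rw [dif_pos hi]
  have hσ1 : ∀ i : Fin (2 * h + 1), ¬ (i : ℕ) % 2 = 0 → (σ i : ℕ) = h + 1 + i / 2 := by
    intro i hi; simp only [σ]; rw [dif_neg hi]
  have hinj : Function.Injective σ := by
    intro i j hij
    have hv := congrArg Fin.val hij
    have hi2 := i.2
    have hj2 := j.2
    apply Fin.ext
    by_cases hi : (i : ℕ) % 2 = 0 <;> by_cases hj : (j : ℕ) % 2 = 0
    · rw [hσ0 i hi, hσ0 j hj] at hv; omega
    · rw [hσ0 i hi, hσ1 j hj] at hv; omega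
    · rw [hσ1 i hi, hσ0 j hj] at hv; omega
    · rw [hσ1 i hi, hσ1 j hj] at hv; omega
  let e := Equiv.ofBijective σ (Finite.injective_iff_bijective.mp hinj)
  apply IsoP.diag_equiv e
  let a : Fin (2 * h + 1) → ℝ := fun i =>
    if (i : ℕ) % 2 = 0 then arg2pi (l (σ i)) else arg2pi (l (σ i)) - Real.pi
  have ha0 : ∀ i : Fin (2 * h + 1), (i : ℕ) % 2 = 0 → a i = arg2pi (l (σ i)) := by
    intro i hi; simp only [a]; rw [if_pos hi]
  have ha1 : ∀ i : Fin (2 * h + 1), ¬ (i : ℕ) % 2 = 0 → a i = arg2pi (l (σ i)) - Real.pi := by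
    intro i hi; simp only [a]; rw [if_neg hi]
  have ha : Monotone a := by
    rw [Fin.monotone_iff_le_succ]
    intro i
    have hi2 := i.2
    by_cases hi : (i : ℕ) % 2 = 0
    · have hs : ¬ ((i.succ : Fin (2 * h + 1)) : ℕ) % 2 = 0 := by rw [Fin.val_succ]; omega
      have hc : ((i.castSucc : Fin (2 * h + 1)) : ℕ) % 2 = 0 := by rw [Fin.val_castSucc]; omega
      rw [ha0 _ hc, ha1 _ hs]
      have := h2 (σ i.castSucc) (σ i.succ) (by
        rw [hσ0 _ hc, hσ1 _ hs, Fin.val_castSucc, Fin.val_succ]; omega)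
      linarith
    · have hs : ((i.succ : Fin (2 * h + 1)) : ℕ) % 2 = 0 := by rw [Fin.val_succ]; omega
      have hc : ¬ ((i.castSucc : Fin (2 * h + 1)) : ℕ) % 2 = 0 := by rw [Fin.val_castSucc]; omega
      rw [ha1 _ hc, ha0 _ hs]
      have := h1 (σ i.succ) (σ i.castSucc) (by
        rw [hσ0 _ hs, hσ1 _ hc, Fin.val_castSucc, Fin.val_succ]; omega)
      linarith
  have hlast : a (Fin.last _) ≤ a 0 + Real.pi := by
    have hs : ((Fin.last (2 * h) : Fin (2 * h + 1)) : ℕ) % 2 = 0 := by rw [Fin.val_last]; omega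
    have hc : ((0 : Fin (2 * h + 1)) : ℕ) % 2 = 0 := by simp
    rw [ha0 _ hs, ha0 _ hc]
    have := h1 (σ 0) (σ (Fin.last _)) (by
      rw [hσ0 _ hs, hσ0 _ hc, Fin.val_last, Fin.val_zero]; omega)
    linarith
  have := odd_main a ha hlast (fun i => ‖l (σ i)‖) (fun i => norm_pos_iff.mpr (hl0 _))
  convert this using 3 with i
  change l (σ i) = _
  conv_lhs => rw [← arg2pi_spec (l (σ i))]
  by_cases hi : (i : ℕ) % 2 = 0
  · rw [ha0 i hi, (Nat.even_iff.mpr hi).neg_one_pow, one_mul]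
  · rw [ha1 i hi, (Nat.odd_iff.mpr (by omega)).neg_one_pow]
    push_cast
    rw [sub_mul, Complex.exp_sub, Complex.exp_pi_mul_I]
    ring

theorem even_suff {m p : ℕ} (hm : m = p + p) (l : Fin m → ℂ) (hl0 : ∀ i, l i ≠ 0)
    (h1 : ∀ (a b : Fin m), (b : ℕ) = a + p → arg2pi (l b) - arg2pi (l a) = Real.pi) :
    IsoP (diagonal l) (Fin p) := by
  subst hm
  apply IsoP.diag_equiv finSumFinEquiv
  have := even_main (fun i : Fin p => l (Fin.castAdd p i)) (fun i => l (Fin.natAdd p i))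
    (fun i => hl0 _) ?_
  · convert this using 2
    ext i
    rcases i with i | i <;> simp
  · intro i
    have h := h1 (Fin.castAdd p i) (Fin.natAdd p i) (by simp [add_comm])
    have h' : arg2pi (l (Fin.natAdd p i)) = arg2pi (l (Fin.castAdd p i)) + Real.pi := by linarith
    have e1 := arg2pi_spec (l (Fin.natAdd p i))
    have e2 := arg2pi_spec (l (Fin.castAdd p i))
    rw [h'] at e1
    push_cast at e1
    rw [add_mul, Complex.exp_add, Complex.exp_pi_mul_I] at e1
    linear_combination (-(‖l (Fin.natAdd p i)‖ : ℂ)) * e2 - (‖l (Fin.castAdd p i)‖ : ℂ) * e1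

/-- Theorem 4.1. -/
theorem zdi_normal {n k : ℕ} (A : Matrix (Fin n) (Fin n) ℂ)
    (hnormal : A * Aᴴ = Aᴴ * A)
    (hk : Module.finrank ℂ (LinearMap.ker A.mulVecLin) = k)
    (l : Fin (n - k) → ℂ) (hl0 : ∀ i, l i ≠ 0)
    (hsort : Monotone fun i => arg2pi (l i))
    (hchar : A.charpoly = X ^ k * ∏ i, (X - C (l i))) :
    k ≤ zdi A ∧ zdi A ≤ (n + k) / 2 ∧
    (zdi A = k ↔ (0 : ℂ) ∉ convexHull ℝ (Set.range l)) ∧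
    (zdi A = (n + k) / 2 ↔
      ((∀ _he : (n - k) % 2 = 0,
        ∀ (j : ℕ) (_h1 : 1 ≤ j) (_h2 : j ≤ (n - k) / 2),
          arg2pi (l ⟨j + (n - k) / 2 - 1, by omega⟩) - arg2pi (l ⟨j - 1, by omega⟩) = Real.pi) ∧
       (∀ _ho : (n - k) % 2 = 1,
        (∀ (j : ℕ) (_h1 : 1 ≤ j) (_h2 : j ≤ (n - k + 1) / 2),
          arg2pi (l ⟨j + (n - k - 1) / 2 - 1, by omega⟩) - arg2pi (l ⟨j - 1, by omega⟩)
            ≤ Real.pi) ∧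
        (∀ (j : ℕ) (_h1 : (n - k + 3) / 2 ≤ j) (_h2 : j ≤ n - k),
          arg2pi (l ⟨j - (n - k + 1) / 2 - 1, by omega⟩) - arg2pi (l ⟨j - 1, by omega⟩)
            ≤ -Real.pi)))) := by
  obtain ⟨hn, U, hU1, hU2, hUA⟩ := normal_diag' A hnormal l hchar
  have hz : IsoP (diagonal (Sum.elim (fun _ : Fin k => (0 : ℂ)) l)) (Fin (zdi A)) := by
    refine (zdi_mem A).conj Uᴴ (by rw [conjTranspose_conjTranspose, hU2]) ?_
    rw [conjTranspose_conjTranspose, ← hUA]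
    calc U * (Uᴴ * A * U) * Uᴴ = (U * Uᴴ) * A * (U * Uᴴ) := by simp only [Matrix.mul_assoc]
      _ = A := by rw [hU2, Matrix.one_mul, Matrix.mul_one]
  have hlow : ∀ r, IsoP (diagonal l) (Fin r) → k + r ≤ zdi A := by
    intro r hr
    apply le_zdi
    exact (((isoP_zero k).sum hr).reindex finSumFinEquiv.symm).conj U hU1 hUA
  have hk0 : k ≤ zdi A :=
    hlow 0 ⟨0, by ext i; exact i.elim0, by ext i; exact i.elim0⟩
  have hup := count_half hz hl0
  refine ⟨hk0, by omega, ⟨?_, ?_⟩, ⟨?_, ?_⟩⟩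
  · intro he h0
    have := hlow 1 (hull_iso h0)
    omega
  · intro h0
    exact le_antisymm (hull_sep h0 hz) hk0
  · intro he
    refine ⟨?_, ?_⟩
    · intro hev j h1 h2
      apply le_antisymm
      · by_contra! hlt
        have := count_far hz hl0 hsort _ _ hlt
        simp only at this
        omega
      · by_contra! hlt
        have := count_near hz hl0 hsort _ _ hlt
        simp only at this
        omega
    · intro hod
      refine ⟨?_, ?_⟩
      · intro j h1 h2
        by_contra! hlt
        have hh : (j + (n - k - 1) / 2 - 1) ≠ j - 1 := by
          intro hh
          simp only [hh, sub_self] at hlt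
          exact absurd hlt (not_lt.mpr Real.pi_pos.le)
        have := count_far hz hl0 hsort _ _ hlt
        simp only at this
        omega
      · intro j h1 h2
        by_contra! hlt
        have := count_near hz hl0 hsort ⟨j - (n - k + 1) / 2 - 1, by omega⟩ ⟨j - 1, by omega⟩
          (by linarith)
        simp only at this
        omega
  · rintro ⟨hev, hod⟩
    apply le_antisymm (by omega)
    rcases Nat.mod_two_eq_zero_or_one (n - k) with h0 | h0
    · have := hlow _ (even_suff (p := (n - k) / 2) (by omega) l hl0 (by
        intro a b hab
        have ha := a.2
        have hb := b.2
        have := hev h0 (a + 1) (by omega) (by omega)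
        convert this using 4 <;>
        (apply Fin.ext; first | omega | (dsimp only; omega))))
      omega
    · obtain ⟨ho1, ho2⟩ := hod h0
      have := hlow _ (odd_suff (h := (n - k) / 2) (by omega) l hl0 (by
        intro a b hab
        have ha := a.2
        have hb := b.2
        have := ho1 (a + 1) (by omega) (by omega)
        convert this using 4 <;>
        (apply Fin.ext; first | omega | (dsimp only; omega))) (by
        intro a b hab
        have ha := a.2
        have hb := b.2
        have h3 := ho2 (b + 1) (by omega) (by omega)
        have e1 : (⟨(b : ℕ) + 1 - (n - k + 1) / 2 - 1, by omega⟩ : Fin (n - k)) = a := by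
          apply Fin.ext; simp only; omega
        have e2 : (⟨(b : ℕ) + 1 - 1, by omega⟩ : Fin (n - k)) = b := by
          apply Fin.ext; simp only; omega
        rw [e1, e2] at h3
        linarith))
      omega
end

section
/- Let A be a weighted permutation matrix that is permutationally similar to the block-diagonal matrix (A₁ ⊕ ⋯ ⊕ A_{p+q}) ⊕ (B₁ ⊕ ⋯ ⊕ B_r), where p, q, r ≥ 0; for 1 ≤ j ≤ p+q, A_j is of size n_j ≥ 2 with entries A_j(s, s+1) = a_s^{(j)} for 1 ≤ s ≤ n_j−1 and A_j(n_j, 1) = a_{n_j}^{(j)}, all other entries 0; for 1 ≤ k ≤ r, B_k is of size m_k ≥ 1 with entries B_k(t, t+1) = b_t^{(k)} for 1 ≤ t ≤ m_k−1, all other entries 0. If all the weights a_s^{(j)} and b_t^{(k)} are strictly positive real numbers, then d(A) = Σ_{j=1}^{p+q} ⌊n_j/2⌋ + Σ_{k=1}^{r} ⌈m_k/2⌉. -/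
open Matrix Polynomial

def IsWeightedPerm {m : Type*} (A : Matrix m m ℂ) : Prop :=
  (∀ i j j', A i j ≠ 0 → A i j' ≠ 0 → j = j') ∧
  (∀ i i' j, A i j ≠ 0 → A i' j ≠ 0 → i = i')

/-- The block-diagonal matrix `(A₁ ⊕ ⋯ ⊕ A_J) ⊕ (B₁ ⊕ ⋯ ⊕ B_r)`, where `A_j` is the cyclic
weighted-shift matrix of size `nsz j` with weights `a j` and `B_k` is the (noncyclic) weighted
shift of size `msz k` with weights `b k`. -/
noncomputable def bigBlock (J r : ℕ) (nsz : Fin J → ℕ) (msz : Fin r → ℕ)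
    (a : Fin J → ℕ → ℂ) (b : Fin r → ℕ → ℂ) :
    Matrix (Σ i : Fin J ⊕ Fin r, Sum.elim (fun j => Fin (nsz j)) (fun k => Fin (msz k)) i)
      (Σ i : Fin J ⊕ Fin r, Sum.elim (fun j => Fin (nsz j)) (fun k => Fin (msz k)) i) ℂ :=
  Matrix.blockDiagonal' fun i => match i with
    | Sum.inl j => cycMat (nsz j) (a j)
    | Sum.inr k => superMat (msz k) (b k)


/-- The sesquilinear form of a matrix evaluated on the diagonal. -/
noncomputable def qf {m : Type*} [Fintype m] (M : Matrix m m ℂ) (x : m → ℂ) : ℂ :=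
  star x ⬝ᵥ M *ᵥ x

/-- `M` admits a `d`-dimensional family on which the form is "lexicographically definite". -/
def PP {m : Type*} [Fintype m] (M : Matrix m m ℂ) (d : ℕ) : Prop :=
  ∃ (ι : Type) (_ : Fintype ι) (φ : (ι → ℂ) →ₗ[ℂ] (m → ℂ)), d ≤ Fintype.card ι ∧
    ∀ c, c ≠ 0 → (qf M (φ c)).im < 0 ∨ ((qf M (φ c)).im = 0 ∧ 0 < (qf M (φ c)).re)

/-- `M` has a `d`-element independent set of indices. -/
def QQ {m : Type*} (M : Matrix m m ℂ) (d : ℕ) : Prop :=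
  ∃ (ι : Type) (_ : Fintype ι) (f : ι → m), d = Fintype.card ι ∧ Function.Injective f ∧
    ∀ s t, M (f s) (f t) = 0

lemma qf_zero {m : Type*} [Fintype m] (M : Matrix m m ℂ) : qf M 0 = 0 := by
  simp [qf]

lemma qf_block {I : Type*} [Fintype I] [DecidableEq I] {m : I → Type*} [∀ i, Fintype (m i)]
    (M : ∀ i, Matrix (m i) (m i) ℂ) (x : (Σ i, m i) → ℂ) :
    qf (Matrix.blockDiagonal' M) x = ∑ i, qf (M i) (fun s => x ⟨i, s⟩) := by
  simp only [qf, dotProduct, mulVec, Fintype.sum_sigma]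
  refine Finset.sum_congr rfl fun i _ => Finset.sum_congr rfl fun s _ => ?_
  congr 1
  rw [Finset.sum_eq_single i]
  · simp [Matrix.blockDiagonal'_apply_eq]
  · intro j _ hj
    refine Finset.sum_eq_zero fun t _ => ?_
    rw [Matrix.blockDiagonal'_apply_ne _ _ _ (Ne.symm hj), zero_mul]
  · simp

lemma PP_block {I : Type} [Fintype I] [DecidableEq I] {m : I → Type*} [∀ i, Fintype (m i)]
    (M : ∀ i, Matrix (m i) (m i) ℂ) (c : I → ℕ) (h : ∀ i, PP (M i) (c i)) :
    PP (Matrix.blockDiagonal' M) (∑ i, c i) := by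
  choose ι hι φ hc hφ using h
  refine ⟨Σ i, ι i, inferInstance,
    { toFun := fun x p => φ p.1 (fun t => x ⟨p.1, t⟩) p.2
      map_add' := ?_
      map_smul' := ?_ }, ?_, ?_⟩
  · intro x y
    ext p
    have : (fun t => (x + y) ⟨p.1, t⟩) = (fun t => x ⟨p.1, t⟩) + (fun t => y ⟨p.1, t⟩) := rfl
    simp only [this, map_add]; rfl
  · intro r x
    ext p
    have : (fun t => (r • x) ⟨p.1, t⟩) = r • (fun t => x ⟨p.1, t⟩) := rfl
    simp only [this, map_smul]; rfl
  · rw [Fintype.card_sigma]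
    exact Finset.sum_le_sum fun i _ => hc i
  · intro x hx
    rw [qf_block]
    simp only [LinearMap.coe_mk, AddHom.coe_mk, Complex.im_sum, Complex.re_sum]
    have key : ∀ i, (fun t => x ⟨i, t⟩) = 0 ∨ _ := fun i =>
      (em _).imp id (hφ i (fun t => x ⟨i, t⟩))
    have him : ∀ i, (qf (M i) (φ i fun t => x ⟨i, t⟩)).im ≤ 0 := by
      intro i
      rcases key i with h | h | h
      · rw [h]; simp [qf]
      · exact h.le
      · exact h.1.le
    rcases (Finset.sum_nonpos fun i (_ : i ∈ Finset.univ) => him i).lt_or_eq with h | h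
    · exact Or.inl h
    right
    refine ⟨h, ?_⟩
    have h0 := (Finset.sum_eq_zero_iff_of_nonpos fun i (_ : i ∈ Finset.univ) => him i).1 h
    obtain ⟨⟨i, s⟩, hs⟩ := Function.ne_iff.1 hx
    apply Finset.sum_pos'
    · intro j _
      rcases key j with h | h | h
      · change 0 ≤ (qf (M j) (φ j fun t => x ⟨j, t⟩)).re
        rw [h, map_zero, qf_zero, Complex.zero_re]
      · exact absurd (h0 j (Finset.mem_univ _)) h.ne
      · exact h.2.le
    · refine ⟨i, Finset.mem_univ _, ?_⟩
      rcases key i with h | h | h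
      · exact absurd (congrFun h s) hs
      · exact absurd (h0 i (Finset.mem_univ _)) h.ne
      · exact h.2

lemma QQ_block {I : Type} [Fintype I] [DecidableEq I] {m : I → Type*}
    (M : ∀ i, Matrix (m i) (m i) ℂ) (c : I → ℕ) (h : ∀ i, QQ (M i) (c i)) :
    QQ (Matrix.blockDiagonal' M) (∑ i, c i) := by
  choose ι hι f hc hf h0 using h
  refine ⟨Σ i, ι i, inferInstance, fun p => ⟨p.1, f p.1 p.2⟩, ?_, ?_, ?_⟩
  · rw [Fintype.card_sigma]
    exact Finset.sum_congr rfl fun i _ => hc i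
  · rintro ⟨i, s⟩ ⟨j, t⟩ hst
    simp only [Sigma.mk.injEq] at hst
    obtain ⟨rfl, hst⟩ := hst
    rw [hf i (eq_of_heq hst)]
  · rintro ⟨i, s⟩ ⟨j, t⟩
    by_cases hij : i = j
    · subst hij
      simp [Matrix.blockDiagonal'_apply_eq, h0]
    · exact Matrix.blockDiagonal'_apply_ne _ _ _ hij

lemma PP_reindex {m n : Type*} [Fintype m] [Fintype n] (e : m ≃ n) (A : Matrix m m ℂ) (d : ℕ)
    (h : PP (Matrix.reindex e e A) d) : PP A d := by
  obtain ⟨ι, hι, φ, hd, hφ⟩ := h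
  refine ⟨ι, hι, (LinearMap.funLeft ℂ ℂ e) ∘ₗ φ, hd, fun c hc => ?_⟩
  have : qf A ((LinearMap.funLeft ℂ ℂ e ∘ₗ φ) c) = qf (Matrix.reindex e e A) (φ c) := by
    simp only [qf, dotProduct, mulVec]
    rw [← Equiv.sum_comp e]
    refine Finset.sum_congr rfl fun i _ => ?_
    rw [← Equiv.sum_comp e]
    simp [LinearMap.funLeft]
  rw [this]
  exact hφ c hc

lemma QQ_reindex {m n : Type*} (e : m ≃ n) (A : Matrix m m ℂ) (d : ℕ)
    (h : QQ (Matrix.reindex e e A) d) : QQ A d := by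
  obtain ⟨ι, hι, f, hd, hf, h0⟩ := h
  exact ⟨ι, hι, e.symm ∘ f, hd, e.symm.injective.comp hf, fun s t => by simpa using h0 s t⟩

lemma zdi_of_PP_QQ {m : Type*} [Fintype m] [DecidableEq m] (A : Matrix m m ℂ) (c d : ℕ)
    (hP : PP A c) (hQ : QQ A d) (hcd : Fintype.card m ≤ c + d) : zdi A = d := by
  apply IsGreatest.csSup_eq
  constructor
  · obtain ⟨ι, hι, f, hd, hf, h0⟩ := hQ
    let g : Fin d ≃ ι := (Fintype.equivFinOfCardEq hd.symm).symm
    let V : Matrix m (Fin d) ℂ := (1 : Matrix m m ℂ).submatrix id (f ∘ g)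
    have hfg : Function.Injective (f ∘ g) := hf.comp g.injective
    have hV : Vᴴ = (1 : Matrix m m ℂ).submatrix (f ∘ g) id := by
      simp only [V, Matrix.conjTranspose_submatrix, Matrix.conjTranspose_one]
    refine ⟨V, ?_, ?_⟩
    · rw [hV]
      ext s t
      simp [V, Matrix.mul_apply, Matrix.one_apply, hf.eq_iff]
    · rw [hV]
      ext s t
      simp [V, Matrix.mul_apply, Matrix.one_apply, h0]
  · rintro k ⟨V, hV1, hV0⟩
    obtain ⟨ι, hι, φ, hd, hφ⟩ := hP
    let T : ((Fin k → ℂ) × (ι → ℂ)) →ₗ[ℂ] (m → ℂ) :=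
      (Matrix.mulVecLin V).coprod (-φ)
    have hT : Function.Injective T := by
      rw [← LinearMap.ker_eq_bot, LinearMap.ker_eq_bot']
      rintro ⟨y, c⟩ h
      have h1 : V *ᵥ y = φ c := by
        simp only [T, LinearMap.coprod_apply, Matrix.mulVecLin_apply, LinearMap.neg_apply] at h
        exact add_neg_eq_zero.1 h
      have h2 : qf A (φ c) = 0 := by
        rw [← h1, qf, Matrix.star_mulVec, ← Matrix.dotProduct_mulVec, Matrix.mulVec_mulVec,
          Matrix.mulVec_mulVec, hV0]
        simp
      have h3 : c = 0 := by
        by_contra hc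
        have := hφ c hc
        rw [h2] at this
        simp at this
      have h4 : y = 0 := by
        rw [h3, map_zero] at h1
        have : (Vᴴ * V) *ᵥ y = 0 := by rw [← Matrix.mulVec_mulVec, h1, Matrix.mulVec_zero]
        simpa [hV1] using this
      rw [h3, h4]; rfl
    have := LinearMap.finrank_le_finrank_of_injective hT
    simp at this
    omega

section herm

variable {m : Type} [Fintype m] [DecidableEq m]

/-- imaginary part -/
noncomputable def imP (M : Matrix m m ℂ) : Matrix m m ℂ := (-Complex.I / 2) • (M - Mᴴ)

lemma imP_herm (M : Matrix m m ℂ) : (imP M).IsHermitian := by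
  unfold imP Matrix.IsHermitian
  rw [Matrix.conjTranspose_smul, Matrix.conjTranspose_sub, Matrix.conjTranspose_conjTranspose]
  ext i j
  simp
  ring

lemma qf_conjTranspose (M : Matrix m m ℂ) (x : m → ℂ) : qf Mᴴ x = star (qf M x) := by
  unfold qf
  rw [Matrix.star_dotProduct, Matrix.star_mulVec, Matrix.conjTranspose_conjTranspose,
    Matrix.dotProduct_mulVec]

lemma qf_imP (M : Matrix m m ℂ) (x : m → ℂ) : qf (imP M) x = ((qf M x).im : ℂ) := by
  have : qf (imP M) x = (-Complex.I / 2) * (qf M x - qf Mᴴ x) := by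
    simp only [qf, imP, Matrix.smul_mulVec, Matrix.sub_mulVec, dotProduct_smul, dotProduct_sub,
      smul_eq_mul]
  rw [this, qf_conjTranspose]
  apply Complex.ext <;> simp <;> ring

lemma qf_star (M : Matrix m m ℂ) (hM : ∀ i j, star (M i j) = M i j) (x : m → ℂ) :
    qf M (star x) = star (qf M x) := by
  simp only [qf, dotProduct, mulVec, star_sum, star_mul', hM, Pi.star_apply]

lemma qf_eig (H : Matrix m m ℂ) (hH : H.IsHermitian) (S : m → Prop) [DecidablePred S] :
    ∃ φ : ({i // S i} → ℂ) →ₗ[ℂ] (m → ℂ), ∀ c,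
      qf H (φ c) = ((∑ i, hH.eigenvalues i.1 * Complex.normSq (c i) : ℝ) : ℂ) := by
  let U : Matrix m m ℂ := hH.eigenvectorUnitary
  have hU : Uᴴ * H * U = Matrix.diagonal (RCLike.ofReal ∘ hH.eigenvalues) := by
    rw [← hH.conjStarAlgAut_star_eigenvectorUnitary, Unitary.conjStarAlgAut_star_apply]
    rfl
  let B : Matrix m {i // S i} ℂ := U.submatrix id Subtype.val
  have hB : Bᴴ * H * B = (Matrix.diagonal (RCLike.ofReal ∘ hH.eigenvalues)).submatrix
      Subtype.val Subtype.val := by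
    rw [← hU]
    ext i j
    simp [B, Matrix.mul_apply]
  refine ⟨Matrix.mulVecLin B, fun c => ?_⟩
  rw [Matrix.mulVecLin_apply, qf, Matrix.star_mulVec, ← Matrix.dotProduct_mulVec,
    Matrix.mulVec_mulVec, Matrix.mulVec_mulVec, hB]
  rw [Matrix.submatrix_diagonal _ _ Subtype.val_injective]
  simp only [dotProduct, Matrix.mulVec_diagonal]
  push_cast
  refine Finset.sum_congr rfl fun i _ => ?_
  rw [Complex.normSq_eq_conj_mul_self]
  simp
  ring

lemma negdef (M : Matrix m m ℂ) (hM : ∀ i j, star (M i j) = M i j) :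
    ∃ (ι : Type) (_ : Fintype ι) (φ : (ι → ℂ) →ₗ[ℂ] (m → ℂ)),
      (imP M).rank ≤ 2 * Fintype.card ι ∧ ∀ c, c ≠ 0 → (qf M (φ c)).im < 0 := by
  classical
  have hH := imP_herm M
  have hr := hH.rank_eq_card_non_zero_eigs
  have hsplit : Fintype.card {i // hH.eigenvalues i ≠ 0} =
      Fintype.card {i // hH.eigenvalues i < 0} + Fintype.card {i // 0 < hH.eigenvalues i} := by
    simp only [Fintype.card_subtype]
    rw [← Finset.card_union_of_disjoint]
    · congr 1
      ext i
      simp [lt_or_lt_iff_ne]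
    · rw [Finset.disjoint_filter]
      intro i _ h1 h2
      exact lt_asymm h1 h2
  rcases le_total (Fintype.card {i // hH.eigenvalues i < 0})
    (Fintype.card {i // 0 < hH.eigenvalues i}) with hle | hle
  · obtain ⟨φ, hφ⟩ := qf_eig (imP M) hH (fun i => 0 < hH.eigenvalues i)
    refine ⟨{i // 0 < hH.eigenvalues i}, inferInstance,
      { toFun := fun c => star (φ (star c))
        map_add' := fun x y => by simp
        map_smul' := fun r x => by simp }, by omega, fun c hc => ?_⟩
    have h1 := hφ (star c)
    rw [qf_imP] at h1
    have h2 := Complex.ofReal_injective h1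
    simp only [LinearMap.coe_mk, AddHom.coe_mk]
    rw [qf_star M hM, Complex.star_def, Complex.conj_im, h2, neg_lt_zero]
    obtain ⟨i, hi⟩ := Function.ne_iff.1 hc
    apply Finset.sum_pos'
    · intro j _
      exact mul_nonneg j.2.le (Complex.normSq_nonneg _)
    · refine ⟨i, Finset.mem_univ _, mul_pos i.2 (Complex.normSq_pos.2 ?_)⟩
      simpa using hi
  · obtain ⟨φ, hφ⟩ := qf_eig (imP M) hH (fun i => hH.eigenvalues i < 0)
    refine ⟨{i // hH.eigenvalues i < 0}, inferInstance, φ, by omega, fun c hc => ?_⟩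
    have h1 := hφ c
    rw [qf_imP] at h1
    have h2 := Complex.ofReal_injective h1
    rw [h2]
    obtain ⟨i, hi⟩ := Function.ne_iff.1 hc
    apply Finset.sum_neg'
    · intro j _
      exact mul_nonpos_of_nonpos_of_nonneg j.2.le (Complex.normSq_nonneg _)
    · exact ⟨i, Finset.mem_univ _, mul_neg_of_neg_of_pos i.2 (Complex.normSq_pos.2 hi)⟩

lemma PP_path (M : Matrix m m ℂ) (hM : ∀ i j, star (M i j) = M i j)
    (hr : Fintype.card m ≤ (imP M).rank + 1) : PP M (Fintype.card m / 2) := by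
  obtain ⟨ι, hι, φ, h1, h2⟩ := negdef M hM
  exact ⟨ι, hι, φ, by omega, fun c hc => Or.inl (h2 c hc)⟩

lemma PP_cyc (M : Matrix m m ℂ) (hM : ∀ i j, star (M i j) = M i j)
    (hr : Fintype.card m ≤ (imP M).rank + 2)
    (hw : ∀ x, x ≠ 0 → imP M *ᵥ x = 0 → ∃ w, imP M *ᵥ w = 0 ∧ 0 < (qf M w).re) :
    PP M ((Fintype.card m + 1) / 2) := by
  obtain ⟨ι, hι, φ, h1, h2⟩ := negdef M hM
  by_cases hker : ∃ x, x ≠ 0 ∧ imP M *ᵥ x = 0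
  · obtain ⟨x, hx0, hx⟩ := hker
    obtain ⟨w, hw, hpos⟩ := hw x hx0 hx
    have hw' : star w ᵥ* imP M = 0 := by
      have := congrArg star hw
      rwa [Matrix.star_mulVec, (imP_herm M).eq, star_zero] at this
    refine ⟨ι ⊕ Unit, inferInstance,
      { toFun := fun c => φ (fun i => c (Sum.inl i)) + c (Sum.inr ()) • w
        map_add' := ?_
        map_smul' := ?_ }, ?_, ?_⟩
    · intro c d
      have : (fun i => (c + d) (Sum.inl i)) =
        (fun i => c (Sum.inl i)) + (fun i => d (Sum.inl i)) := rfl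
      rw [this, map_add, Pi.add_apply, add_smul]
      abel
    · intro r c
      have : (fun i => (r • c) (Sum.inl i)) = r • (fun i => c (Sum.inl i)) := rfl
      rw [this, map_smul, Pi.smul_apply, smul_assoc, smul_add]
      rfl
    · rw [Fintype.card_sum, Fintype.card_unit]
      omega
    · intro c hc
      simp only [LinearMap.coe_mk, AddHom.coe_mk]
      have hK : ∀ (y : m → ℂ) (t : ℂ), (qf M (y + t • w)).im = (qf M y).im := by
        intro y t
        apply Complex.ofReal_injective
        rw [← qf_imP, ← qf_imP]
        simp only [qf, Matrix.mulVec_add, Matrix.mulVec_smul, hw, smul_zero, add_zero]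
        rw [star_add, add_dotProduct, star_smul, smul_dotProduct, Matrix.dotProduct_mulVec (star w),
          hw', zero_dotProduct, smul_zero, add_zero]
      rw [hK]
      by_cases h0 : (fun i => c (Sum.inl i)) = 0
      · right
        rw [h0, map_zero, zero_add]
        refine ⟨by simp [qf_zero], ?_⟩
        have ht : c (Sum.inr ()) ≠ 0 := by
          intro ht
          apply hc
          ext i
          rcases i with i | i
          · exact congrFun h0 i
          · exact ht
        have : qf M (c (Sum.inr ()) • w) = (Complex.normSq (c (Sum.inr ())) : ℂ) * qf M w := by
          simp only [qf, Matrix.mulVec_smul, star_smul, smul_dotProduct, dotProduct_smul,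
            smul_eq_mul, Complex.normSq_eq_conj_mul_self, Complex.star_def]
          ring
        rw [this, Complex.re_ofReal_mul]
        exact mul_pos (Complex.normSq_pos.2 ht) hpos
      · exact Or.inl (h2 _ h0)
  · push Not at hker
    have hinj : (imP M).rank = Fintype.card m := by
      have h3 := LinearMap.finrank_range_add_finrank_ker (Matrix.mulVecLin (imP M))
      have h4 : LinearMap.ker (Matrix.mulVecLin (imP M)) = ⊥ := by
        rw [LinearMap.ker_eq_bot']
        intro x hx
        by_contra h
        exact hker x h hx
      rw [h4] at h3
      simpa [Matrix.rank] using h3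
    exact ⟨ι, hι, φ, by omega, fun c hc => Or.inl (h2 c hc)⟩

lemma rank_bound (H : Matrix m m ℂ) (k : ℕ) (f : Fin k → m)
    (h : ∀ x, H *ᵥ x = 0 → (∀ i, x (f i) = 0) → x = 0) : Fintype.card m ≤ H.rank + k := by
  have h3 := LinearMap.finrank_range_add_finrank_ker (Matrix.mulVecLin H)
  have h4 : Function.Injective
      ((LinearMap.funLeft ℂ ℂ f) ∘ₗ (LinearMap.ker (Matrix.mulVecLin H)).subtype) := by
    rw [← LinearMap.ker_eq_bot, LinearMap.ker_eq_bot']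
    rintro ⟨x, hx⟩ h0
    have := h x hx (fun i => congrFun h0 i)
    simpa using this
  have h5 := LinearMap.finrank_le_finrank_of_injective h4
  simp at h3 h5
  rw [Matrix.rank]
  omega

lemma imP_mulVec_eq_zero_iff (M : Matrix m m ℂ) (hM : ∀ i j, star (M i j) = M i j) (x : m → ℂ) :
    imP M *ᵥ x = 0 ↔ ∀ i, (M *ᵥ x) i = (Mᵀ *ᵥ x) i := by
  have h : Mᴴ = Mᵀ := by ext i j; exact hM j i
  have hI : (-Complex.I / 2) ≠ 0 := by simp
  rw [imP, Matrix.smul_mulVec, smul_eq_zero_iff_right hI, Matrix.sub_mulVec, sub_eq_zero, h,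
    funext_iff]

lemma perm_ker_pos (σ : Equiv.Perm m) (α : m → ℝ) (hα : ∀ i, 0 < α i) (x : m → ℂ) (hx : x ≠ 0)
    (hk : ∀ t, (α (σ t) : ℂ) * x (σ (σ t)) = α t * x t) :
    ∃ w : m → ℝ, (∀ t, α (σ t) * w (σ (σ t)) = α t * w t) ∧ 0 < ∑ t, α t * (w t * w (σ t)) := by
  let y : m → ℝ := fun t => ‖x t‖
  have hy : ∀ t, α (σ t) * y (σ (σ t)) = α t * y t := by
    intro t
    have := congrArg norm (hk t)
    simpa [y, abs_of_pos (hα _)] using this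
  let z : m → ℝ := fun t => (α t * y (σ t))⁻¹
  have hz : ∀ t, α (σ t) * z (σ (σ t)) = α t * z t := by
    intro t
    have h1 := (hα t).ne'
    have h2 := (hα (σ t)).ne'
    simp only [z]
    rw [hy (σ t), mul_inv, mul_inv, mul_inv_cancel_left₀ h2, mul_inv_cancel_left₀ h1]
  have hy0 : ∀ t, 0 ≤ y t := fun t => norm_nonneg _
  have hz0 : ∀ t, 0 ≤ z t := fun t => inv_nonneg.2 (mul_nonneg (hα t).le (hy0 _))
  refine ⟨fun t => y t + z t, fun t => by linear_combination hy t + hz t, ?_⟩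
  obtain ⟨s, hs⟩ := Function.ne_iff.1 hx
  apply Finset.sum_pos'
  · intro t _
    exact mul_nonneg (hα t).le (mul_nonneg (add_nonneg (hy0 _) (hz0 _))
      (add_nonneg (hy0 _) (hz0 _)))
  · refine ⟨σ.symm s, Finset.mem_univ _, ?_⟩
    have h1 : 0 < y s := norm_pos_iff.2 hs
    have h2 : 0 < z (σ.symm s) := by
      simp only [z, Equiv.apply_symm_apply]
      exact inv_pos.2 (mul_pos (hα _) h1)
    rw [Equiv.apply_symm_apply]
    exact mul_pos (hα _) (mul_pos (add_pos_of_nonneg_of_pos (hy0 _) h2)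
      (add_pos_of_pos_of_nonneg h1 (hz0 _)))

/-- positively weighted permutation matrix -/
noncomputable def permM (σ : Equiv.Perm m) (α : m → ℝ) : Matrix m m ℂ :=
  Matrix.of fun i j => if j = σ i then (α i : ℂ) else 0

lemma permM_real (σ : Equiv.Perm m) (α : m → ℝ) (i j : m) :
    star (permM σ α i j) = permM σ α i j := by
  simp only [permM, Matrix.of_apply]
  split_ifs <;> simp

lemma permM_mulVec (σ : Equiv.Perm m) (α : m → ℝ) (x : m → ℂ) (i : m) :
    (permM σ α *ᵥ x) i = α i * x (σ i) := by
  simp [permM, mulVec, dotProduct]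

lemma permM_ker (σ : Equiv.Perm m) (α : m → ℝ) (x : m → ℂ) :
    imP (permM σ α) *ᵥ x = 0 ↔ ∀ t, (α (σ t) : ℂ) * x (σ (σ t)) = α t * x t := by
  rw [imP_mulVec_eq_zero_iff _ (permM_real σ α), ← σ.forall_congr_right]
  refine forall_congr' fun t => ?_
  rw [permM_mulVec]
  have : ((permM σ α)ᵀ *ᵥ x) (σ t) = α t * x t := by
    simp [permM, mulVec, dotProduct]
  rw [this]

lemma PP_perm (σ : Equiv.Perm m) (α : m → ℝ) (hα : ∀ i, 0 < α i)
    (hr : Fintype.card m ≤ (imP (permM σ α)).rank + 2) :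
    PP (permM σ α) ((Fintype.card m + 1) / 2) := by
  refine PP_cyc _ (permM_real σ α) hr fun x hx hk => ?_
  obtain ⟨w, hw, hpos⟩ := perm_ker_pos σ α hα x hx ((permM_ker σ α x).1 hk)
  refine ⟨fun t => (w t : ℂ), (permM_ker σ α _).2 fun t => by exact_mod_cast hw t, ?_⟩
  have : qf (permM σ α) (fun t => (w t : ℂ)) = ((∑ t, α t * (w t * w (σ t)) : ℝ) : ℂ) := by
    simp only [qf, dotProduct, permM_mulVec, Pi.star_apply]
    push_cast
    refine Finset.sum_congr rfl fun t _ => ?_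
    simp
    ring
  rw [this, Complex.ofReal_re]
  exact hpos

end herm

lemma PP_cycMat (n : ℕ) (hn : 2 ≤ n) (a : ℕ → ℂ)
    (ha : ∀ s, s < n → (a s).im = 0 ∧ 0 < (a s).re) : PP (cycMat n a) ((n + 1) / 2) := by
  obtain ⟨k, rfl⟩ : ∃ k, n = k + 2 := ⟨n - 2, by omega⟩
  have hM : cycMat (k + 2) a =
      permM (Equiv.addRight (1 : Fin (k + 2))) (fun i => (a i).re) := by
    ext i j
    simp only [cycMat, permM, Matrix.of_apply, Equiv.coe_addRight, Fin.ext_iff, Fin.val_add,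
      Fin.val_one]
    have : a i = ((a i).re : ℂ) := Complex.ext (by simp) (by simp [(ha i i.2).1])
    split_ifs
    · exact this
    · rfl
  rw [hM]
  have h := PP_perm (Equiv.addRight (1 : Fin (k + 2))) (fun i => (a i).re)
    (fun i => (ha i i.2).2) (rank_bound _ 2 ![0, 1] ?_)
  · simpa using h
  · intro x hx h0
    rw [permM_ker] at hx
    have key : ∀ s (hs : s < k + 2), x ⟨s, hs⟩ = 0 := by
      intro s
      induction s using Nat.strong_induction_on with
      | _ s ih =>
        intro hs
        rcases s with _ | _ | t
        · exact h0 0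
        · exact h0 1
        · have h1 := hx ⟨t, by omega⟩
          rw [ih t (by omega) (by omega), mul_zero] at h1
          have e1 : (Equiv.addRight (1 : Fin (k + 2))) ⟨t, by omega⟩ = ⟨t + 1, by omega⟩ := by
            simp only [Equiv.coe_addRight, Fin.ext_iff, Fin.val_add, Fin.val_one]
            exact Nat.mod_eq_of_lt (by omega)
          have e2 : (Equiv.addRight (1 : Fin (k + 2))) ⟨t + 1, by omega⟩ = ⟨t + 2, hs⟩ := by
            simp only [Equiv.coe_addRight, Fin.ext_iff, Fin.val_add, Fin.val_one]
            exact Nat.mod_eq_of_lt (by omega)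
          rw [e1, e2] at h1
          refine (mul_eq_zero.1 h1).resolve_left ?_
          exact_mod_cast (ha (t + 1) (by omega)).2.ne'
    ext i
    exact key i i.2

lemma PP_superMat (n : ℕ) (hn : 1 ≤ n) (b : ℕ → ℂ)
    (hb : ∀ s, s < n - 1 → (b s).im = 0 ∧ 0 < (b s).re) : PP (superMat n b) (n / 2) := by
  have hreal : ∀ i j, star (superMat n b i j) = superMat n b i j := by
    intro i j
    simp only [superMat, Matrix.of_apply]
    split_ifs with h
    · exact Complex.ext (by simp) (by simp [(hb i (by omega)).1])
    · simp
  have h := PP_path (superMat n b) hreal (rank_bound _ 1 ![⟨0, hn⟩] ?_)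
  · simpa using h
  · intro x hx h0
    rw [imP_mulVec_eq_zero_iff _ hreal] at hx
    have hl : ∀ s (hs : s + 1 < n), (superMat n b *ᵥ x) ⟨s, by omega⟩ = b s * x ⟨s + 1, hs⟩ := by
      intro s hs
      simp only [superMat, mulVec, dotProduct, Matrix.of_apply]
      rw [Finset.sum_eq_single ⟨s + 1, hs⟩]
      · simp
      · intro j _ hj
        rw [if_neg (fun h => hj (Fin.ext h)), zero_mul]
      · simp
    have hr : ∀ s (hs : s + 1 < n), ((superMat n b)ᵀ *ᵥ x) ⟨s + 1, hs⟩ =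
        b s * x ⟨s, by omega⟩ := by
      intro s hs
      simp only [superMat, mulVec, dotProduct, Matrix.of_apply, Matrix.transpose_apply]
      rw [Finset.sum_eq_single ⟨s, by omega⟩]
      · simp
      · intro j _ hj
        rw [if_neg (fun h => hj (Fin.ext (by simp at h; simp; omega))), zero_mul]
      · simp
    have hr0 : ((superMat n b)ᵀ *ᵥ x) ⟨0, hn⟩ = 0 := by
      simp [superMat, mulVec, dotProduct, Matrix.of_apply, Matrix.transpose_apply]
    have hb0 : ∀ s, s + 1 < n → b s ≠ 0 := by
      intro s hs h
      have := (hb s (by omega)).2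
      rw [h] at this
      simp at this
    have key : ∀ s (hs : s < n), x ⟨s, hs⟩ = 0 := by
      intro s
      induction s using Nat.strong_induction_on with
      | _ s ih =>
        intro hs
        rcases s with _ | _ | t
        · exact h0 0
        · have h1 := hx ⟨0, hn⟩
          rw [hl 0 hs, hr0] at h1
          exact (mul_eq_zero.1 h1).resolve_left (hb0 0 hs)
        · have h1 := hx ⟨t + 1, by omega⟩
          rw [hl (t + 1) hs, hr t (by omega), ih t (by omega) (by omega), mul_zero] at h1
          exact (mul_eq_zero.1 h1).resolve_left (hb0 _ hs)
    ext i
    exact key i i.2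

lemma QQ_cycMat (n : ℕ) (hn : 2 ≤ n) (a : ℕ → ℂ) : QQ (cycMat n a) (n / 2) := by
  refine ⟨Fin (n / 2), inferInstance, fun s => ⟨2 * s, by omega⟩, by simp, ?_, ?_⟩
  · intro s t h
    simp only [Fin.mk.injEq] at h
    exact Fin.ext (by omega)
  · intro s t
    simp only [cycMat, Matrix.of_apply]
    rw [if_neg]
    rw [Nat.mod_eq_of_lt (by omega)]
    omega

lemma QQ_superMat (n : ℕ) (b : ℕ → ℂ) : QQ (superMat n b) ((n + 1) / 2) := by
  refine ⟨Fin ((n + 1) / 2), inferInstance, fun s => ⟨2 * s, by omega⟩, by simp, ?_, ?_⟩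
  · intro s t h
    simp only [Fin.mk.injEq] at h
    exact Fin.ext (by omega)
  · intro s t
    simp only [superMat, Matrix.of_apply]
    rw [if_neg]
    omega

/-- Proposition 4.8. -/
theorem zdi_weighted_permutation_positive_weights {N J r : ℕ}
    (nsz : Fin J → ℕ) (msz : Fin r → ℕ)
    (hn2 : ∀ j, 2 ≤ nsz j) (hm1 : ∀ k, 1 ≤ msz k)
    (a : Fin J → ℕ → ℂ) (b : Fin r → ℕ → ℂ)
    (ha : ∀ j s, s < nsz j → (a j s).im = 0 ∧ 0 < (a j s).re)
    (hb : ∀ k t, t < msz k - 1 → (b k t).im = 0 ∧ 0 < (b k t).re)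
    (A : Matrix (Fin N) (Fin N) ℂ)
    (hwp : IsWeightedPerm A)
    (hsim : ∃ e : Fin N ≃
        (Σ i : Fin J ⊕ Fin r, Sum.elim (fun j => Fin (nsz j)) (fun k => Fin (msz k)) i),
      Matrix.reindex e e A = bigBlock J r nsz msz a b) :
    zdi A = (∑ j, nsz j / 2) + (∑ k, (msz k + 1) / 2) := by
  classical
  obtain ⟨e, he⟩ := hsim
  let inst : ∀ i : Fin J ⊕ Fin r,
      Fintype (Sum.elim (fun j => Fin (nsz j)) (fun k => Fin (msz k)) i) := fun i =>
    match i with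
    | Sum.inl j => inferInstanceAs (Fintype (Fin (nsz j)))
    | Sum.inr k => inferInstanceAs (Fintype (Fin (msz k)))
  have hP : PP A (∑ i : Fin J ⊕ Fin r,
      Sum.elim (fun j => (nsz j + 1) / 2) (fun k => msz k / 2) i) := by
    refine PP_reindex e A _ ?_
    rw [he]
    refine PP_block _ _ fun i => ?_
    rcases i with j | k
    · exact PP_cycMat (nsz j) (hn2 j) (a j) (ha j)
    · exact PP_superMat (msz k) (hm1 k) (b k) (hb k)
  have hQ : QQ A (∑ i : Fin J ⊕ Fin r,
      Sum.elim (fun j => nsz j / 2) (fun k => (msz k + 1) / 2) i) := by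
    refine QQ_reindex e A _ ?_
    rw [he]
    refine QQ_block _ _ fun i => ?_
    rcases i with j | k
    · exact QQ_cycMat (nsz j) (hn2 j) (a j)
    · exact QQ_superMat (msz k) (b k)
  have hcard : Fintype.card (Fin N) = ∑ i : Fin J ⊕ Fin r, Sum.elim nsz msz i := by
    rw [Fintype.card_congr e, Fintype.card_sigma]
    refine Finset.sum_congr rfl fun i _ => ?_
    rcases i with j | k
    · exact Fintype.card_fin _
    · exact Fintype.card_fin _
  rw [zdi_of_PP_QQ A _ _ hP hQ, Fintype.sum_sum_type]
  · rfl
  · rw [hcard, ← Finset.sum_add_distrib]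
    refine Finset.sum_le_sum fun i _ => ?_
    rcases i with j | k
    · simp only [Sum.elim_inl]
      omega
    · simp only [Sum.elim_inr]
      omega
end
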